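/- arXiv:2507.03651 — 8 statements merged into one kernel-verified Lean document; each statement's English description precedes it below -/
import Mathlib

section
/- Let μ be a Borel probability measure on ℝ with ∫|x|² dμ < ∞. Then for every n ≥ 1, f₂(n) = n! · (m₂ + (n−1)·m₁²) · (m₂ − m₁²)^{n−1}. -/
/-!
Expanding both determinants over permutations and integrating row by row, independence of the rows
gives `E[det²] = ∑_{σ,τ} sgn σ · sgn τ · ∏ᵢ M (σ i) (τ i)`, where `M j k = E[a_j a_k]` is the second
moment matrix of one row `a` (`integral_entry_mul`).  For any matrix `M` this double sum is
`n! · det M` (`sum_sign_mul_sign_prod`), because for fixed `σ` the sum over `τ` is `sgn σ` times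
the determinant of `M` with its rows permuted by `σ`, that is, `det M`.  Finally
`M = (m₂ - m₁²) I + m₁² J` with `J` the all-ones matrix, so `det M` is given by the rank-one update formula (`det_ite_eq`).
-/

open MeasureTheory

/-- The `r`-th moment `m_r = ∫ x^r dμ` of a measure `μ` on `ℝ`. -/
noncomputable def mom (μ : Measure ℝ) (r : ℕ) : ℝ := ∫ x, x ^ r ∂μ

/-- `f_k(n) = ∫ (det A)^k dP_n(A)` where the `n²` entries of `A` are i.i.d. with law `μ`. -/
noncomputable def detMoment (μ : Measure ℝ) (k n : ℕ) : ℝ :=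
  ∫ A : Fin n → Fin n → ℝ, (Matrix.det (Matrix.of A)) ^ k
    ∂(Measure.pi fun _ : Fin n => Measure.pi fun _ : Fin n => μ)

theorem sum_sign_mul_sign_prod {n : ℕ} (M : Matrix (Fin n) (Fin n) ℝ) :
    ∑ σ : Equiv.Perm (Fin n), ∑ τ : Equiv.Perm (Fin n),
      ((Equiv.Perm.sign σ : ℤ) : ℝ) * ((Equiv.Perm.sign τ : ℤ) : ℝ) * ∏ i, M (σ i) (τ i)
      = (n.factorial : ℝ) * M.det := by
  have key (σ : Equiv.Perm (Fin n)) : ∑ τ : Equiv.Perm (Fin n),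
      ((Equiv.Perm.sign σ : ℤ) : ℝ) * ((Equiv.Perm.sign τ : ℤ) : ℝ) * ∏ i, M (σ i) (τ i)
      = M.det := by
    have h := Matrix.det_permute σ M
    rw [← Matrix.det_transpose, Matrix.det_apply'] at h
    simp only [Matrix.transpose_apply, Matrix.submatrix_apply, id] at h
    simp only [mul_assoc]
    rw [← Finset.mul_sum, h, ← mul_assoc, ← Int.cast_mul, ← Units.val_mul, Int.units_mul_self]
    simp
  simp [key, Fintype.card_perm]

/-- The determinant of `(p - q) I + q J`, where `J` is the all-ones matrix. -/
theorem det_ite_eq {n : ℕ} (hn : 1 ≤ n) (p q : ℝ) :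
    (Matrix.of fun j k : Fin n => if j = k then p else q).det
      = (p + ((n : ℝ) - 1) * q) * (p - q) ^ (n - 1) := by
  obtain ⟨m, rfl⟩ : ∃ m, n = m + 1 := ⟨n - 1, by omega⟩
  by_cases hc : p - q = 0
  · -- Here the matrix is `q J`, and the rank-one update formula would divide by `p - q`.
    obtain rfl : p = q := sub_eq_zero.mp hc
    rcases m with _ | m
    · simp
    · rw [Matrix.det_zero_of_row_eq (i := (0 : Fin (m + 2))) (j := 1) (by simp)]
      · simp
      · ext k
        simp
  · have hM : (Matrix.of fun j k : Fin (m + 1) => if j = k then p else q)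
        = (p - q) • (1 + Matrix.replicateCol Unit (fun _ => q / (p - q))
            * Matrix.replicateRow Unit (fun _ : Fin (m + 1) => (1 : ℝ))) := by
      ext j k
      by_cases hjk : j = k
      · simp [hjk, Matrix.mul_apply]
        field_simp
        ring
      · simp [hjk, Matrix.mul_apply]
        field_simp
    rw [hM, Matrix.det_smul, Matrix.det_one_add_replicateCol_mul_replicateRow]
    simp [dotProduct, pow_succ]
    field_simp
    ring

theorem integrable_pow_of_le_two {μ : Measure ℝ} [IsProbabilityMeasure μ]
    (hint : Integrable (fun x : ℝ => |x| ^ 2) μ) {r : ℕ} (hr : r ≤ 2) :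
    Integrable (fun x : ℝ => x ^ r) μ := by
  have h2 : MemLp (fun x : ℝ => x) 2 μ :=
    (memLp_two_iff_integrable_sq aestronglyMeasurable_id).2 (by simpa using hint)
  interval_cases r
  · simp
  · simpa using h2.integrable (by norm_num)
  · simpa using hint

/-- A product of two coordinates as a product over all coordinates of one-variable functions, the
form in which Fubini's theorem for product measures applies. -/
theorem entry_mul_eq_prod {n : ℕ} (j k : Fin n) (a : Fin n → ℝ) :
    a j * a k = ∏ l, a l ^ ((if l = j then 1 else 0) + (if l = k then 1 else 0)) := by
  simp only [pow_add, Finset.prod_mul_distrib, pow_ite, pow_one, pow_zero]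
  simp

theorem integrable_entry_mul {μ : Measure ℝ} [IsProbabilityMeasure μ]
    (hint : Integrable (fun x : ℝ => |x| ^ 2) μ) {n : ℕ} (j k : Fin n) :
    Integrable (fun a : Fin n → ℝ => a j * a k) (Measure.pi fun _ => μ) := by
  simp only [entry_mul_eq_prod]
  exact Integrable.fintype_prod (f := fun l (x : ℝ) =>
    x ^ ((if l = j then 1 else 0) + (if l = k then 1 else 0)))
    fun l => integrable_pow_of_le_two hint (by split_ifs <;> simp)

theorem integral_entry_mul (μ : Measure ℝ) [IsProbabilityMeasure μ] {n : ℕ} (j k : Fin n) :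
    ∫ a : Fin n → ℝ, a j * a k ∂(Measure.pi fun _ => μ)
      = if j = k then mom μ 2 else mom μ 1 ^ 2 := by
  simp only [entry_mul_eq_prod]
  rw [integral_fintype_prod_eq_prod (f := fun l (x : ℝ) =>
    x ^ ((if l = j then 1 else 0) + (if l = k then 1 else 0)))]
  have h0 : mom μ 0 = 1 := by simp [mom]
  change ∏ l, mom μ ((if l = j then 1 else 0) + (if l = k then 1 else 0)) = _
  split_ifs with hjk
  · subst hjk
    have (l : Fin n) : mom μ ((if l = j then 1 else 0) + (if l = j then 1 else 0))
        = if l = j then mom μ 2 else 1 := by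
      split_ifs <;> simp [h0]
    simp [this]
  · have (l : Fin n) : mom μ ((if l = j then 1 else 0) + (if l = k then 1 else 0))
        = (if l = j then mom μ 1 else 1) * (if l = k then mom μ 1 else 1) := by
      split_ifs <;> simp_all
    simp only [this, Finset.prod_mul_distrib, sq]
    simp

theorem second_moment_general (μ : Measure ℝ) [IsProbabilityMeasure μ]
    (hint : Integrable (fun x : ℝ => |x| ^ 2) μ) (n : ℕ) (hn : 1 ≤ n) :
    detMoment μ 2 n = (Nat.factorial n : ℝ) *
      (mom μ 2 + ((n : ℝ) - 1) * (mom μ 1) ^ 2) * (mom μ 2 - (mom μ 1) ^ 2) ^ (n - 1) := by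
  have hexp (A : Fin n → Fin n → ℝ) : (Matrix.of A).det ^ 2
      = ∑ σ : Equiv.Perm (Fin n), ∑ τ : Equiv.Perm (Fin n),
        ((Equiv.Perm.sign σ : ℤ) : ℝ) * ((Equiv.Perm.sign τ : ℤ) : ℝ)
          * ∏ i, A i (σ i) * A i (τ i) := by
    rw [← Matrix.det_transpose, Matrix.det_apply', sq, Finset.sum_mul_sum]
    refine Finset.sum_congr rfl fun σ _ => Finset.sum_congr rfl fun τ _ => ?_
    simp only [Matrix.transpose_apply, Matrix.of_apply, Finset.prod_mul_distrib]
    ring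
  have hI (σ τ : Equiv.Perm (Fin n)) : Integrable (fun A : Fin n → Fin n → ℝ =>
      ((Equiv.Perm.sign σ : ℤ) : ℝ) * ((Equiv.Perm.sign τ : ℤ) : ℝ)
        * ∏ i, A i (σ i) * A i (τ i))
      (Measure.pi fun _ : Fin n => Measure.pi fun _ : Fin n => μ) :=
    (Integrable.fintype_prod (f := fun i (a : Fin n → ℝ) => a (σ i) * a (τ i))
      fun i => integrable_entry_mul hint (σ i) (τ i)).const_mul _
  have hprod (σ τ : Equiv.Perm (Fin n)) :
      ∫ A : Fin n → Fin n → ℝ, ∏ i, A i (σ i) * A i (τ i)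
        ∂(Measure.pi fun _ : Fin n => Measure.pi fun _ : Fin n => μ)
      = ∏ i, (Matrix.of fun j k : Fin n => if j = k then mom μ 2 else mom μ 1 ^ 2)
          (σ i) (τ i) := by
    rw [integral_fintype_prod_eq_prod (f := fun i (a : Fin n → ℝ) => a (σ i) * a (τ i))]
    simp only [integral_entry_mul, Matrix.of_apply]
  rw [detMoment]
  simp only [hexp]
  rw [integral_finsetSum _ fun σ _ => integrable_finsetSum _ fun τ _ => hI σ τ]
  simp only [integral_finsetSum _ fun τ _ => hI _ τ, integral_const_mul, hprod]
  rw [sum_sign_mul_sign_prod, det_ite_eq hn, ← mul_assoc]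
end

section
/- Let μ be a Borel probability measure on ℝ with ∫|x|⁴ dμ < ∞ and m₁ = 0. Then for every real t with m₂²·|t| < 1, the series ∑_{n=0}^∞ f₄(n)·tⁿ/(n!)² converges (HasSum) with sum exp(t·(m₄ − 3m₂²)) / (1 − m₂²·t)³. -/
/-!
For a `k × n` matrix `B` with i.i.d. centred entries, let `g(k, n) = E[det(B Bᵀ)²]`, so that the
fourth moment of the determinant is `g(n, n)`. Put `s = m₂²` and `κ = m₄ - 3 m₂²`.

Adding a row `x` on top of `B`, the Gram determinant is a quadratic form `xᵀ M x`, where, for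
independent rows, `M` is `det(B Bᵀ)` times the orthogonal projection onto the complement of the row
space; in general `M = det(B Bᵀ) I - Bᵀ adj(B Bᵀ) B` (`gramDet_cons`). The moment-cumulant formula gives
`E[(xᵀ M x)²] = κ ∑ M_jj² + s ((tr M)² + 2 tr M²)` (`integral_sq_quadForm`). Here `tr M` and `tr M²`
are `n - k` times `det(B Bᵀ)` and its square (`trace_formMat`, `sum_sq_formMat`), and `M_jj` is the
Gram determinant of `B` with column `j` deleted (`formMat_diag`). Hence
`g(k + 1, n) = κ n g(k, n - 1) + s (n - k) (n - k + 2) g(k, n)`.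
This is solved by `g(k, k + d) = (k + d)! k! c(k, d)`, where `c(k, d)` is the coefficient of `t ^ k`
in `exp(κ t) / (d! (1 - s t) ^ (d + 3))` (`gramCoeff_succ`, `integral_gramDet`). Taking `d = 0` and
forming the Cauchy product of the two series gives the generating function.

Deleted columns are encoded by a finite set `S` of retained columns, so that all Gram determinants
are functions on one probability space. The matrix identities are proved with adjugates, without
invertibility assumptions.
-/

open MeasureTheory

/-! ### Gram determinants and their quadratic forms -/

open Matrix in
/-- Double Laplace expansion of a bordered determinant along its first row and column. -/
lemma det_bordered {k : ℕ} (a : ℝ) (u v : Fin k → ℝ) (D : Matrix (Fin k) (Fin k) ℝ)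
    (M : Matrix (Fin (k + 1)) (Fin (k + 1)) ℝ) (h00 : M 0 0 = a)
    (h0s : ∀ j, M 0 (Fin.succ j) = v j) (hs0 : ∀ i, M (Fin.succ i) 0 = u i)
    (hss : ∀ i j, M (Fin.succ i) (Fin.succ j) = D i j) :
    M.det = a * D.det - ∑ j, ∑ i, v j * D.adjugate j i * u i := by
  have hsub : M.submatrix Fin.succ Fin.succ = D := by ext i j; simp [hss]
  rw [det_succ_row_zero, Fin.sum_univ_succ]
  simp only [Fin.val_zero, pow_zero, one_mul, h00, Fin.succAbove_zero, hsub, sub_eq_add_neg,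
    ← Finset.sum_neg_distrib]
  congr 1
  refine Finset.sum_congr rfl fun j _ => ?_
  cases k with
  | zero => exact j.elim0
  | succ k =>
    rw [det_succ_column_zero, Finset.mul_sum]
    refine Finset.sum_congr rfl fun i _ => ?_
    have hsm : (M.submatrix Fin.succ (Fin.succAbove j.succ)).submatrix i.succAbove Fin.succ
        = D.submatrix i.succAbove j.succAbove := by
      ext p q; simp [hss]
    rw [hsm, adjugate_fin_succ_eq_det_submatrix]
    simp only [submatrix_apply, h0s, Fin.succ_succAbove_zero, hs0, Fin.val_succ]
    ring

open Matrix in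
/-- The matrix determinant lemma without an invertibility hypothesis. -/
lemma det_sub_rank_one {k : ℕ} (u v : Fin k → ℝ) (D : Matrix (Fin k) (Fin k) ℝ) :
    (D - of fun i j => u i * v j).det = D.det - ∑ j, ∑ i, v j * D.adjugate j i * u i := by
  let M : Matrix (Fin (k + 1)) (Fin (k + 1)) ℝ :=
    of (Fin.cons (Fin.cons 1 v) fun i => Fin.cons (u i) (D i))
  let N : Matrix (Fin (k + 1)) (Fin (k + 1)) ℝ :=
    of (Fin.cons (Fin.cons 1 v) fun i => Fin.cons 0 fun j => D i j - u i * v j)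
  have hM := det_bordered 1 u v D M rfl (fun _ => rfl) (fun _ => rfl) (fun _ _ => rfl)
  have hN := det_bordered 1 0 v (D - of fun i j => u i * v j) N rfl (fun _ => rfl) (fun _ => rfl)
    (fun _ _ => rfl)
  -- subtracting `u i` times the zeroth row from row `i` turns `M` into `N`
  have hMN : M.det = N.det := by
    refine det_eq_of_forall_row_eq_smul_add_const (Fin.cons 0 u) 0 rfl fun i j => ?_
    refine Fin.cases ?_ (fun i => ?_) i <;> refine Fin.cases ?_ (fun j => ?_) j <;> simp [M, N]
  simp only [Pi.zero_apply, mul_zero, Finset.sum_const_zero, sub_zero, one_mul] at hM hN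
  rw [← hN, ← hMN, hM]

section Gram

variable {ι : Type*} [Fintype ι] [DecidableEq ι]

/-- The matrix with rows `B i`, with every column outside `S` replaced by zero. -/
def maskMat {k : ℕ} (S : Finset ι) (B : Fin k → ι → ℝ) : Matrix (Fin k) ι ℝ :=
  Matrix.of fun i j => if j ∈ S then B i j else 0

open Matrix in
/-- The Gram determinant of the rows `B i`, using only the coordinates in `S`. -/
def gramDet {k : ℕ} (S : Finset ι) (B : Fin k → ι → ℝ) : ℝ :=
  (maskMat S B * (maskMat S B)ᵀ).det

open Matrix in
/-- The matrix of the quadratic form `x ↦ gramDet S (x, B)`. When the rows of `B` restricted to `S`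
are independent, it is their Gram determinant times the orthogonal projection of `ℝ^S` onto the
complement of the row space; the adjugate makes it meaningful in general. -/
def formMat {k : ℕ} (S : Finset ι) (B : Fin k → ι → ℝ) : Matrix ι ι ℝ :=
  gramDet S B • diagonal (fun j => if j ∈ S then (1 : ℝ) else 0) -
    (maskMat S B)ᵀ * (maskMat S B * (maskMat S B)ᵀ).adjugate * maskMat S B

open Matrix in
lemma gramDet_cons {k : ℕ} (S : Finset ι) (x : ι → ℝ) (B : Fin k → ι → ℝ) :
    gramDet S (Fin.cons x B : Fin (k + 1) → ι → ℝ) = ∑ a, ∑ b, formMat S B a b * (x a * x b) := by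
  set C := maskMat S B with hC
  have hL : gramDet S (Fin.cons x B : Fin (k + 1) → ι → ℝ) = _ :=
    det_bordered (∑ j, if j ∈ S then x j * x j else 0) (C *ᵥ x) (C *ᵥ x) (C * Cᵀ) _
      (by simp [maskMat, mul_apply]) (fun j => ?_) (fun i => ?_)
      (fun i j => by simp [maskMat, mul_apply, hC])
  · rw [hL]
    have h1 : ∑ j, ∑ i, (C *ᵥ x) j * (C * Cᵀ).adjugate j i * (C *ᵥ x) i
        = x ⬝ᵥ (Cᵀ * (C * Cᵀ).adjugate * C) *ᵥ x := by
      rw [← mulVec_mulVec, ← mulVec_mulVec, dotProduct_mulVec, vecMul_transpose]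
      simp only [dotProduct, mulVec, Finset.mul_sum, mul_assoc]
    rw [h1]
    have h2 : ∑ a, ∑ b, formMat S B a b * (x a * x b) = x ⬝ᵥ (formMat S B) *ᵥ x := by
      simp only [dotProduct, mulVec, Finset.mul_sum]
      exact Finset.sum_congr rfl fun a _ => Finset.sum_congr rfl fun b _ => by ring
    rw [h2, formMat, sub_mulVec, dotProduct_sub, smul_mulVec, dotProduct_smul]
    congr 1
    simp only [mulVec_diagonal, dotProduct, gramDet, smul_eq_mul]
    rw [mul_comm]
    congr 1
    refine Finset.sum_congr rfl fun j _ => ?_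
    split_ifs <;> simp
  · simp only [maskMat, mul_apply, mulVec, dotProduct, hC, transpose_apply, of_apply,
      Fin.cons_zero, Fin.cons_succ]
    refine Finset.sum_congr rfl fun j _ => ?_
    split_ifs <;> ring
  · simp only [maskMat, mul_apply, mulVec, dotProduct, hC, transpose_apply, of_apply,
      Fin.cons_zero, Fin.cons_succ]
    refine Finset.sum_congr rfl fun j _ => ?_
    split_ifs <;> ring

open Matrix in
lemma formMat_symm {k : ℕ} (S : Finset ι) (B : Fin k → ι → ℝ) : (formMat S B)ᵀ = formMat S B := by
  simp [formMat, transpose_mul, adjugate_transpose, Matrix.mul_assoc]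

open Matrix in
lemma formMat_diag {k : ℕ} (S : Finset ι) (B : Fin k → ι → ℝ) (j : ι) :
    formMat S B j j = if j ∈ S then gramDet (S.erase j) B else 0 := by
  split_ifs with hj
  · have h : maskMat (S.erase j) B * (maskMat (S.erase j) B)ᵀ
        = maskMat S B * (maskMat S B)ᵀ - of fun i i' => B i j * B i' j := by
      have hm (T : Finset ι) (i i' : Fin k) : (maskMat T B * (maskMat T B)ᵀ) i i'
          = ∑ c ∈ T, B i c * B i' c := by
        simp [maskMat, mul_apply]
      ext i i'
      rw [Matrix.sub_apply, hm, hm, Finset.sum_erase_eq_sub hj, of_apply]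
    rw [gramDet, h, det_sub_rank_one]
    simp only [formMat, Matrix.sub_apply, Matrix.smul_apply, diagonal_apply_eq, hj, if_true, smul_eq_mul, mul_one,
      gramDet, mul_apply (N := maskMat S B), mul_apply (M := (maskMat S B)ᵀ), Finset.sum_mul]
    rw [Finset.sum_comm]
    simp [maskMat, hj]
  · simp [formMat, hj, mul_apply, maskMat]

open Matrix in
lemma trace_formMat {k : ℕ} (S : Finset ι) (B : Fin k → ι → ℝ) :
    (formMat S B).trace = ((S.card : ℝ) - k) * gramDet S B := by
  rw [formMat, trace_sub, trace_mul_cycle, mul_adjugate, trace_smul, trace_smul, trace_one,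
    trace_diagonal]
  simp [gramDet]
  ring

open Matrix in
/-- Up to the scalar `gramDet S B`, the matrix `formMat S B` is idempotent. -/
lemma formMat_mul_self {k : ℕ} (S : Finset ι) (B : Fin k → ι → ℝ) :
    formMat S B * formMat S B = gramDet S B • formMat S B := by
  set C := maskMat S B with hC
  set P : Matrix ι ι ℝ := diagonal (fun j => if j ∈ S then (1 : ℝ) else 0) with hP
  set N := Cᵀ * (C * Cᵀ).adjugate * C with hN
  have hCP : C * P = C := by
    ext i j; simp +contextual [hP, hC, maskMat, mul_diagonal]
  have hPC : P * Cᵀ = Cᵀ := by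
    ext i j; simp +contextual [hP, hC, maskMat, diagonal_mul]
  have hPP : P * P = P := by simp [hP]
  have hPN : P * N = N := by rw [hN, ← Matrix.mul_assoc, ← Matrix.mul_assoc, hPC]
  have hNP : N * P = N := by rw [hN, Matrix.mul_assoc, hCP]
  have hNN : N * N = gramDet S B • N := by
    calc N * N = Cᵀ * ((C * Cᵀ).adjugate * (C * Cᵀ)) * (C * Cᵀ).adjugate * C := by
          simp only [hN, Matrix.mul_assoc]
      _ = gramDet S B • N := by
          rw [adjugate_mul]; simp [gramDet, hN, hC]
  have hF : formMat S B = gramDet S B • P - N := rfl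
  rw [hF]
  simp only [Matrix.sub_mul, Matrix.mul_sub, Matrix.smul_mul, Matrix.mul_smul, hPP, hPN, hNP, hNN,
    smul_sub]
  abel

open Matrix in
lemma sum_sq_formMat {k : ℕ} (S : Finset ι) (B : Fin k → ι → ℝ) :
    ∑ a, ∑ b, formMat S B a b ^ 2 = ((S.card : ℝ) - k) * gramDet S B ^ 2 := by
  have h : ∑ a, ∑ b, formMat S B a b ^ 2 = (formMat S B * formMat S B).trace := by
    simp only [trace, diag_apply, mul_apply]
    refine Finset.sum_congr rfl fun a _ => Finset.sum_congr rfl fun b _ => ?_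
    rw [← transpose_apply (formMat S B) a b, formMat_symm]; ring
  rw [h, formMat_mul_self, trace_smul, trace_formMat, smul_eq_mul]; ring

/-! ### Quadratic forms in i.i.d. centred variables -/

lemma integrable_pow_of_le {μ : Measure ℝ} [IsProbabilityMeasure μ]
    (hint : Integrable (fun x : ℝ => |x| ^ 4) μ) {r : ℕ} (hr : r ≤ 4) :
    Integrable (fun x : ℝ => x ^ r) μ := by
  refine Integrable.mono' ((integrable_const (1 : ℝ)).add hint) (by fun_prop) (ae_of_all _ fun x => ?_)
  rw [Real.norm_eq_abs, abs_pow]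
  show |x| ^ r ≤ 1 + |x| ^ 4
  rcases le_total |x| 1 with h | h
  · have h1 := pow_le_one₀ (n := r) (abs_nonneg x) h
    have h2 : 0 ≤ |x| ^ 4 := by positivity
    linarith
  · have := pow_le_pow_right₀ h hr
    linarith

lemma mul_four_eq_prod (x : ι → ℝ) (a b c d : ι) :
    x a * x b * x c * x d = ∏ i, x i ^ ((if i = a then 1 else 0) + (if i = b then 1 else 0)
      + (if i = c then 1 else 0) + (if i = d then 1 else 0)) := by
  simp_rw [pow_add, Finset.prod_mul_distrib]
  simp [pow_ite]

/-- The moment-cumulant expansion of a mixed fourth moment of independent centred variables: the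
fourth cumulant on the diagonal, plus the three pairings. -/
lemma prod_moments_four (m : ℕ → ℝ) (h0 : m 0 = 1) (h1 : m 1 = 0) (a b c d : ι) :
    ∏ i, m ((if i = a then 1 else 0) + (if i = b then 1 else 0)
      + (if i = c then 1 else 0) + (if i = d then 1 else 0)) =
    (m 4 - 3 * m 2 ^ 2) * (if a = b then if a = c then if a = d then 1 else 0 else 0 else 0)
      + m 2 ^ 2 * ((if a = b then if c = d then 1 else 0 else 0)
        + (if a = c then if b = d then 1 else 0 else 0)
        + (if a = d then if b = c then 1 else 0 else 0)) := by
  -- an index that occurs exactly once contributes the factor `m 1 = 0`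
  have lone (j : ι) (e : ι → ℕ) (h : e j = 1) : ∏ i, m (e i) = 0 :=
    Finset.prod_eq_zero (Finset.mem_univ j) (by rw [h, h1])
  have pair (p q : ι) (hpq : p ≠ q) (e : ι → ℕ) (hp : e p = 2) (hq : e q = 2)
      (h : ∀ i, i ≠ p → i ≠ q → e i = 0) : ∏ i, m (e i) = m 2 ^ 2 := by
    rw [Finset.prod_eq_mul p q hpq (fun i _ hi => by rw [h i hi.1 hi.2, h0]) (by simp) (by simp),
      hp, hq, sq]
  by_cases hab : a = b
  · subst hab
    by_cases hcd : c = d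
    · subst hcd
      by_cases hac : a = c
      · subst hac
        rw [Finset.prod_eq_single a (fun i _ hi => by simp [hi, h0]) (by simp)]
        simp
        ring
      · rw [pair a c hac _ (by simp [hac]) (by simp [Ne.symm hac])
          (fun i h h' => by simp [h, h'])]
        simp [hac]
    · by_cases hac : a = c
      · subst hac
        rw [lone d _ (by simp [Ne.symm hcd])]
        simp [hcd]
      · rw [lone c _ (by simp [Ne.symm hac, hcd])]
        simp [hac, hcd]
  · by_cases hac : a = c
    · subst hac
      by_cases hbd : b = d
      · subst hbd
        rw [pair a b hab _ (by simp [hab]) (by simp [Ne.symm hab])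
          (fun i h h' => by simp [h, h'])]
        simp [hab]
      · rw [lone b _ (by simp [Ne.symm hab, hbd])]
        simp [hab, hbd, Ne.symm hab]
    · by_cases had : a = d
      · subst had
        by_cases hbc : b = c
        · subst hbc
          rw [pair a b hab _ (by simp [hab]) (by simp [Ne.symm hab])
            (fun i h h' => by simp [h, h'])]
          simp [hab]
        · rw [lone b _ (by simp [Ne.symm hab, hbc])]
          simp [hab, hbc, hac]
      · rw [lone a _ (by simp [hab, hac, had])]
        simp [hab, hac, had]

lemma integrable_mul_four {μ : Measure ℝ} [IsProbabilityMeasure μ]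
    (hint : Integrable (fun x : ℝ => |x| ^ 4) μ) (a b c d : ι) :
    Integrable (fun x : ι → ℝ => x a * x b * x c * x d) (Measure.pi fun _ => μ) := by
  simp_rw [mul_four_eq_prod]
  refine Integrable.fintype_prod (f := fun i y => y ^ _) fun i => integrable_pow_of_le hint ?_
  split_ifs <;> norm_num

lemma integral_mul_four {μ : Measure ℝ} [IsProbabilityMeasure μ] (hm1 : mom μ 1 = 0)
    (a b c d : ι) :
    ∫ x : ι → ℝ, x a * x b * x c * x d ∂(Measure.pi fun _ => μ) =
    (mom μ 4 - 3 * mom μ 2 ^ 2)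
        * (if a = b then if a = c then if a = d then 1 else 0 else 0 else 0)
      + mom μ 2 ^ 2 * ((if a = b then if c = d then 1 else 0 else 0)
        + (if a = c then if b = d then 1 else 0 else 0)
        + (if a = d then if b = c then 1 else 0 else 0)) := by
  rw [← prod_moments_four (mom μ) (by simp [mom]) hm1]
  simp_rw [mul_four_eq_prod]
  exact integral_fintype_prod_eq_prod (fun i y => y ^ _)

omit [DecidableEq ι] in
lemma sq_quadForm (M : Matrix ι ι ℝ) (x : ι → ℝ) :
    (∑ a, ∑ b, M a b * (x a * x b)) ^ 2
      = ∑ a, ∑ c, ∑ b, ∑ d, M a b * M c d * (x a * x b * x c * x d) := by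
  rw [sq, Finset.sum_mul_sum]
  refine Finset.sum_congr rfl fun a _ => Finset.sum_congr rfl fun c _ => ?_
  rw [Finset.sum_mul_sum]
  exact Finset.sum_congr rfl fun b _ => Finset.sum_congr rfl fun d _ => by ring

lemma integrable_sq_quadForm {μ : Measure ℝ} [IsProbabilityMeasure μ]
    (hint : Integrable (fun x : ℝ => |x| ^ 4) μ) (M : Matrix ι ι ℝ) :
    Integrable (fun x : ι → ℝ => (∑ a, ∑ b, M a b * (x a * x b)) ^ 2)
      (Measure.pi fun _ => μ) := by
  simp_rw [sq_quadForm]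
  exact integrable_finsetSum _ fun a _ => integrable_finsetSum _ fun c _ =>
    integrable_finsetSum _ fun b _ => integrable_finsetSum _ fun d _ =>
      (integrable_mul_four hint a b c d).const_mul _

/-- The second moment of a quadratic form in i.i.d. centred variables. -/
lemma integral_sq_quadForm {μ : Measure ℝ} [IsProbabilityMeasure μ]
    (hint : Integrable (fun x : ℝ => |x| ^ 4) μ) (hm1 : mom μ 1 = 0)
    (M : Matrix ι ι ℝ) (hM : M.transpose = M) :
    ∫ x : ι → ℝ, (∑ a, ∑ b, M a b * (x a * x b)) ^ 2 ∂(Measure.pi fun _ => μ) =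
      (mom μ 4 - 3 * mom μ 2 ^ 2) * ∑ a, M a a ^ 2
        + mom μ 2 ^ 2 * (M.trace ^ 2 + 2 * ∑ a, ∑ b, M a b ^ 2) := by
  simp_rw [sq_quadForm]
  have hi := fun a b c d => (integrable_mul_four hint a b c d).const_mul (M a b * M c d)
  have hi1 := fun a c b => integrable_finsetSum Finset.univ fun d _ => hi a b c d
  have hi2 := fun a c => integrable_finsetSum Finset.univ fun b _ => hi1 a c b
  have hi3 := fun a => integrable_finsetSum Finset.univ fun c _ => hi2 a c
  rw [integral_finsetSum _ fun a _ => hi3 a]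
  simp_rw [integral_finsetSum _ fun c _ => hi2 _ c, integral_finsetSum _ fun b _ => hi1 _ _ b,
    integral_finsetSum _ fun d _ => hi _ _ _ d, integral_const_mul, integral_mul_four hm1]
  have hsym (a b : ι) : M b a = M a b := congrFun (congrFun hM a) b
  simp only [mul_add, Finset.sum_add_distrib]
  have e1 : ∑ a, ∑ c, ∑ b, ∑ d, M a b * M c d * ((mom μ 4 - 3 * mom μ 2 ^ 2)
      * (if a = b then if a = c then if a = d then 1 else 0 else 0 else 0))
      = (mom μ 4 - 3 * mom μ 2 ^ 2) * ∑ a, M a a ^ 2 := by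
    simp [Finset.mul_sum]
    exact Finset.sum_congr rfl fun a _ => by ring
  have e2 : ∑ a, ∑ c, ∑ b, ∑ d, M a b * M c d * (mom μ 2 ^ 2
      * (if a = b then if c = d then 1 else 0 else 0)) = mom μ 2 ^ 2 * M.trace ^ 2 := by
    rw [Matrix.trace, sq (∑ i, M.diag i), Finset.sum_mul_sum]
    simp [Finset.mul_sum]
    exact Finset.sum_congr rfl fun a _ => Finset.sum_congr rfl fun c _ => by ring
  have e3 : ∑ a, ∑ c, ∑ b, ∑ d, M a b * M c d * (mom μ 2 ^ 2
      * (if a = c then if b = d then 1 else 0 else 0)) = mom μ 2 ^ 2 * ∑ a, ∑ b, M a b ^ 2 := by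
    simp [Finset.mul_sum]
    exact Finset.sum_congr rfl fun a _ => Finset.sum_congr rfl fun c _ => by ring
  have e4 : ∑ a, ∑ c, ∑ b, ∑ d, M a b * M c d * (mom μ 2 ^ 2
      * (if a = d then if b = c then 1 else 0 else 0)) = mom μ 2 ^ 2 * ∑ a, ∑ b, M a b ^ 2 := by
    simp [Finset.mul_sum]
    exact Finset.sum_congr rfl fun a _ => Finset.sum_congr rfl fun c _ => by rw [hsym]; ring
  rw [e1, e2, e3, e4]
  ring

/-! ### Coefficients solving the recursion -/

/-- The coefficient of `t ^ k` in `exp (κ t) / (d! (1 - s t) ^ (d + 3))`. -/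
noncomputable def gramCoeff (κ s : ℝ) (k d : ℕ) : ℝ :=
  ∑ p ∈ Finset.HasAntidiagonal.antidiagonal k, κ ^ p.1 / (p.1.factorial : ℝ) *
    (s ^ p.2 * ((p.2 + d + 2).factorial : ℝ)
      / ((p.2.factorial : ℝ) * d.factorial * (d + 2).factorial))

lemma gramCoeff_succ (κ s : ℝ) (k d : ℕ) :
    (k + 1) * gramCoeff κ s (k + 1) d
      = κ * gramCoeff κ s k d + s * ((d + 1) * (d + 3)) * gramCoeff κ s k (d + 1) := by
  set a : ℕ → ℝ := fun i => κ ^ i / (i.factorial : ℝ) with ha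
  set b : ℕ → ℕ → ℝ := fun d j => s ^ j * ((j + d + 2).factorial : ℝ)
      / ((j.factorial : ℝ) * d.factorial * (d + 2).factorial) with hb
  have hc (k d : ℕ) : gramCoeff κ s k d = ∑ p ∈ Finset.HasAntidiagonal.antidiagonal k, a p.1 * b d p.2 := rfl
  have ha' (i : ℕ) : ((i + 1 : ℕ) : ℝ) * a (i + 1) = κ * a i := by
    simp only [ha, Nat.factorial_succ, Nat.cast_mul, pow_succ]
    field_simp
  have hb' (j : ℕ) : ((j + 1 : ℕ) : ℝ) * b d (j + 1) = s * ((d + 1) * (d + 3)) * b (d + 1) j := by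
    have e : j + 1 + d + 2 = j + (d + 1) + 2 := by ring
    simp only [hb, e, Nat.factorial_succ j, Nat.factorial_succ d, Nat.factorial_succ (d + 2),
      show d + 1 + 2 = (d + 2) + 1 from rfl, Nat.cast_mul, pow_succ]
    push_cast
    field_simp
    ring
  -- split the factor `k + 1 = i + j` and lower the index it came from
  have split : (k + 1) * gramCoeff κ s (k + 1) d
      = ∑ p ∈ Finset.HasAntidiagonal.antidiagonal (k + 1), ((p.1 : ℝ) * a p.1) * b d p.2
        + ∑ p ∈ Finset.HasAntidiagonal.antidiagonal (k + 1), a p.1 * ((p.2 : ℝ) * b d p.2) := by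
    rw [hc, Finset.mul_sum, ← Finset.sum_add_distrib]
    refine Finset.sum_congr rfl fun p hp => ?_
    have : ((p.1 : ℝ) + p.2) = k + 1 := by exact_mod_cast Finset.HasAntidiagonal.mem_antidiagonal.1 hp
    rw [← this]; ring
  rw [split, Finset.Nat.sum_antidiagonal_succ, Finset.Nat.sum_antidiagonal_succ', hc, hc,
    Finset.mul_sum, Finset.mul_sum]
  simp only [ha', hb', Nat.cast_zero, zero_mul, mul_zero, zero_add]
  congr 1
  · exact Finset.sum_congr rfl fun p _ => by ring
  · exact Finset.sum_congr rfl fun p _ => by ring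

/-! ### The recursion for random Gram determinants -/

lemma continuous_gramDet {k : ℕ} (S : Finset ι) :
    Continuous fun B : Fin k → ι → ℝ => gramDet S B := by
  have h : Continuous fun B : Fin k → ι → ℝ => maskMat S B := by
    refine continuous_matrix fun i j => ?_
    by_cases hj : j ∈ S
    · simp only [maskMat, Matrix.of_apply, hj, if_true]; fun_prop
    · simp only [maskMat, Matrix.of_apply, hj, if_false]; fun_prop
  exact (h.matrix_mul h.matrix_transpose).matrix_det

/-- Averaging over one row, with the other rows fixed. -/
lemma integral_gramDet_cons {μ : Measure ℝ} [IsProbabilityMeasure μ]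
    (hint : Integrable (fun x : ℝ => |x| ^ 4) μ) (hm1 : mom μ 1 = 0) {k : ℕ} (S : Finset ι)
    (B : Fin k → ι → ℝ) :
    ∫ x : ι → ℝ, gramDet S (Fin.cons x B : Fin (k + 1) → ι → ℝ) ^ 2 ∂(Measure.pi fun _ => μ) =
      (mom μ 4 - 3 * mom μ 2 ^ 2) * ∑ j ∈ S, gramDet (S.erase j) B ^ 2
        + mom μ 2 ^ 2 * (((S.card : ℝ) - k) * ((S.card : ℝ) - k + 2)) * gramDet S B ^ 2 := by
  simp_rw [gramDet_cons]
  rw [integral_sq_quadForm hint hm1 _ (formMat_symm S B), trace_formMat, sum_sq_formMat]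
  simp only [formMat_diag, ite_pow, ne_eq, OfNat.ofNat_ne_zero, not_false_eq_true, zero_pow,
    Finset.sum_ite_mem, Finset.univ_inter]
  ring

/-- The second moment of the Gram determinant of `k` random rows in `k + d` coordinates. The
induction removes one row at a time; the diagonal term of `integral_gramDet_cons` also removes one
column. -/
lemma integral_gramDet {μ : Measure ℝ} [IsProbabilityMeasure μ]
    (hint : Integrable (fun x : ℝ => |x| ^ 4) μ) (hm1 : mom μ 1 = 0) (k : ℕ) :
    ∀ (S : Finset ι) (d : ℕ), S.card = k + d →
      Integrable (fun B : Fin k → ι → ℝ => gramDet S B ^ 2)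
        (Measure.pi fun _ => Measure.pi fun _ => μ) ∧
      ∫ B : Fin k → ι → ℝ, gramDet S B ^ 2 ∂(Measure.pi fun _ => Measure.pi fun _ => μ) =
        ((k + d).factorial : ℝ) * k.factorial
          * gramCoeff (mom μ 4 - 3 * mom μ 2 ^ 2) (mom μ 2 ^ 2) k d := by
  induction k with
  | zero =>
    intro S d hS
    have h1 : ∀ B : Fin 0 → ι → ℝ, gramDet S B = 1 := fun B => Matrix.det_isEmpty
    simp only [h1, one_pow]
    refine ⟨integrable_const _, ?_⟩
    simp [gramCoeff]
    field_simp
  | succ k ih =>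
    intro S d hS
    set κ := mom μ 4 - 3 * mom μ 2 ^ 2 with hκ
    set s := mom μ 2 ^ 2 with hs
    set ν : Measure (ι → ℝ) := Measure.pi fun _ => μ with hν
    have ihS := ih S (d + 1) (by omega)
    have ihe : ∀ j ∈ S, _ := fun j hj =>
      ih (S.erase j) d (by rw [Finset.card_erase_of_mem hj]; omega)
    have mp := measurePreserving_piFinSuccAbove (fun _ : Fin (k + 1) => ν) 0
    let G : (ι → ℝ) × (Fin k → ι → ℝ) → ℝ :=
      fun z => gramDet S (Fin.cons z.1 z.2 : Fin (k + 1) → ι → ℝ) ^ 2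
    have hF : (fun B : Fin (k + 1) → ι → ℝ => gramDet S B ^ 2)
        = G ∘ MeasurableEquiv.piFinSuccAbove (fun _ : Fin (k + 1) => ι → ℝ) 0 := by
      funext B
      simp only [G, Function.comp_apply]
      congr 2
      exact (Fin.cons_self_tail B).symm
    have hGc : Continuous G :=
      ((continuous_gramDet S).comp (continuous_fst.finCons continuous_snd)).pow 2
    have hin (B : Fin k → ι → ℝ) :
        ∫ x : ι → ℝ, gramDet S (Fin.cons x B : Fin (k + 1) → ι → ℝ) ^ 2 ∂ν =
          κ * ∑ j ∈ S, gramDet (S.erase j) B ^ 2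
            + s * (((S.card : ℝ) - k) * ((S.card : ℝ) - k + 2)) * gramDet S B ^ 2 :=
      integral_gramDet_cons hint hm1 S B
    have hsum : Integrable (fun B : Fin k → ι → ℝ => κ * ∑ j ∈ S, gramDet (S.erase j) B ^ 2)
        (Measure.pi fun _ => ν) :=
      (integrable_finsetSum _ fun j hj => (ihe j hj).1).const_mul _
    have hdet : Integrable (fun B : Fin k → ι → ℝ =>
        s * (((S.card : ℝ) - k) * ((S.card : ℝ) - k + 2)) * gramDet S B ^ 2)
        (Measure.pi fun _ => ν) := ihS.1.const_mul _
    -- the integrand is non-negative, so integrability also follows row by row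
    have hG : Integrable G (ν.prod (Measure.pi fun _ => ν)) := by
      rw [integrable_prod_iff' hGc.aestronglyMeasurable]
      refine ⟨ae_of_all _ fun B => ?_, ?_⟩
      · simp only [G, gramDet_cons]
        exact integrable_sq_quadForm hint _
      · have hn : ∀ z, ‖G z‖ = G z := fun z => Real.norm_of_nonneg (sq_nonneg _)
        simp only [hn]
        simp only [G, hin]
        exact hsum.add hdet
    refine ⟨hF ▸ mp.integrable_comp_of_integrable hG, ?_⟩
    have hint' : ∫ B : Fin (k + 1) → ι → ℝ, gramDet S B ^ 2 ∂(Measure.pi fun _ => ν)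
        = ∫ z, G z ∂(ν.prod (Measure.pi fun _ => ν)) := by
      rw [hF]
      exact mp.integral_comp' G
    rw [hint', integral_prod_symm _ hG]
    simp only [G, hin]
    rw [integral_add hsum hdet, integral_const_mul, integral_const_mul,
      integral_finsetSum _ fun j hj => (ihe j hj).1, Finset.sum_congr rfl fun j hj => (ihe j hj).2,
      ihS.2, Finset.sum_const, hS, nsmul_eq_mul]
    have hrec := gramCoeff_succ κ s k d
    have e1 : k + 1 + d = (k + d) + 1 := by ring
    have e2 : k + (d + 1) = (k + d) + 1 := by ring
    rw [e1, e2, Nat.factorial_succ (k + d), Nat.factorial_succ k]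
    push_cast
    linear_combination (-((k + d + 1) * ((k + d).factorial : ℝ) * k.factorial)) * hrec

end Gram

/-! ### The generating function -/

lemma detMoment_four {μ : Measure ℝ} [IsProbabilityMeasure μ]
    (hint : Integrable (fun x : ℝ => |x| ^ 4) μ) (hm1 : mom μ 1 = 0) (n : ℕ) :
    detMoment μ 4 n / (n.factorial : ℝ) ^ 2
      = gramCoeff (mom μ 4 - 3 * mom μ 2 ^ 2) (mom μ 2 ^ 2) n 0 := by
  have h := (integral_gramDet hint hm1 n (Finset.univ : Finset (Fin n)) 0 (by simp)).2
  have hd : detMoment μ 4 n = ∫ B : Fin n → Fin n → ℝ, gramDet Finset.univ B ^ 2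
      ∂(Measure.pi fun _ => Measure.pi fun _ => μ) := by
    refine integral_congr_ae (ae_of_all _ fun B => ?_)
    have hm : maskMat Finset.univ B = Matrix.of B := by ext i j; simp [maskMat]
    simp only [gramDet, hm, Matrix.det_mul, Matrix.det_transpose]
    ring
  rw [hd, h, add_zero]
  field_simp

lemma gramCoeff_zero_mul_pow (κ s t : ℝ) (n : ℕ) :
    gramCoeff κ s n 0 * t ^ n = ∑ p ∈ Finset.HasAntidiagonal.antidiagonal n,
      (t * κ) ^ p.1 / (p.1.factorial : ℝ) * (((p.2 + 2).choose 2 : ℕ) * (s * t) ^ p.2) := by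
  rw [gramCoeff, Finset.sum_mul]
  refine Finset.sum_congr rfl fun p hp => ?_
  have hch : (((p.2 + 2).choose 2 : ℕ) : ℝ) * (2 * p.2.factorial) = (p.2 + 2).factorial := by
    have := Nat.add_choose_mul_factorial_mul_factorial p.2 2
    rw [← this]; push_cast [Nat.factorial]
    ring
  rw [← Finset.HasAntidiagonal.mem_antidiagonal.1 hp, add_zero, ← hch]
  simp only [Nat.factorial]
  push_cast
  field_simp
  ring

theorem fourth_moment_generating_function_centered (μ : Measure ℝ) [IsProbabilityMeasure μ]
    (hint : Integrable (fun x : ℝ => |x| ^ 4) μ) (hm1 : mom μ 1 = 0)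
    (t : ℝ) (ht : (mom μ 2) ^ 2 * |t| < 1) :
    HasSum (fun n : ℕ => detMoment μ 4 n * t ^ n / (Nat.factorial n : ℝ) ^ 2)
      (Real.exp (t * (mom μ 4 - 3 * (mom μ 2) ^ 2)) / (1 - (mom μ 2) ^ 2 * t) ^ 3) := by
  set κ := mom μ 4 - 3 * mom μ 2 ^ 2
  set s := mom μ 2 ^ 2 with hs
  have hst : ‖s * t‖ < 1 := by
    rwa [norm_mul, Real.norm_of_nonneg (sq_nonneg _), Real.norm_eq_abs]
  have hterm : (fun n : ℕ => detMoment μ 4 n * t ^ n / (Nat.factorial n : ℝ) ^ 2)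
      = fun n => ∑ p ∈ Finset.HasAntidiagonal.antidiagonal n,
        (t * κ) ^ p.1 / (p.1.factorial : ℝ) * (((p.2 + 2).choose 2 : ℕ) * (s * t) ^ p.2) := by
    funext n
    rw [mul_div_right_comm, detMoment_four hint hm1, gramCoeff_zero_mul_pow]
  have hg := hasSum_choose_mul_geometric_of_norm_lt_one 2 hst
  have he : HasSum (fun n : ℕ => (t * κ) ^ n / (n.factorial : ℝ)) (Real.exp (t * κ)) := by
    rw [Real.exp_eq_exp_ℝ]
    exact NormedSpace.expSeries_div_hasSum_exp (t * κ)
  have hprod := tsum_mul_tsum_eq_tsum_sum_antidiagonal_of_summable_norm he.summable.norm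
    hg.summable.norm
  have hsummable := (summable_norm_sum_mul_antidiagonal_of_summable_norm he.summable.norm
    hg.summable.norm).of_norm
  rw [hterm, ← mul_one_div, ← he.tsum_eq, ← hg.tsum_eq, hprod]
  exact hsummable.hasSum
end

section
/- Let μ be a Borel probability measure on ℝ with ∫|x|⁴ dμ < ∞ and m₁ = 0. Then for every n ∈ ℕ, f₄(n) = (n!)² · ∑_{j=0}^{n} (1/j!) · (m₄ − 3m₂²)ʲ · m₂^{2(n−j)} · C(n−j+2, 2). -/
/-!
Write `v = m₂²` and `κ = m₄ - 3 m₂²`. For a linear form `Y = ∑ a k * x k` in centered i.i.d. variables,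
`E Y² = m₂ ∑ a k ^ 2` and `E Y⁴ = 3 v (∑ a k ^ 2) ^ 2 + κ ∑ a k ^ 4` (`linForm_moments`).

The determinant is such a form in its first row, whose coefficients are, up to sign, the maximal
minors `c k` of the remaining `n × (n + 1)` matrix. With `W n = E (∑ c k ^ 2) ^ 2` (`gramMoment`),
integrating out the first row gives `f (n + 1) = 3 v W n + κ (n + 1) f n` (`detMoment_succ`).

To close the system, expand the square in `W (n + 1)`. The diagonal terms `E (c i) ^ 4` equal
`f (n + 1)`. For `i ≠ j` the minors `c i` and `c j` share all columns but one each; after transposing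
and permuting, integrating out these two independent columns yields `m₂ ∑ d k ^ 2` twice, where `d`
are the minors of the common part, so `E (c i) ^ 2 (c j) ^ 2 = v W n`. Hence
`W (n + 1) = (n + 2) f (n + 1) + (n + 2) (n + 1) v W n` (`gramMoment_succ`).

The solution is `f n = n!² [tⁿ] exp (κ t) / (1 - v t) ^ 3` and
`W n = n!² (n + 1) [tⁿ] exp (κ t) / (1 - v t) ^ 4`: the two recurrences become identities between
the coefficients of these series (`coef_two_succ`, `coef_three_succ`).
-/

open MeasureTheory

namespace DetFourth

open Matrix

/-! ### The closed form and its recurrences -/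

/-- Coefficient of `t ^ n` in `exp (κ t) / (1 - v t) ^ (r + 1)`. -/
noncomputable def coef (κ v : ℝ) (r n : ℕ) : ℝ :=
  ∑ j ∈ Finset.range (n + 1),
    (1 / (Nat.factorial j : ℝ)) * κ ^ j * v ^ (n - j) * (Nat.choose (n - j + r) r : ℝ)

lemma coef_zero (κ v : ℝ) (r : ℕ) : coef κ v r 0 = 1 := by
  simp [coef]

/-- Coefficient form of `(1 - v t) * (exp (κ t) / (1 - v t) ^ 4) = exp (κ t) / (1 - v t) ^ 3`. -/
lemma coef_three_succ (κ v : ℝ) (n : ℕ) :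
    coef κ v 3 (n + 1) = coef κ v 2 (n + 1) + v * coef κ v 3 n := by
  unfold coef
  rw [Finset.sum_range_succ _ (n + 1), Finset.sum_range_succ _ (n + 1), Finset.mul_sum,
    add_right_comm, ← Finset.sum_add_distrib]
  congr 1
  · refine Finset.sum_congr rfl fun j hj => ?_
    obtain ⟨k, rfl⟩ := Nat.exists_eq_add_of_le (Nat.lt_succ_iff.mp (Finset.mem_range.mp hj))
    have h1 : j + k + 1 - j = k + 1 := by omega
    have h2 : j + k - j = k := by omega
    rw [h1, h2, show k + 1 + 3 = (k + 3) + 1 by ring, Nat.choose_succ_succ,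
      show k + 1 + 2 = k + 3 by ring]
    push_cast
    ring
  · simp

/-- Coefficient form of `F' = κ F + 3 v exp (κ t) / (1 - v t) ^ 4` for
`F = exp (κ t) / (1 - v t) ^ 3`. -/
lemma coef_two_succ (κ v : ℝ) (n : ℕ) :
    ((n : ℝ) + 1) * coef κ v 2 (n + 1) = κ * coef κ v 2 n + 3 * v * coef κ v 3 n := by
  have hsplit : ((n : ℝ) + 1) * coef κ v 2 (n + 1) =
      (∑ j ∈ Finset.range (n + 2), (j : ℝ) * ((1 / (Nat.factorial j : ℝ)) * κ ^ j *
        v ^ (n + 1 - j) * (Nat.choose (n + 1 - j + 2) 2 : ℝ))) +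
      ∑ j ∈ Finset.range (n + 2), ((n + 1 - j : ℕ) : ℝ) * ((1 / (Nat.factorial j : ℝ)) * κ ^ j *
        v ^ (n + 1 - j) * (Nat.choose (n + 1 - j + 2) 2 : ℝ)) := by
    unfold coef
    rw [← Finset.sum_add_distrib, Finset.mul_sum]
    refine Finset.sum_congr rfl fun j hj => ?_
    have : j ≤ n + 1 := Nat.lt_succ_iff.mp (Finset.mem_range.mp hj)
    rw [Nat.cast_sub this]
    push_cast
    ring
  rw [hsplit]
  congr 1
  · rw [Finset.sum_range_succ', coef, Finset.mul_sum]
    simp only [Nat.cast_zero, zero_mul, add_zero]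
    refine Finset.sum_congr rfl fun j hj => ?_
    rw [Nat.factorial_succ, Nat.add_sub_add_right]
    have : (Nat.factorial j : ℝ) ≠ 0 := by positivity
    have : (j : ℝ) + 1 ≠ 0 := by positivity
    push_cast
    field_simp
    ring
  · rw [Finset.sum_range_succ, coef, Finset.mul_sum]
    simp only [Nat.sub_self, Nat.cast_zero, zero_mul, add_zero]
    refine Finset.sum_congr rfl fun j hj => ?_
    obtain ⟨k, rfl⟩ := Nat.exists_eq_add_of_le (Nat.lt_succ_iff.mp (Finset.mem_range.mp hj))
    have h1 : j + k + 1 - j = k + 1 := by omega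
    have h2 : j + k - j = k := by omega
    have h3 : ((k + 3).choose 2 : ℝ) * (k + 1) = (k + 3).choose 3 * 3 := by
      have := Nat.choose_succ_right_eq (k + 3) 2
      rw [show k + 3 - 2 = k + 1 by omega] at this
      exact_mod_cast this.symm
    rw [h1, h2, show k + 1 + 2 = k + 3 by ring]
    push_cast
    linear_combination (1 / (Nat.factorial j : ℝ)) * κ ^ j * v ^ (k + 1) * h3

/-! ### Moments of a random linear form -/

lemma integrable_pow_of_four {μ : Measure ℝ} [IsProbabilityMeasure μ]
    (hint : Integrable (fun x : ℝ => |x| ^ 4) μ) {r : ℕ} (hr : r ≤ 4) :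
    Integrable (fun x : ℝ => x ^ r) μ := by
  refine ((integrable_const (1 : ℝ)).add hint).mono' (by fun_prop) (.of_forall fun x => ?_)
  rw [norm_pow, Real.norm_eq_abs]
  simp only [Pi.add_apply]
  rcases le_total |x| 1 with h | h
  · have := pow_le_one₀ (abs_nonneg x) h (n := r)
    have : 0 ≤ |x| ^ 4 := by positivity
    linarith
  · have := pow_le_pow_right₀ h hr
    linarith

/-- The binomial recursion for the moments of `∑ k, a k * x k`, obtained by splitting off `x 0`. -/
lemma linForm_succ {μ : Measure ℝ} [IsProbabilityMeasure μ]
    (hint : Integrable (fun x : ℝ => |x| ^ 4) μ) {n : ℕ} (a : Fin (n + 1) → ℝ)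
    (ih : ∀ r ≤ 4, Integrable (fun x : Fin n → ℝ => (∑ k, a k.succ * x k) ^ r)
      (Measure.pi fun _ => μ)) {r : ℕ} (hr : r ≤ 4) :
    Integrable (fun x : Fin (n + 1) → ℝ => (∑ k, a k * x k) ^ r) (Measure.pi fun _ => μ) ∧
    ∫ x : Fin (n + 1) → ℝ, (∑ k, a k * x k) ^ r ∂(Measure.pi fun _ => μ) =
      ∑ i ∈ Finset.range (r + 1), (a 0 ^ i * r.choose i) * (mom μ i *
        ∫ x : Fin n → ℝ, (∑ k, a k.succ * x k) ^ (r - i) ∂(Measure.pi fun _ => μ)) := by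
  have mp := measurePreserving_piFinSuccAbove (fun _ : Fin (n + 1) => μ) 0
  have key : (fun x : Fin (n + 1) → ℝ => (∑ k, a k * x k) ^ r) =
      (fun p : ℝ × (Fin n → ℝ) => ∑ i ∈ Finset.range (r + 1), (a 0 ^ i * r.choose i) *
        (p.1 ^ i * (∑ k, a k.succ * p.2 k) ^ (r - i))) ∘
      (MeasurableEquiv.piFinSuccAbove (fun _ : Fin (n + 1) => ℝ) 0) := by
    funext x
    rw [Fin.sum_univ_succ, add_pow]
    simp only [Function.comp, MeasurableEquiv.piFinSuccAbove_apply, Fin.insertNthEquiv_zero,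
      Fin.consEquiv_symm_apply, Fin.tail]
    refine Finset.sum_congr rfl fun i _ => ?_
    ring
  have hI : ∀ i ∈ Finset.range (r + 1), Integrable (fun p : ℝ × (Fin n → ℝ) =>
      (a 0 ^ i * r.choose i) * (p.1 ^ i * (∑ k, a k.succ * p.2 k) ^ (r - i)))
      (μ.prod (Measure.pi fun _ => μ)) := fun i hi =>
    (Integrable.mul_prod (integrable_pow_of_four hint (by have := Finset.mem_range.mp hi; omega))
      (ih (r - i) (by omega))).const_mul _
  constructor
  · rw [key]
    exact mp.integrable_comp_of_integrable (integrable_finsetSum _ hI)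
  · rw [key]
    simp only [Function.comp_def]
    rw [mp.integral_comp' (g := fun p : ℝ × (Fin n → ℝ) => ∑ i ∈ Finset.range (r + 1),
      (a 0 ^ i * r.choose i) * (p.1 ^ i * (∑ k, a k.succ * p.2 k) ^ (r - i))),
      integral_finsetSum _ hI]
    refine Finset.sum_congr rfl fun i _ => ?_
    rw [integral_const_mul]
    exact congrArg _ (integral_prod_mul (fun x : ℝ => x ^ i)
      (fun x : Fin n → ℝ => (∑ k, a k.succ * x k) ^ (r - i)))

lemma linForm_integrable {μ : Measure ℝ} [IsProbabilityMeasure μ]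
    (hint : Integrable (fun x : ℝ => |x| ^ 4) μ) {n : ℕ} (a : Fin n → ℝ) {r : ℕ} (hr : r ≤ 4) :
    Integrable (fun x : Fin n → ℝ => (∑ k, a k * x k) ^ r) (Measure.pi fun _ => μ) := by
  induction n generalizing r with
  | zero => simp
  | succ n ih => exact (linForm_succ hint a (fun r hr => ih _ hr) hr).1

/-- The excess `m₄ - 3 m₂²`, i.e. the fourth cumulant of a centered law. -/
noncomputable def kap (μ : Measure ℝ) : ℝ := mom μ 4 - 3 * mom μ 2 ^ 2

lemma mom_zero (μ : Measure ℝ) [IsProbabilityMeasure μ] : mom μ 0 = 1 := by simp [mom]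

/-- The second and fourth moments of a linear form in centered i.i.d. variables; the correction to
the Gaussian value `3 m₂² (∑ a k ^ 2) ^ 2` is the cumulant term. -/
lemma linForm_moments {μ : Measure ℝ} [IsProbabilityMeasure μ]
    (hint : Integrable (fun x : ℝ => |x| ^ 4) μ) (hm1 : mom μ 1 = 0) {n : ℕ} (a : Fin n → ℝ) :
    ∫ x : Fin n → ℝ, (∑ k, a k * x k) ^ 2 ∂(Measure.pi fun _ => μ) = mom μ 2 * ∑ k, a k ^ 2 ∧
    ∫ x : Fin n → ℝ, (∑ k, a k * x k) ^ 4 ∂(Measure.pi fun _ => μ) =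
      3 * mom μ 2 ^ 2 * (∑ k, a k ^ 2) ^ 2 + kap μ * ∑ k, a k ^ 4 := by
  have h0 := mom_zero μ
  suffices H : ∫ x : Fin n → ℝ, (∑ k, a k * x k) ^ 1 ∂(Measure.pi fun _ => μ) = 0 ∧
      ∫ x : Fin n → ℝ, (∑ k, a k * x k) ^ 2 ∂(Measure.pi fun _ => μ) = mom μ 2 * ∑ k, a k ^ 2 ∧
      ∫ x : Fin n → ℝ, (∑ k, a k * x k) ^ 4 ∂(Measure.pi fun _ => μ) =
        3 * mom μ 2 ^ 2 * (∑ k, a k ^ 2) ^ 2 + kap μ * ∑ k, a k ^ 4 from H.2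
  induction n with
  | zero => simp
  | succ n ih =>
    obtain ⟨i1, i2, i4⟩ := ih fun k => a k.succ
    have hs := fun r (hr : r ≤ 4) => (linForm_succ hint a
      (fun r hr => linForm_integrable hint _ hr) hr).2
    have i0 : ∫ x : Fin n → ℝ, (∑ k, a k.succ * x k) ^ 0 ∂(Measure.pi fun _ => μ) = 1 := by simp
    refine ⟨?_, ?_, ?_⟩
    · rw [hs 1 (by norm_num)]
      simp only [Finset.sum_range_succ, Finset.sum_range_zero, Nat.reduceSub, i0, i1, hm1]
      ring
    · rw [hs 2 (by norm_num)]
      simp only [Finset.sum_range_succ, Finset.sum_range_zero, Nat.reduceSub, i0, i1, i2, hm1, h0,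
        Fin.sum_univ_succ, Nat.choose_self, Nat.choose_zero_right]
      push_cast
      ring
    · rw [hs 4 (by norm_num)]
      simp only [Finset.sum_range_succ, Finset.sum_range_zero, Nat.reduceSub, i0, i1, i2, i4, hm1,
        h0, Fin.sum_univ_succ, Nat.choose_self, Nat.choose_zero_right,
        show Nat.choose 4 2 = 6 from rfl, kap]
      push_cast
      ring

/-! ### Random matrices: splitting off a row, deleting rows and columns, transposing -/

/-- The law of an `m × n` matrix with i.i.d. entries of law `μ`. -/
noncomputable abbrev matLaw (μ : Measure ℝ) (m n : ℕ) : Measure (Fin m → Fin n → ℝ) :=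
  Measure.pi fun _ => Measure.pi fun _ => μ

section Law

variable (μ : Measure ℝ) [IsProbabilityMeasure μ]

lemma mp_cons (m n : ℕ) :
    MeasurePreserving (fun p : (Fin n → ℝ) × (Fin m → Fin n → ℝ) =>
      (Fin.cons p.1 p.2 : Fin (m + 1) → Fin n → ℝ))
      ((Measure.pi fun _ => μ).prod (matLaw μ m n)) (matLaw μ (m + 1) n) := by
  have := (measurePreserving_piFinSuccAbove
    (fun _ : Fin (m + 1) => Measure.pi fun _ : Fin n => μ) 0).symm
  convert this using 1
  funext p
  simp only [MeasurableEquiv.piFinSuccAbove, MeasurableEquiv.symm_mk, MeasurableEquiv.coe_mk,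
    Equiv.symm_symm, Fin.insertNthEquiv_zero]
  rfl

lemma integral_cons {m n : ℕ} {φ : (Fin (m + 1) → Fin n → ℝ) → ℝ}
    (hφ : Integrable φ (matLaw μ (m + 1) n)) :
    ∫ A, φ A ∂(matLaw μ (m + 1) n) =
      ∫ C, (∫ x, φ (Fin.cons x C) ∂(Measure.pi fun _ => μ)) ∂(matLaw μ m n) := by
  have mp := mp_cons μ m n
  rw [← mp.map_eq, integral_map mp.measurable.aemeasurable (by rw [mp.map_eq]; exact hφ.1),
    integral_prod_symm]
  exact mp.integrable_comp_of_integrable hφ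

lemma mp_deleteRow (m n : ℕ) (i : Fin (m + 1)) :
    MeasurePreserving (fun (A : Fin (m + 1) → Fin n → ℝ) k => A (i.succAbove k))
      (matLaw μ (m + 1) n) (matLaw μ m n) :=
  measurePreserving_snd.comp (measurePreserving_piFinSuccAbove
    (fun _ : Fin (m + 1) => Measure.pi fun _ : Fin n => μ) i)

lemma mp_deleteCol (m n : ℕ) (j : Fin (n + 1)) :
    MeasurePreserving (fun (A : Fin m → Fin (n + 1) → ℝ) k l => A k (j.succAbove l))
      (matLaw μ m (n + 1)) (matLaw μ m n) :=
  measurePreserving_pi _ _ fun _ => (measurePreserving_snd.comp (measurePreserving_piFinSuccAbove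
    (fun _ : Fin (n + 1) => μ) j) :
      MeasurePreserving (fun (x : Fin (n + 1) → ℝ) l => x (j.succAbove l)) _ _)

lemma mp_reindex {ι ι' X : Type*} [Fintype ι] [Fintype ι'] [MeasurableSpace X] (ν : Measure X)
    [SigmaFinite ν] (e : ι ≃ ι') :
    MeasurePreserving (fun (x : ι' → X) k => x (e k))
      (Measure.pi fun _ => ν) (Measure.pi fun _ => ν) := by
  have := measurePreserving_piCongrLeft (α := fun _ : ι => X) (fun _ => ν) e.symm
  convert this using 1
  funext x k
  obtain ⟨l, rfl⟩ := e.symm.surjective k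
  simp [MeasurableEquiv.coe_piCongrLeft, Equiv.piCongrLeft_apply_apply]

lemma mp_curry (m n : ℕ) :
    MeasurePreserving (MeasurableEquiv.curry (Fin m) (Fin n) ℝ)
      (Measure.pi fun _ => μ) (matLaw μ m n) := by
  refine ⟨(MeasurableEquiv.curry _ _ _).measurable, ?_⟩
  have := Measure.infinitePi_map_curry (fun (_ : Fin m) (_ : Fin n) => μ)
  simpa only [Measure.infinitePi_eq_pi] using this

lemma mp_transpose (m n : ℕ) :
    MeasurePreserving (fun (A : Fin m → Fin n → ℝ) k l => A l k)
      (matLaw μ m n) (matLaw μ n m) :=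
  (mp_curry μ n m).comp ((mp_reindex μ (Equiv.prodComm (Fin n) (Fin m))).comp
    (mp_curry μ m n).symm)

end Law

/-! ### Minors and their integrability -/

/-- The minor of an `n × (n + 1)` matrix obtained by deleting column `k`. -/
noncomputable def colMinor {n : ℕ} (C : Fin n → Fin (n + 1) → ℝ) (k : Fin (n + 1)) : ℝ :=
  det (of fun i j => C i (k.succAbove j))

/-- The minor of an `(n + 1) × n` matrix obtained by deleting row `k`. -/
noncomputable def rowMinor {n : ℕ} (A : Fin (n + 1) → Fin n → ℝ) (k : Fin (n + 1)) : ℝ :=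
  det (of fun i j => A (k.succAbove i) j)

lemma det_cons {n : ℕ} (x : Fin (n + 1) → ℝ) (C : Fin n → Fin (n + 1) → ℝ) :
    det (of (Fin.cons x C : Fin (n + 1) → Fin (n + 1) → ℝ)) =
      ∑ k : Fin (n + 1), ((-1) ^ (k : ℕ) * colMinor C k) * x k := by
  rw [det_succ_row_zero]
  refine Finset.sum_congr rfl fun k _ => ?_
  rw [mul_right_comm]
  rfl

lemma colMinor_transpose {n : ℕ} (A : Fin (n + 1) → Fin n → ℝ) (k : Fin (n + 1)) :
    colMinor (fun i j => A j i) k = rowMinor A k :=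
  det_transpose (of fun i j => A (k.succAbove i) j)

/-- Permuting the rows permutes the row minors, up to sign. -/
lemma rowMinor_perm_sq {n : ℕ} (A : Fin (n + 1) → Fin n → ℝ) (σ : Equiv.Perm (Fin (n + 1)))
    (i : Fin (n + 1)) : rowMinor (fun k => A (σ k)) i ^ 2 = rowMinor A (σ i) ^ 2 := by
  have h : ∀ k : Fin n, ∃ l, (σ i).succAbove l = σ (i.succAbove k) := fun k =>
    Fin.exists_succAbove_eq (by simp [Fin.succAbove_ne])
  choose τ hτ using h
  have hinj : Function.Injective τ := fun a b hab => by
    have := hτ a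
    rw [hab, hτ b] at this
    exact Fin.succAbove_right_injective (σ.injective this.symm)
  let e : Equiv.Perm (Fin n) := Equiv.ofBijective τ (Finite.injective_iff_bijective.mp hinj)
  have : rowMinor (fun k => A (σ k)) i = ((Equiv.Perm.sign e : ℤ) : ℝ) * rowMinor A (σ i) := by
    unfold rowMinor
    rw [← det_permute]
    congr 1
    ext k l
    change A (σ (i.succAbove k)) l = A ((σ i).succAbove (τ k)) l
    rw [hτ]
  rw [this, mul_pow]
  rcases Int.units_eq_one_or (Equiv.Perm.sign e) with h | h <;> simp [h]

lemma memLp_four_iff {α : Type*} [MeasurableSpace α] {ν : Measure α} {f : α → ℝ}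
    (hf : AEStronglyMeasurable f ν) : MemLp f 4 ν ↔ Integrable (fun x => f x ^ 4) ν := by
  rw [← integrable_norm_rpow_iff hf (by norm_num) (by norm_num)]
  refine integrable_congr (.of_forall fun x => ?_)
  have : (4 : ENNReal).toReal = ((4 : ℕ) : ℝ) := by norm_num
  simp only [this, Real.rpow_natCast, Real.norm_eq_abs]
  exact Even.pow_abs (by decide) _

lemma integrable_sq_mul_sq {α : Type*} [MeasurableSpace α] {ν : Measure α} {f g : α → ℝ}
    (hf : MemLp f 4 ν) (hg : MemLp g 4 ν) : Integrable (fun x => f x ^ 2 * g x ^ 2) ν := by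
  refine (((memLp_four_iff hf.1).mp hf).add ((memLp_four_iff hg.1).mp hg)).mono'
    ((hf.1.pow 2).mul (hg.1.pow 2)) (.of_forall fun x => ?_)
  rw [Real.norm_of_nonneg (by positivity)]
  simp only [Pi.add_apply]
  nlinarith [sq_nonneg (f x ^ 2 - g x ^ 2), sq_nonneg (f x ^ 2 + g x ^ 2)]

lemma integral_comp_mp {α β : Type*} [MeasurableSpace α] [MeasurableSpace β] {ν : Measure α}
    {ν' : Measure β} {g : α → β} (hg : MeasurePreserving g ν ν') {φ : β → ℝ}
    (hφ : AEStronglyMeasurable φ ν') : ∫ x, φ (g x) ∂ν = ∫ y, φ y ∂ν' := by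
  rw [← hg.map_eq, integral_map hg.measurable.aemeasurable (by rwa [hg.map_eq])]

lemma continuous_colMinor {n : ℕ} (k : Fin (n + 1)) :
    Continuous fun C : Fin n → Fin (n + 1) → ℝ => colMinor C k :=
  Continuous.matrix_det (continuous_matrix fun i j => by simp only [of_apply]; fun_prop)

lemma continuous_rowMinor {n : ℕ} (k : Fin (n + 1)) :
    Continuous fun C : Fin (n + 1) → Fin n → ℝ => rowMinor C k :=
  Continuous.matrix_det (continuous_matrix fun i j => by simp only [of_apply]; fun_prop)

lemma continuous_det_of {n : ℕ} :
    Continuous fun A : Fin n → Fin n → ℝ => det (of A) :=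
  Continuous.matrix_det (continuous_matrix fun i j => by simp only [of_apply]; fun_prop)

section Moments

variable {μ : Measure ℝ} [IsProbabilityMeasure μ]

/-- The fourth power of the determinant is integrable: in the Laplace expansion along the first row
each entry is independent of its minor. -/
lemma memLp_det (hint : Integrable (fun x : ℝ => |x| ^ 4) μ) (n : ℕ) :
    MemLp (fun A : Fin n → Fin n → ℝ => det (of A)) 4 (matLaw μ n n) := by
  induction n with
  | zero => simp
  | succ n ih =>
    have mp := mp_cons μ n (n + 1)
    rw [← mp.map_eq, memLp_map_measure_iff continuous_det_of.aestronglyMeasurable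
      mp.measurable.aemeasurable]
    have : ((fun A : Fin (n + 1) → Fin (n + 1) → ℝ => det (of A)) ∘
        fun p : (Fin (n + 1) → ℝ) × (Fin n → Fin (n + 1) → ℝ) => Fin.cons p.1 p.2) =
        fun p => ∑ k : Fin (n + 1), (-1) ^ (k : ℕ) * (p.1 k * colMinor p.2 k) := by
      funext p
      simp only [Function.comp]
      rw [det_cons]
      exact Finset.sum_congr rfl fun k _ => by ring
    rw [this]
    refine memLp_finsetSum _ fun k _ => MemLp.const_mul ?_ _
    have hc : Continuous fun p : (Fin (n + 1) → ℝ) × (Fin n → Fin (n + 1) → ℝ) =>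
        p.1 k * colMinor p.2 k := by
      have := (continuous_colMinor k).comp
        (continuous_snd (X := Fin (n + 1) → ℝ) (Y := Fin n → Fin (n + 1) → ℝ))
      exact ((continuous_apply k).comp continuous_fst).mul this
    rw [memLp_four_iff hc.aestronglyMeasurable]
    simp_rw [mul_pow]
    refine Integrable.mul_prod (f := fun x : Fin (n + 1) → ℝ => x k ^ 4)
      (g := fun C : Fin n → Fin (n + 1) → ℝ => colMinor C k ^ 4) ?_ ?_
    · exact (measurePreserving_eval (fun _ : Fin (n + 1) => μ) k).integrable_comp_of_integrable
        (g := fun x : ℝ => x ^ 4) (integrable_pow_of_four hint le_rfl)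
    · exact (mp_deleteCol μ n n k).integrable_comp_of_integrable
        ((memLp_four_iff ih.1).mp ih)

lemma memLp_colMinor (hint : Integrable (fun x : ℝ => |x| ^ 4) μ) {n : ℕ} (k : Fin (n + 1)) :
    MemLp (fun C : Fin n → Fin (n + 1) → ℝ => colMinor C k) 4 (matLaw μ n (n + 1)) :=
  (memLp_det hint n).comp_measurePreserving (mp_deleteCol μ n n k)

lemma memLp_rowMinor (hint : Integrable (fun x : ℝ => |x| ^ 4) μ) {n : ℕ} (k : Fin (n + 1)) :
    MemLp (fun A : Fin (n + 1) → Fin n → ℝ => rowMinor A k) 4 (matLaw μ (n + 1) n) :=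
  (memLp_det hint n).comp_measurePreserving (mp_deleteRow μ n n k)

/-! ### The coupled recurrences -/

/-- Second moment of the Gram determinant of an `n × (n + 1)` random matrix, the Gram determinant
being written, by Cauchy–Binet, as the sum of the squares of the maximal minors. -/
noncomputable def gramMoment (μ : Measure ℝ) (n : ℕ) : ℝ :=
  ∫ C, (∑ k, colMinor C k ^ 2) ^ 2 ∂(matLaw μ n (n + 1))

lemma integral_det_cons (hint : Integrable (fun x : ℝ => |x| ^ 4) μ) (hm1 : mom μ 1 = 0) {n : ℕ}
    (C : Fin n → Fin (n + 1) → ℝ) :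
    ∫ x, det (of (Fin.cons x C : Fin (n + 1) → Fin (n + 1) → ℝ)) ^ 2 ∂(Measure.pi fun _ => μ) =
      mom μ 2 * ∑ k, colMinor C k ^ 2 ∧
    ∫ x, det (of (Fin.cons x C : Fin (n + 1) → Fin (n + 1) → ℝ)) ^ 4 ∂(Measure.pi fun _ => μ) =
      3 * mom μ 2 ^ 2 * (∑ k, colMinor C k ^ 2) ^ 2 + kap μ * ∑ k, colMinor C k ^ 4 := by
  have h := linForm_moments hint hm1 fun k : Fin (n + 1) => (-1) ^ (k : ℕ) * colMinor C k
  have hsgn : ∀ k : ℕ, ((-1 : ℝ) ^ k) ^ 2 = 1 ∧ ((-1 : ℝ) ^ k) ^ 4 = 1 := fun k => by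
    rcases neg_one_pow_eq_or ℝ k with h | h <;> norm_num [h]
  simpa only [det_cons, mul_pow, (hsgn _).1, (hsgn _).2, one_mul] using h

lemma integral_colMinor_four {n : ℕ} (k : Fin (n + 1)) :
    ∫ C, colMinor C k ^ 4 ∂(matLaw μ n (n + 1)) = detMoment μ 4 n :=
  integral_comp_mp (mp_deleteCol μ n n k) (continuous_det_of.pow 4).aestronglyMeasurable

lemma integrable_gram (hint : Integrable (fun x : ℝ => |x| ^ 4) μ) (n : ℕ) :
    Integrable (fun C : Fin n → Fin (n + 1) → ℝ => (∑ k, colMinor C k ^ 2) ^ 2)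
      (matLaw μ n (n + 1)) := by
  simp_rw [sq (∑ k, _), Finset.sum_mul_sum]
  exact integrable_finsetSum _ fun i _ => integrable_finsetSum _ fun j _ =>
    integrable_sq_mul_sq (memLp_colMinor hint i) (memLp_colMinor hint j)

/-- Integrating out the first row of the matrix. -/
lemma detMoment_succ (hint : Integrable (fun x : ℝ => |x| ^ 4) μ) (hm1 : mom μ 1 = 0) (n : ℕ) :
    detMoment μ 4 (n + 1) =
      3 * mom μ 2 ^ 2 * gramMoment μ n + kap μ * ((n + 1) * detMoment μ 4 n) := by
  have hd := memLp_det hint (n + 1)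
  have hc : ∀ k : Fin (n + 1), Integrable (fun C : Fin n → Fin (n + 1) → ℝ => colMinor C k ^ 4)
      (matLaw μ n (n + 1)) := fun k =>
    (memLp_four_iff (memLp_colMinor hint k).1).mp (memLp_colMinor hint k)
  rw [detMoment, integral_cons μ ((memLp_four_iff hd.1).mp hd)]
  simp_rw [(integral_det_cons hint hm1 _).2]
  rw [integral_add ((integrable_gram hint n).const_mul _)
    ((integrable_finsetSum _ fun k _ => hc k).const_mul _), integral_const_mul, integral_const_mul,
    integral_finsetSum _ fun k _ => hc k]
  simp [integral_colMinor_four, gramMoment]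

/-- Two distinct row minors share all rows but one each; integrating out these two independent rows
leaves the Gram determinant of the common rows. -/
lemma integral_rowMinor_zero_one (hint : Integrable (fun x : ℝ => |x| ^ 4) μ) (hm1 : mom μ 1 = 0)
    (n : ℕ) :
    ∫ A, rowMinor A 0 ^ 2 * rowMinor A 1 ^ 2 ∂(matLaw μ (n + 2) (n + 1)) =
      mom μ 2 ^ 2 * gramMoment μ n := by
  rw [integral_cons μ (integrable_sq_mul_sq (memLp_rowMinor hint 0) (memLp_rowMinor hint 1))]
  have h0 : ∀ (x : Fin (n + 1) → ℝ) (B : Fin (n + 1) → Fin (n + 1) → ℝ),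
      rowMinor (Fin.cons x B : Fin (n + 2) → Fin (n + 1) → ℝ) 0 = det (of B) := fun x B => rfl
  have h1 : ∀ (x : Fin (n + 1) → ℝ) (B : Fin (n + 1) → Fin (n + 1) → ℝ),
      rowMinor (Fin.cons x B : Fin (n + 2) → Fin (n + 1) → ℝ) 1 =
        det (of (Fin.cons x (fun k => B k.succ) : Fin (n + 1) → Fin (n + 1) → ℝ)) := by
    intro x B
    unfold rowMinor
    congr 1
    ext i j
    refine Fin.cases ?_ (fun i => ?_) i
    · simp
    · simp [Fin.one_succAbove_succ]
  simp_rw [h0, h1, integral_const_mul, (integral_det_cons hint hm1 _).1]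
  have hi : Integrable (fun B : Fin (n + 1) → Fin (n + 1) → ℝ =>
      det (of B) ^ 2 * (mom μ 2 * ∑ k, colMinor (fun i => B i.succ) k ^ 2))
      (matLaw μ (n + 1) (n + 1)) := by
    simp_rw [mul_left_comm _ (mom μ 2), Finset.mul_sum (Finset.univ) _ (_ ^ 2)]
    refine (integrable_finsetSum _ fun k _ => ?_).const_mul _
    exact integrable_sq_mul_sq (memLp_det hint _)
      ((memLp_colMinor hint k).comp_measurePreserving (mp_deleteRow μ n (n + 1) 0))
  rw [integral_cons μ hi]
  simp_rw [Fin.cons_succ, integral_mul_const, (integral_det_cons hint hm1 _).1]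
  rw [gramMoment, ← integral_const_mul]
  congr 1
  funext C
  ring

/-- By symmetry under transposition and row permutations, all mixed terms agree. -/
lemma integral_colMinor_cross (hint : Integrable (fun x : ℝ => |x| ^ 4) μ) (hm1 : mom μ 1 = 0)
    {n : ℕ} {i j : Fin (n + 2)} (hij : i ≠ j) :
    ∫ C, colMinor C i ^ 2 * colMinor C j ^ 2 ∂(matLaw μ (n + 1) (n + 2)) =
      mom μ 2 ^ 2 * gramMoment μ n := by
  have hσ : ∃ σ : Equiv.Perm (Fin (n + 2)), σ 0 = i ∧ σ 1 = j := by
    have h : Equiv.swap 0 i j ≠ 0 := fun h => hij (by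
      have := congrArg (Equiv.swap 0 i) h
      simpa using this.symm)
    refine ⟨Equiv.swap 0 i * Equiv.swap 1 (Equiv.swap 0 i j), ?_, ?_⟩
    · rw [Equiv.Perm.mul_apply, Equiv.swap_apply_of_ne_of_ne (by simp) h.symm]
      simp
    · simp
  obtain ⟨σ, rfl, rfl⟩ := hσ
  rw [← integral_rowMinor_zero_one hint hm1,
    ← integral_comp_mp (mp_transpose μ (n + 2) (n + 1))
      (φ := fun C => colMinor C (σ 0) ^ 2 * colMinor C (σ 1) ^ 2) (((continuous_colMinor _).pow 2).mul
      ((continuous_colMinor _).pow 2)).aestronglyMeasurable,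
    ← integral_comp_mp (mp_reindex (Measure.pi fun _ : Fin (n + 1) => μ) σ)
      (φ := fun A => rowMinor A 0 ^ 2 * rowMinor A 1 ^ 2)
      (((continuous_rowMinor 0).pow 2).mul ((continuous_rowMinor 1).pow 2)).aestronglyMeasurable]
  simp_rw [rowMinor_perm_sq, colMinor_transpose]

lemma gramMoment_succ (hint : Integrable (fun x : ℝ => |x| ^ 4) μ) (hm1 : mom μ 1 = 0) (n : ℕ) :
    gramMoment μ (n + 1) = (n + 2) * detMoment μ 4 (n + 1) +
      (n + 2) * (n + 1) * (mom μ 2 ^ 2 * gramMoment μ n) := by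
  have hi : ∀ i j : Fin (n + 2), Integrable (fun C : Fin (n + 1) → Fin (n + 2) → ℝ =>
      colMinor C i ^ 2 * colMinor C j ^ 2) (matLaw μ (n + 1) (n + 2)) := fun i j =>
    integrable_sq_mul_sq (memLp_colMinor hint i) (memLp_colMinor hint j)
  have hv : ∀ i j : Fin (n + 2),
      ∫ C, colMinor C i ^ 2 * colMinor C j ^ 2 ∂(matLaw μ (n + 1) (n + 2)) =
      mom μ 2 ^ 2 * gramMoment μ n +
        if i = j then detMoment μ 4 (n + 1) - mom μ 2 ^ 2 * gramMoment μ n else 0 := by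
    intro i j
    split_ifs with h
    · subst h
      rw [← integral_colMinor_four i, add_sub_cancel]
      simp_rw [← pow_add]
    · rw [integral_colMinor_cross hint hm1 h, add_zero]
  rw [gramMoment]
  simp_rw [sq (∑ k, _), Finset.sum_mul_sum]
  rw [integral_finsetSum _ fun i _ => integrable_finsetSum _ fun j _ => hi i j]
  simp_rw [integral_finsetSum _ fun j _ => hi _ j, hv, Finset.sum_add_distrib]
  simp
  ring

lemma closed_form (hint : Integrable (fun x : ℝ => |x| ^ 4) μ) (hm1 : mom μ 1 = 0) (n : ℕ) :
    detMoment μ 4 n = (Nat.factorial n : ℝ) ^ 2 * coef (kap μ) (mom μ 2 ^ 2) 2 n ∧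
    gramMoment μ n =
      (Nat.factorial n : ℝ) ^ 2 * (n + 1) * coef (kap μ) (mom μ 2 ^ 2) 3 n := by
  induction n with
  | zero => simp [coef_zero, detMoment, gramMoment, colMinor]
  | succ n ih =>
    have hf : detMoment μ 4 (n + 1) =
        (Nat.factorial (n + 1) : ℝ) ^ 2 * coef (kap μ) (mom μ 2 ^ 2) 2 (n + 1) := by
      rw [detMoment_succ hint hm1, ih.1, ih.2, Nat.factorial_succ]
      push_cast
      linear_combination (-(Nat.factorial n : ℝ) ^ 2 * (n + 1)) *
        coef_two_succ (kap μ) (mom μ 2 ^ 2) n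
    refine ⟨hf, ?_⟩
    rw [gramMoment_succ hint hm1, hf, ih.2, coef_three_succ, Nat.factorial_succ]
    push_cast
    ring

end Moments

end DetFourth

theorem fourth_moment_centered (μ : Measure ℝ) [IsProbabilityMeasure μ]
    (hint : Integrable (fun x : ℝ => |x| ^ 4) μ) (hm1 : mom μ 1 = 0) (n : ℕ) :
    detMoment μ 4 n = (Nat.factorial n : ℝ) ^ 2 *
      ∑ j ∈ Finset.range (n + 1),
        (1 / (Nat.factorial j : ℝ)) * (mom μ 4 - 3 * (mom μ 2) ^ 2) ^ j *
          (mom μ 2) ^ (2 * (n - j)) * (Nat.choose (n - j + 2) 2 : ℝ) := by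
  rw [(DetFourth.closed_form hint hm1 n).1, DetFourth.coef]
  simp_rw [DetFourth.kap, pow_mul]
end

section
/- Let the n² entries of an n × n random matrix A be i.i.d. standard Gaussian random variables, i.e., let P_n be the product probability measure on Fin n → Fin n → ℝ with each coordinate distributed as gaussianReal 0 1. Then for every m ∈ ℕ, ∫ (det A)^{2m} dP_n(A) = ∏_{j=0}^{m−1} (n+2j)! / (2j)! (as a product of real numbers). -/
open MeasureTheory ProbabilityTheory

/-!
The moments are computed by peeling off the first row. For a fixed first row `r`, a reflection `ρ`
of Euclidean space carries `r` to `‖r‖ e₀`. Applying `ρ` to every row changes the determinant only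
by a sign, and by rotation invariance the rows other than the first remain independent standard
Gaussian vectors. Expanding along the new first row, `det A ^ 2` becomes `‖r‖ ^ 2` times the squared
determinant of an `n × n` standard Gaussian matrix (`exists_det_cons_sq`). Hence the moments of an
`(n + 1) × (n + 1)` matrix are those of an `n × n` matrix times those of `‖r‖ ^ 2`, a chi-squared
variable with `n + 1` degrees of freedom.

The `m`-th moment of a chi-squared variable with `n` degrees of freedom is
`n (n + 2) ⋯ (n + 2 (m - 1))` (`lintegral_sum_sq_pow`): for `n = 1` this is a Gamma integral, and
adding a degree of freedom is the Vandermonde identity for these products (`stepTwo_add`).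

The induction is carried out with Lebesgue integrals of nonnegative functions, so that Tonelli's
theorem applies without integrability conditions.
-/

/-- The product `a (a + 2) ⋯ (a + 2 (m - 1))` of `m` factors, a rising factorial with step two. -/
noncomputable def stepTwo (m : ℕ) (a : ℝ) : ℝ := ∏ j ∈ Finset.range m, (a + 2 * j)

lemma stepTwo_nonneg (m : ℕ) {a : ℝ} (ha : 0 ≤ a) : 0 ≤ stepTwo m a :=
  Finset.prod_nonneg fun _ _ => by positivity

lemma stepTwo_succ (m : ℕ) (a : ℝ) : stepTwo (m + 1) a = stepTwo m a * (a + 2 * m) := by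
  simp [stepTwo, Finset.prod_range_succ]

/-- The Vandermonde identity for rising factorials with step two. -/
lemma stepTwo_add (m : ℕ) (a b : ℝ) :
    ∑ ij ∈ Finset.HasAntidiagonal.antidiagonal m, (m.choose ij.1 : ℝ) * (stepTwo ij.1 a * stepTwo ij.2 b) =
      stepTwo m (a + b) := by
  induction m with
  | zero => simp [stepTwo]
  | succ m ih =>
    rw [Finset.sum_antidiagonal_choose_succ_mul (fun i j => stepTwo i a * stepTwo j b),
      ← Finset.sum_add_distrib, stepTwo_succ, ← ih, Finset.sum_mul]
    refine Finset.sum_congr rfl fun ij hij => ?_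
    have h := Finset.HasAntidiagonal.mem_antidiagonal.1 hij
    have hm : (m : ℝ) = ij.1 + ij.2 := by exact_mod_cast h.symm
    rw [Nat.choose_symm_of_eq_add h.symm, stepTwo_succ, stepTwo_succ, hm]
    ring

lemma doubleFactorial_eq_stepTwo (m : ℕ) :
    ((Nat.doubleFactorial (2 * m - 1) : ℕ) : ℝ) = stepTwo m 1 := by
  induction m with
  | zero => simp [stepTwo]
  | succ m ih =>
    rw [stepTwo_succ, ← ih]
    rcases m with _ | m
    · simp
    · rw [show 2 * (m + 1 + 1) - 1 = (2 * m + 1) + 2 by omega, Nat.doubleFactorial_add_two,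
        show 2 * (m + 1) - 1 = 2 * m + 1 by omega]
      push_cast
      ring

lemma integral_gaussian_even (m : ℕ) :
    ∫ x, x ^ (2 * m) ∂(gaussianReal 0 1) = stepTwo m 1 := by
  rw [integral_gaussianReal_eq_integral_smul one_ne_zero]
  let f : ℝ → ℝ := fun y =>
    (√(2 * Real.pi))⁻¹ * (y ^ ((2 * m : ℕ) : ℝ) * Real.exp (-(1 / 2) * y ^ (2 : ℝ)))
  have h1 : ∀ x : ℝ, gaussianPDFReal 0 1 x • x ^ (2 * m) = f |x| := by
    intro x
    simp only [f, gaussianPDFReal, smul_eq_mul, NNReal.coe_one, mul_one, sub_zero, Real.rpow_natCast,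
      Real.rpow_two, sq_abs, pow_mul]
    ring_nf
  simp_rw [h1]
  rw [integral_comp_abs (f := f), integral_const_mul,
    integral_rpow_mul_exp_neg_mul_rpow (by norm_num)
      (lt_of_lt_of_le (by norm_num) (Nat.cast_nonneg _)) (by norm_num),
    show ((((2 * m : ℕ) : ℝ)) + 1) / 2 = m + 1 / 2 by push_cast; ring, Real.Gamma_nat_add_half,
    doubleFactorial_eq_stepTwo, one_div, Real.inv_rpow (by norm_num),
    show -(((2 * m : ℕ) : ℝ) + 1) / 2 = -(m + 1 / 2) by push_cast; ring,
    Real.rpow_neg (by norm_num), inv_inv, Real.rpow_add (by norm_num), Real.rpow_natCast,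
    ← Real.sqrt_eq_rpow, Real.sqrt_mul (by norm_num)]
  field_simp

lemma lintegral_gaussian_even (m : ℕ) :
    ∫⁻ x, ENNReal.ofReal ((x ^ 2) ^ m) ∂(gaussianReal 0 1) = ENNReal.ofReal (stepTwo m 1) := by
  rw [← integral_gaussian_even, ofReal_integral_eq_lintegral_ofReal]
  · simp_rw [pow_mul]
  · have h := (memLp_id_gaussianReal (μ := 0) (v := 1) (2 * m : ℕ)).integrable_norm_pow'
    simpa [pow_mul] using h
  · exact ae_of_all _ fun x => by simp only [pow_mul, Pi.zero_apply]; positivity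

/-- The `m`-th moment of the chi-squared law with `n` degrees of freedom. -/
lemma lintegral_sum_sq_pow (n m : ℕ) :
    ∫⁻ x : Fin n → ℝ, ENNReal.ofReal ((∑ i, x i ^ 2) ^ m)
      ∂(Measure.pi fun _ : Fin n => gaussianReal 0 1) = ENNReal.ofReal (stepTwo m n) := by
  induction n generalizing m with
  | zero =>
    rcases m with _ | m
    · simp [stepTwo]
    · -- Both sides vanish: the factor `j = 0` of `stepTwo (m + 1) 0` is zero.
      simp [stepTwo, Finset.prod_range_succ']
  | succ n ih =>
    have hmp := (measurePreserving_piFinSuccAbove (fun _ : Fin (n + 1) => gaussianReal 0 1) 0)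
    have h := hmp.lintegral_comp
      (f := fun p : ℝ × (Fin n → ℝ) => ENNReal.ofReal ((p.1 ^ 2 + ∑ i, p.2 i ^ 2) ^ m))
      (by fun_prop)
    have h2 : ∀ x : Fin (n + 1) → ℝ, ∑ i, x i ^ 2 = x 0 ^ 2 + ∑ i : Fin n, x i.succ ^ 2 :=
      fun x => Fin.sum_univ_succ _
    simp_rw [h2]
    refine Eq.trans h ?_
    have h3 : ∀ p : ℝ × (Fin n → ℝ), ENNReal.ofReal ((p.1 ^ 2 + ∑ i, p.2 i ^ 2) ^ m) =
        ∑ ij ∈ Finset.HasAntidiagonal.antidiagonal m, ENNReal.ofReal (m.choose ij.1) *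
          (ENNReal.ofReal ((p.1 ^ 2) ^ ij.1) * ENNReal.ofReal ((∑ i, p.2 i ^ 2) ^ ij.2)) := by
      intro p
      have hs : 0 ≤ ∑ i, p.2 i ^ 2 := Finset.sum_nonneg fun _ _ => sq_nonneg _
      rw [(Commute.all _ _).add_pow', ENNReal.ofReal_sum_of_nonneg fun _ _ => by positivity]
      refine Finset.sum_congr rfl fun ij _ => ?_
      rw [nsmul_eq_mul, ENNReal.ofReal_mul (by positivity), ENNReal.ofReal_mul (by positivity)]
    simp_rw [h3]
    rw [lintegral_finsetSum _ fun _ _ => by fun_prop, add_comm (n : ℕ) 1, Nat.cast_add,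
      Nat.cast_one, ← stepTwo_add,
      ENNReal.ofReal_sum_of_nonneg fun ij _ => mul_nonneg (Nat.cast_nonneg _)
        (mul_nonneg (stepTwo_nonneg _ zero_le_one) (stepTwo_nonneg _ (Nat.cast_nonneg _)))]
    refine Finset.sum_congr rfl fun ij _ => ?_
    rw [lintegral_const_mul _ (by fun_prop), ENNReal.ofReal_mul (Nat.cast_nonneg _),
      ENNReal.ofReal_mul (stepTwo_nonneg _ zero_le_one), ← ih, ← lintegral_gaussian_even]
    congr 1
    exact lintegral_prod_mul (f := fun x : ℝ => ENNReal.ofReal ((x ^ 2) ^ ij.1))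
      (g := fun x : Fin n → ℝ => ENNReal.ofReal ((∑ i, x i ^ 2) ^ ij.2))
      (by fun_prop) (Measurable.aemeasurable (by fun_prop))

/-- Rotation invariance of the standard Gaussian measure, stated for the product measure on
`Fin n → ℝ`. -/
lemma measurePreserving_isometry {n : ℕ}
    (ρ : EuclideanSpace ℝ (Fin n) ≃ₗᵢ[ℝ] EuclideanSpace ℝ (Fin n)) :
    MeasurePreserving (fun x : Fin n → ℝ => (ρ (WithLp.toLp 2 x)).ofLp)
      (Measure.pi fun _ => gaussianReal 0 1) (Measure.pi fun _ => gaussianReal 0 1) := by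
  have h1 : MeasurePreserving (WithLp.toLp 2) (Measure.pi fun _ : Fin n => gaussianReal 0 1)
      (stdGaussian (EuclideanSpace ℝ (Fin n))) := ⟨by fun_prop, map_pi_eq_stdGaussian⟩
  have h2 : MeasurePreserving ρ (stdGaussian (EuclideanSpace ℝ (Fin n)))
      (stdGaussian (EuclideanSpace ℝ (Fin n))) :=
    ⟨ρ.continuous.measurable, stdGaussian_map ρ⟩
  have h3 : MeasurePreserving (WithLp.ofLp) (stdGaussian (EuclideanSpace ℝ (Fin n)))
      (Measure.pi fun _ : Fin n => gaussianReal 0 1) :=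
    MeasurePreserving.symm (MeasurableEquiv.toLp 2 (Fin n → ℝ)) h1
  exact h3.comp (h2.comp h1)

lemma measurePreserving_tail (n : ℕ) :
    MeasurePreserving (fun (x : Fin (n + 1) → ℝ) (i : Fin n) => x i.succ)
      (Measure.pi fun _ => gaussianReal 0 1) (Measure.pi fun _ => gaussianReal 0 1) :=
  measurePreserving_snd.comp
    (measurePreserving_piFinSuccAbove (fun _ : Fin (n + 1) => gaussianReal 0 1) 0)

/-- Once the first row `r` is fixed, the squared determinant is `‖r‖ ^ 2` times that of a smaller
square matrix, whose rows are images of the remaining rows under one map that preserves Gaussian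
measure: rotate `r` onto the first coordinate axis, then drop the first coordinate. -/
lemma exists_det_cons_sq {n : ℕ} (r : Fin (n + 1) → ℝ) :
    ∃ g : (Fin (n + 1) → ℝ) → (Fin n → ℝ),
      MeasurePreserving g (Measure.pi fun _ => gaussianReal 0 1)
        (Measure.pi fun _ => gaussianReal 0 1) ∧
      ∀ B : Fin n → Fin (n + 1) → ℝ,
        Matrix.det (Matrix.of (Fin.cons r B : Fin (n + 1) → Fin (n + 1) → ℝ)) ^ 2 =
          (∑ i, r i ^ 2) * Matrix.det (Matrix.of fun i => g (B i)) ^ 2 := by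
  set v : EuclideanSpace ℝ (Fin (n + 1)) := WithLp.toLp 2 r with hv
  set w : EuclideanSpace ℝ (Fin (n + 1)) := EuclideanSpace.single 0 ‖v‖ with hw
  set ρ := (ℝ ∙ (v - w))ᗮ.reflection with hρ
  have hρv : ρ v = w := Submodule.reflection_sub (by simp [hw])
  refine ⟨fun x i => (ρ (WithLp.toLp 2 x)).ofLp i.succ,
    (measurePreserving_tail n).comp (measurePreserving_isometry ρ), fun B => ?_⟩
  let L : (Fin (n + 1) → ℝ) →ₗ[ℝ] (Fin (n + 1) → ℝ) :=
    (WithLp.linearEquiv 2 ℝ _).toLinearMap ∘ₗ ρ.toLinearEquiv.toLinearMap ∘ₗ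
      (WithLp.linearEquiv 2 ℝ _).symm.toLinearMap
  have hL : ∀ x, L x = (ρ (WithLp.toLp 2 x)).ofLp := fun x => rfl
  set M := LinearMap.toMatrix' L
  -- A reflection is an involution, so its determinant squares to one.
  have hM : M.det ^ 2 = 1 := by
    have : L ∘ₗ L = LinearMap.id := by
      ext1 x
      ext1
      simp [hL, hρ]
    rw [sq, ← Matrix.det_mul, ← LinearMap.toMatrix'_comp, this, LinearMap.toMatrix'_id,
      Matrix.det_one]
  set A : Matrix (Fin (n + 1)) (Fin (n + 1)) ℝ := Matrix.of (Fin.cons r B) with hA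
  have hrow : ∀ i j, (A * M.transpose) i j = (ρ (WithLp.toLp 2 (A i))).ofLp j := by
    intro i j
    rw [← hL, ← LinearMap.toMatrix'_mulVec L, Matrix.mul_apply, Matrix.mulVec, dotProduct]
    exact Finset.sum_congr rfl fun k _ => mul_comm _ _
  have hrow0 : ∀ j, (A * M.transpose) 0 j = if j = 0 then ‖v‖ else 0 := by
    intro j
    rw [hrow]
    change (ρ v).ofLp j = _
    rw [hρv, hw]
    simp
  have hdet : (A * M.transpose).det =
      ‖v‖ * Matrix.det (Matrix.of fun i j => (ρ (WithLp.toLp 2 (B i))).ofLp j.succ) := by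
    rw [Matrix.det_succ_row_zero, Finset.sum_eq_single 0]
    · rw [hrow0]
      simp only [Fin.val_zero, pow_zero, one_mul, if_true]
      congr 2
      ext i j
      exact hrow _ _
    · intro j _ hj
      simp [hrow0, hj]
    · simp
  calc A.det ^ 2 = (A * M.transpose).det ^ 2 := by
        rw [Matrix.det_mul, Matrix.det_transpose, mul_pow, hM, mul_one]
    _ = _ := by
        rw [hdet, mul_pow, EuclideanSpace.real_norm_sq_eq]

lemma continuous_det_sq_pow (n m : ℕ) :
    Continuous fun A : Fin n → Fin n → ℝ => (Matrix.det (Matrix.of A) ^ 2) ^ m :=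
  ((Continuous.matrix_det (A := fun A : Fin n → Fin n → ℝ => Matrix.of A)
    continuous_id).pow 2).pow m

/-- The even moments of the determinant as a product of chi-squared moments, with
`1, 2, …, n` degrees of freedom. -/
lemma lintegral_det_even (n m : ℕ) :
    ∫⁻ A : Fin n → Fin n → ℝ, ENNReal.ofReal ((Matrix.det (Matrix.of A) ^ 2) ^ m)
      ∂(Measure.pi fun _ : Fin n => Measure.pi fun _ : Fin n => gaussianReal 0 1) =
      ENNReal.ofReal (∏ i ∈ Finset.range n, stepTwo m ((i + 1 : ℕ) : ℝ)) := by
  have hmeas : ∀ k : ℕ, Measurable fun A : Fin k → Fin k → ℝ =>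
      ENNReal.ofReal ((Matrix.det (Matrix.of A) ^ 2) ^ m) := fun k =>
    ENNReal.measurable_ofReal.comp (continuous_det_sq_pow k m).measurable
  induction n with
  | zero => simp
  | succ n ih =>
    have hmp := (measurePreserving_piFinSuccAbove
      (fun _ : Fin (n + 1) => Measure.pi fun _ : Fin (n + 1) => gaussianReal 0 1) 0).symm
    rw [← hmp.lintegral_comp (hmeas _)]
    refine (lintegral_prod _ ((hmeas _).comp hmp.measurable).aemeasurable).trans ?_
    have hinner : ∀ r : Fin (n + 1) → ℝ,
        ∫⁻ B : Fin n → Fin (n + 1) → ℝ, ENNReal.ofReal ((Matrix.det (Matrix.of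
          ((MeasurableEquiv.piFinSuccAbove (fun _ => Fin (n + 1) → ℝ) 0).symm (r, B))) ^ 2) ^ m)
          ∂(Measure.pi fun _ : Fin n => Measure.pi fun _ : Fin (n + 1) => gaussianReal 0 1) =
        ENNReal.ofReal ((∑ i, r i ^ 2) ^ m) *
          ENNReal.ofReal (∏ i ∈ Finset.range n, stepTwo m ((i + 1 : ℕ) : ℝ)) := by
      intro r
      obtain ⟨g, hg, hdet⟩ := exists_det_cons_sq r
      have hgpi := measurePreserving_pi
        (fun _ : Fin n => Measure.pi fun _ : Fin (n + 1) => gaussianReal 0 1)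
        (fun _ : Fin n => Measure.pi fun _ : Fin n => gaussianReal 0 1) (fun _ => hg)
      rw [← ih, ← hgpi.lintegral_comp (hmeas n),
        ← lintegral_const_mul' _ _ ENNReal.ofReal_ne_top]
      refine lintegral_congr fun B => ?_
      have hcons : (MeasurableEquiv.piFinSuccAbove (fun _ => Fin (n + 1) → ℝ) 0).symm (r, B) =
          (Fin.cons r B : Fin (n + 1) → Fin (n + 1) → ℝ) := Fin.insertNth_zero' r B
      rw [hcons, hdet, mul_pow, ENNReal.ofReal_mul
        (pow_nonneg (Finset.sum_nonneg fun _ _ => sq_nonneg _) _)]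
    refine (lintegral_congr hinner).trans ?_
    rw [lintegral_mul_const _ (by fun_prop), lintegral_sum_sq_pow, Finset.prod_range_succ,
      mul_comm, ENNReal.ofReal_mul (Finset.prod_nonneg fun _ _ =>
        stepTwo_nonneg _ (Nat.cast_nonneg _))]

lemma prod_stepTwo (n m : ℕ) :
    ∏ i ∈ Finset.range n, stepTwo m ((i + 1 : ℕ) : ℝ) =
      ∏ j ∈ Finset.range m, ((Nat.factorial (n + 2 * j) : ℝ) / (Nat.factorial (2 * j) : ℝ)) := by
  unfold stepTwo
  rw [Finset.prod_comm]
  refine Finset.prod_congr rfl fun j _ => ?_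
  rw [eq_div_iff (by positivity)]
  induction n with
  | zero => simp
  | succ n ih =>
    rw [Finset.prod_range_succ, mul_right_comm, ih, show n + 1 + 2 * j = (n + 2 * j) + 1 by ring,
      Nat.factorial_succ]
    push_cast
    ring

theorem gaussian_even_determinant_moments (n m : ℕ) :
    (∫ A : Fin n → Fin n → ℝ, (Matrix.det (Matrix.of A)) ^ (2 * m)
        ∂(Measure.pi fun _ : Fin n => Measure.pi fun _ : Fin n => gaussianReal 0 1)) =
      ∏ j ∈ Finset.range m, ((Nat.factorial (n + 2 * j) : ℝ) / (Nat.factorial (2 * j) : ℝ)) := by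
  simp_rw [pow_mul]
  rw [integral_eq_lintegral_of_nonneg_ae (ae_of_all _ fun _ => by positivity)
    (continuous_det_sq_pow n m).aestronglyMeasurable, lintegral_det_even, ← prod_stepTwo, ENNReal.toReal_ofReal
      (Finset.prod_nonneg fun _ _ => stepTwo_nonneg _ (Nat.cast_nonneg _))]
end

section
/- Let R be a commutative ring, n ∈ ℕ, B : Matrix (Fin n) (Fin n) R, and c ∈ R. Let J : Matrix (Fin n) (Fin n) R be the all-ones matrix (J i j = 1 for all i, j). Then det (B + c • J) = det B + c · ∑_{i ∈ Fin n} ∑_{j ∈ Fin n} (adjugate B) i j. (This is the expansion of the determinant over marked permutations: det A = ∑_{σ ∈ Sₙ^×} sgn(σ) ∏ᵢ B^×_{iσ(i)}, where A = B + c·J and a marked permutation replaces at most one entry of a permutation by a mark contributing the factor c.) -/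
/-!
The determinant is multilinear in the rows, so `det (B + h)` is the sum, over all sets `s` of rows,
of the determinant of the matrix with rows in `s` taken from `h` and the others from `B`.
All rows of `h = c • J` are equal, so only `s` with at most one element contributes: `s = ∅` gives
`det B`, and `s = {i}` gives `c` times the determinant of `B` with row `i` replaced by ones, which
by Cramer's rule is the `i`-th column sum of the adjugate.
-/

/-- Adding the same vector to every argument of an alternating map changes it only to first order:
every higher term of the multilinear expansion has a repeated argument. -/
theorem alternating_map_add_const {R M N ι : Type*} [CommRing R] [AddCommGroup M] [Module R M]
    [AddCommGroup N] [Module R N] [Fintype ι] [DecidableEq ι]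
    (f : M [⋀^ι]→ₗ[R] N) (b : ι → M) (v : M) :
    f (b + fun _ => v) = f b + ∑ i, f (Function.update b i v) := by
  have expand := f.toMultilinearMap.map_add_eq_map_add_linearDeriv_add b (fun _ => v)
  have vanish : ∀ s ∈ (Finset.univ : Finset (Finset ι)).filter (2 ≤ ·.card),
      f.toMultilinearMap (s.piecewise (fun _ => v) b) = 0 := by
    intro s hs
    obtain ⟨i, hi, j, hj, hij⟩ := Finset.one_lt_card.mp (Finset.mem_filter.mp hs).2
    exact f.map_eq_zero_of_eq _ (by simp [hi, hj]) hij
  rw [Finset.sum_eq_zero vanish, add_zero, MultilinearMap.linearDeriv_apply] at expand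
  exact expand

theorem det_add_smul_allOnes (R : Type*) [CommRing R] (n : ℕ)
    (B : Matrix (Fin n) (Fin n) R) (c : R) :
    Matrix.det (B + c • Matrix.of (fun _ _ : Fin n => (1 : R))) =
      Matrix.det B + c * ∑ i : Fin n, ∑ j : Fin n, Matrix.adjugate B i j := by
  have row_term : ∀ i : Fin n,
      (B.updateRow i (c • (fun _ => (1 : R)))).det = c * ∑ j, B.adjugate j i := by
    intro i
    rw [Matrix.det_updateRow_smul, ← Matrix.cramer_transpose_apply,
      Matrix.cramer_eq_adjugate_mulVec, ← Matrix.adjugate_transpose]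
    simp [Matrix.mulVec, dotProduct]
  have swap : ∑ i, ∑ j, B.adjugate i j = ∑ i, ∑ j, B.adjugate j i := Finset.sum_comm
  rw [swap, Finset.mul_sum, ← Finset.sum_congr rfl fun i _ => row_term i]
  exact alternating_map_add_const Matrix.detRowAlternating B (c • (fun _ => (1 : R)))
end

section
/- Let μ be a Borel probability measure on ℝ with ∫|x|ᵏ dμ < ∞ for a fixed k ∈ ℕ, k ≥ 1. Then for every n ∈ ℕ, f_k(n) = ∑ over all pairs (π, s) with π : Fin k → Equiv.Perm (Fin n) and s : Fin k → Option (Fin n) of ( ∏_{j ∈ Fin k} sgn(π j) ) · ∏_{i ∈ Fin n} ( m₁^{a(i)} · ∏_{l ∈ Fin n} μ_{b(i,l)} ), where a(i) = #{ j ∈ Fin k | s j = some i } (the number of rows marked at column i), b(i,l) = #{ j ∈ Fin k | s j ≠ some i ∧ (π j) i = l } (the number of unmarked occurrences of the value l in column i), and by convention μ₀ = 1 (note μ₁ = 0 automatically). -/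
/-!
The proof centres the entries. Write `c = m₁` and `B = A - c`, so every column of `A` is a column of
`B` plus the constant column `c`. Expanding the determinant multilinearly in the columns, every term
in which two columns are constant vanishes (the two columns coincide), so at most one column carries
a constant:
`det A = ∑_σ ∑_s sgn σ ∏_i (c if s = some i, else B (σ i) i)` with `s` ranging over `Option (Fin n)`
(`det_eq_sum_marked`). The `k`-th power of this double sum is a sum over `k`-tuples of pairs `(σ, s)`,
i.e. over marked tables. In the term of a fixed table, grouping the factors of column `i` by the value
they use leaves `c ^ a(i) * ∏_l (B l i) ^ b(i,l)` (`prod_marked_column`). The entries are independent,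
so the expectation factors into central moments; all of them have order at most `k`, so everything is
integrable.
-/

open MeasureTheory

/-- The `r`-th central moment `μ_r = ∫ (x - m₁)^r dμ`. -/
noncomputable def cmom (μ : Measure ℝ) (r : ℕ) : ℝ := ∫ x, (x - mom μ 1) ^ r ∂μ

/-- Expansion of a determinant around the constant matrix with entries `c`: `s = some i` records that
the constant part `c` is taken from column `i`, and `s = none` that no column is replaced. -/
lemma det_eq_sum_marked {n : ℕ} (A : Fin n → Fin n → ℝ) (c : ℝ) :
    Matrix.det (Matrix.of A) =
      ∑ σ : Equiv.Perm (Fin n), ∑ s : Option (Fin n),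
        ((Equiv.Perm.sign σ : ℤ) : ℝ) *
          ∏ i : Fin n, (if s = some i then c else A (σ i) i - c) := by
  classical
  have hsplit : (Matrix.of A).transpose =
      (fun _ _ => c : Fin n → Fin n → ℝ) + (fun i l => A l i - c) := by
    ext i l
    simp
  have hexp : Matrix.det (Matrix.of A) = ∑ t : Finset (Fin n),
      Matrix.detRowAlternating
        (t.piecewise (fun _ _ => c : Fin n → Fin n → ℝ) (fun i l => A l i - c)) := by
    rw [← Matrix.det_transpose, hsplit]
    exact (Matrix.detRowAlternating (R := ℝ) (n := Fin n)).toMultilinearMap.map_add_univ _ _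
  have hinj : Function.Injective (Option.toFinset : Option (Fin n) → Finset (Fin n)) := by
    intro a b h
    ext i
    have := Finset.ext_iff.1 h i
    simpa using this
  rw [hexp, Finset.sum_comm]
  -- Only the sets `∅` and `{i}`, i.e. those of the form `s.toFinset`, contribute.
  rw [← Finset.sum_subset (Finset.subset_univ
    (Finset.univ.image (Option.toFinset : Option (Fin n) → Finset (Fin n))))]
  · rw [Finset.sum_image (fun a _ b _ h => hinj h)]
    refine Finset.sum_congr rfl fun s _ => ?_
    change Matrix.det (Matrix.of _) = _
    rw [← Matrix.det_transpose, Matrix.det_apply']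
    refine Finset.sum_congr rfl fun σ _ => ?_
    congr 1
    refine Finset.prod_congr rfl fun i _ => ?_
    change (s.toFinset.piecewise (fun _ _ => c : Fin n → Fin n → ℝ) (fun i l => A l i - c) i) (σ i) = _
    by_cases h : s = some i
    · rw [Finset.piecewise_eq_of_mem _ _ _ (by simp [h]), if_pos h]
    · rw [Finset.piecewise_eq_of_notMem _ _ _ (by simpa using h), if_neg h]
  · intro t _ ht
    have hcard : 1 < t.card := by
      by_contra! hle
      apply ht
      rw [Finset.mem_image]
      rcases Nat.le_one_iff_eq_zero_or_eq_one.1 hle with h0 | h1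
      · exact ⟨none, Finset.mem_univ _, by simp [Finset.card_eq_zero.1 h0]⟩
      · obtain ⟨i, hi⟩ := Finset.card_eq_one.1 h1
        exact ⟨some i, Finset.mem_univ _, by simp [hi]⟩
    obtain ⟨i, hi, j, hj, hij⟩ := Finset.one_lt_card.1 hcard
    exact AlternatingMap.map_eq_zero_of_eq _ _ (by simp [Finset.piecewise, hi, hj]) hij

/-- The factors that a marked table takes from column `i`, grouped by value. -/
lemma prod_marked_column {n k : ℕ} (A : Fin n → Fin n → ℝ) (c : ℝ)
    (π : Fin k → Equiv.Perm (Fin n)) (s : Fin k → Option (Fin n)) (i : Fin n) :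
    ∏ j : Fin k, (if s j = some i then c else A (π j i) i - c) =
      c ^ (Finset.univ.filter (fun j : Fin k => s j = some i)).card *
        ∏ l : Fin n, (A l i - c) ^ (Finset.univ.filter
          (fun j : Fin k => s j ≠ some i ∧ (π j) i = l)).card := by
  rw [Finset.prod_ite, Finset.prod_const]
  congr 1
  rw [← Finset.prod_fiberwise _ (fun j => π j i)]
  refine Finset.prod_congr rfl fun l _ => ?_
  rw [Finset.filter_filter, ← Finset.prod_const]
  refine Finset.prod_congr rfl fun j hj => ?_
  rw [(Finset.mem_filter.1 hj).2.2]

lemma det_pow_eq_sum {n : ℕ} (k : ℕ) (A : Fin n → Fin n → ℝ) (c : ℝ) :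
    Matrix.det (Matrix.of A) ^ k =
      ∑ π : Fin k → Equiv.Perm (Fin n), ∑ s : Fin k → Option (Fin n),
        ((∏ j : Fin k, ((Equiv.Perm.sign (π j) : ℤ) : ℝ)) *
          ∏ i : Fin n, c ^ (Finset.univ.filter (fun j : Fin k => s j = some i)).card) *
          ∏ l : Fin n, ∏ i : Fin n, (A l i - c) ^ (Finset.univ.filter
            (fun j : Fin k => s j ≠ some i ∧ (π j) i = l)).card := by
  classical
  have hpow : Matrix.det (Matrix.of A) ^ k = ∏ _j : Fin k, Matrix.det (Matrix.of A) := by simp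
  rw [hpow, det_eq_sum_marked A c, Finset.prod_univ_sum, Fintype.piFinset_univ]
  refine Finset.sum_congr rfl fun π _ => ?_
  rw [Finset.prod_univ_sum, Fintype.piFinset_univ]
  refine Finset.sum_congr rfl fun s _ => ?_
  rw [Finset.prod_mul_distrib, Finset.prod_comm, mul_assoc]
  congr 1
  rw [Finset.prod_comm (f := fun l i => (A l i - c) ^ _), ← Finset.prod_mul_distrib]
  exact Finset.prod_congr rfl fun i _ => prod_marked_column A c π s i

lemma integrable_sub_pow (μ : Measure ℝ) [IsProbabilityMeasure μ] {k : ℕ}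
    (hint : Integrable (fun x : ℝ => |x| ^ k) μ) (c : ℝ) {r : ℕ} (hr : r ≤ k) :
    Integrable (fun x : ℝ => (x - c) ^ r) μ := by
  -- By `L^k ⊆ L^r`; the exponent `0` is treated separately, as `L^0` carries no norm information.
  rcases Nat.eq_zero_or_pos r with rfl | hr0
  · simp
  have hk : k ≠ 0 := by omega
  have hid : MemLp (fun x : ℝ => x) k μ := by
    refine (integrable_norm_rpow_iff (by fun_prop) (by simpa using hk) (by simp)).1 ?_
    simpa using hint
  have h : MemLp (fun x : ℝ => x - c) r μ :=
    (hid.sub (memLp_const c)).mono_exponent (by exact_mod_cast hr)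
  have h2 := h.integrable_norm_pow hr0.ne'
  refine (integrable_norm_iff (by fun_prop)).1 ?_
  simpa using h2

theorem detMoment_eq_sum_over_marked_permutation_tables (μ : Measure ℝ) [IsProbabilityMeasure μ]
    (k : ℕ) (hk : 1 ≤ k) (hint : Integrable (fun x : ℝ => |x| ^ k) μ) (n : ℕ) :
    detMoment μ k n =
      ∑ π : Fin k → Equiv.Perm (Fin n), ∑ s : Fin k → Option (Fin n),
        (∏ j : Fin k, ((Equiv.Perm.sign (π j) : ℤ) : ℝ)) *
          ∏ i : Fin n,
            ((mom μ 1) ^ (Finset.univ.filter (fun j : Fin k => s j = some i)).card *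
              ∏ l : Fin n,
                cmom μ (Finset.univ.filter
                  (fun j : Fin k => s j ≠ some i ∧ (π j) i = l)).card) := by
  have hprod : ∀ b : Fin n → Fin n → ℕ, (∀ l i, b l i ≤ k) →
      Integrable (fun A : Fin n → Fin n → ℝ => ∏ l, ∏ i, (A l i - mom μ 1) ^ b l i)
        (Measure.pi fun _ : Fin n => Measure.pi fun _ : Fin n => μ) := by
    intro b hb
    exact Integrable.fintype_prod (f := fun l (x : Fin n → ℝ) => ∏ i, (x i - mom μ 1) ^ b l i)
      fun l => Integrable.fintype_prod (f := fun i (x : ℝ) => (x - mom μ 1) ^ b l i)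
        fun i => integrable_sub_pow μ hint _ (hb l i)
  have hcard : ∀ (p : Fin k → Prop) [DecidablePred p], (Finset.univ.filter p).card ≤ k := by
    intro p _
    simpa using Finset.card_filter_le (Finset.univ : Finset (Fin k)) p
  unfold detMoment
  simp_rw [det_pow_eq_sum k _ (mom μ 1)]
  rw [integral_finsetSum _ fun π _ => integrable_finsetSum _ fun s _ =>
    (hprod _ fun l i => hcard _).const_mul _]
  refine Finset.sum_congr rfl fun π _ => ?_
  rw [integral_finsetSum _ fun s _ => (hprod _ fun l i => hcard _).const_mul _]
  refine Finset.sum_congr rfl fun s _ => ?_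
  rw [integral_const_mul, mul_assoc]
  congr 1
  rw [Finset.prod_mul_distrib]
  congr 1
  rw [integral_fintype_prod_eq_prod (f := fun l (x : Fin n → ℝ) => ∏ i, (x i - mom μ 1) ^
    (Finset.univ.filter (fun j : Fin k => s j ≠ some i ∧ (π j) i = l)).card), Finset.prod_comm]
  refine Finset.prod_congr rfl fun l _ => ?_
  exact integral_fintype_prod_eq_prod (f := fun i (x : ℝ) => (x - mom μ 1) ^
    (Finset.univ.filter (fun j : Fin k => s j ≠ some i ∧ (π j) i = l)).card)
end

section
/- Let μ₃, μ₄ ∈ ℝ and for n ∈ ℕ define s⁰(n) = ∑ over all tuples π : Fin 4 → Equiv.Perm (Fin n) of ( ∏_{j} sgn(π j) ) · ∏_{i ∈ Fin n} ∏_{l ∈ Fin n} c_{b(i,l)}, where b(i,l) = #{ j ∈ Fin 4 | (π j) i = l } and c₀ = 1, c₁ = 0, c₂ = 1, c₃ = μ₃, c₄ = μ₄. Then for every t ∈ ℝ with |t| < 1, the series ∑_{n=0}^∞ s⁰(n)·tⁿ/(n!)² converges (HasSum) with sum exp(t·(μ₄ − 3)) / (1 − t)³. -/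
/-!
The weight of a row of a 4-table is `μ4` if its four entries coincide, `1` if they form two pairs of
distinct values, and `0` otherwise. Writing `μ4 = (μ4 - 3) + 1 + 1 + 1`, this is a sum over four
colours: colour `0`, of weight `μ4 - 3`, requires all entries to be equal, and colours `1, 2, 3`, of
weight `1`, correspond to the three pairings of the four permutations (`row_weight`). Expanding the
product over the rows, `s⁰(n)` becomes a sum over colourings `c : Fin n → Fin 4` of
`(μ4 - 3) ^ #c⁻¹(0)` times the signed number of tables `π` compatible with `c`.

For a fixed colouring put `σ j = (π 0)⁻¹ * π j`. Then `σ j` fixes the points of colours `0` and `j`,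
and the two other `σ`s agree on the points of colour `j`. This forces each colour class to be
preserved: the compatible tables correspond to pairs `(π 0, τ)` with `τ` a permutation preserving `c`
and fixing the points of colour `0`, where `σ j` is `τ` frozen on the colour `j`
(`table_injective`, `exists_table`). As `σ 1 * σ 2 * σ 3 = τ * τ`, every such table has sign `1`, so
there are `n! * ∏ k ≠ 0, (#c⁻¹(k))!` of them, all counted positively (`sum_compat`).

Since the number of colourings with class sizes `m` is `n! / ∏ k, (m k)!` (`sum_coloring`),
`s⁰(n) / n! ^ 2` is the sum of `(μ4 - 3) ^ m 0 / (m 0)!` over all `m : Fin 4 → ℕ` of total `n`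
(`S0_closed_form`). This is the Cauchy product of one exponential and three geometric series.
-/

/-- Column weights: `c₀ = 1`, `c₁ = 0`, `c₂ = 1`, `c₃ = μ₃`, `c₄ = μ₄`
(the value for `r > 4` is irrelevant since a column of a 4-table has 4 entries). -/
noncomputable def colWeight (μ3 μ4 : ℝ) : ℕ → ℝ
  | 0 => 1
  | 1 => 0
  | 2 => 1
  | 3 => μ3
  | 4 => μ4
  | _ => 0

/-! ### Cauchy products and sums over colourings -/

theorem hasSum_mul_of_summable_norm {β γ : Type*} {u : β → ℝ} {v : γ → ℝ} {a b : ℝ}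
    (hu : HasSum u a) (hv : HasSum v b) (hu' : Summable fun x => ‖u x‖)
    (hv' : Summable fun y => ‖v y‖) : HasSum (fun q : β × γ => u q.1 * v q.2) (a * b) :=
  hu.mul hv (summable_mul_of_summable_norm hu' hv')

theorem hasSum_pi_prod (k : ℕ) (f : Fin k → ℕ → ℝ) (h : ∀ i, Summable fun n => ‖f i n‖) :
    (Summable fun m : Fin k → ℕ => ‖∏ i, f i (m i)‖) ∧
      HasSum (fun m : Fin k → ℕ => ∏ i, f i (m i)) (∏ i, ∑' n, f i n) := by
  induction k with
  | zero =>
    refine ⟨Summable.of_finite, ?_⟩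
    simp
  | succ k ih =>
    obtain ⟨hs, hp⟩ := ih (fun i => f i.succ) fun i => h i.succ
    constructor
    · rw [← (Fin.consEquiv (fun _ : Fin (k + 1) => ℕ)).summable_iff]
      refine ((h 0).mul_norm hs).congr fun q => ?_
      rw [Function.comp_apply, Fin.prod_univ_succ]
      rfl
    · rw [← (Fin.consEquiv (fun _ : Fin (k + 1) => ℕ)).hasSum_iff, Fin.prod_univ_succ]
      have hm := hasSum_mul_of_summable_norm (h 0).of_norm.hasSum hp (h 0) hs
      convert! hm using 1
      funext q
      rw [Function.comp_apply, Fin.prod_univ_succ]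
      rfl

/-- The Cauchy product of `k` absolutely convergent series. -/
theorem hasSum_antidiagonalTuple (k : ℕ) (f : Fin k → ℕ → ℝ)
    (h : ∀ i, Summable fun n => ‖f i n‖) :
    HasSum (fun n : ℕ => ∑ m ∈ Finset.Nat.antidiagonalTuple k n, ∏ i, f i (m i))
      (∏ i, ∑' n, f i n) := by
  have := (Finset.Nat.sigmaAntidiagonalTupleEquivTuple k).hasSum_iff.mpr (hasSum_pi_prod k f h).2
  refine this.sigma fun n => ?_
  rw [← Finset.sum_coe_sort]
  exact hasSum_fintype _

/-- The sum over all colourings of a product of functions of the class sizes. The number of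
colourings with given class sizes is a multinomial coefficient: this is read off from the two
expansions of `(∑ a, X a) ^ n`, to which the linear functional sending the monomial with exponents
`m` to `∏ a, F a (m a)` is applied. -/
theorem sum_coloring (n k : ℕ) (F : Fin k → ℕ → ℝ) :
    ∑ c : Fin n → Fin k, ∏ a, F a (Fintype.card {i // c i = a}) =
      (n.factorial : ℝ) * ∑ m ∈ Finset.Nat.antidiagonalTuple k n,
        ∏ a, F a (m a) / ((m a).factorial : ℝ) := by
  classical
  let L : MvPolynomial (Fin k) ℝ →ₗ[ℝ] ℝ :=
    (MvPolynomial.basisMonomials (Fin k) ℝ).constr ℝ fun m => ∏ a, F a (m a)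
  have hL : ∀ m : Fin k →₀ ℕ, L (MvPolynomial.monomial m 1) = ∏ a, F a (m a) := by
    intro m
    have := (MvPolynomial.basisMonomials (Fin k) ℝ).constr_basis ℝ
      (fun m : Fin k →₀ ℕ => ∏ a, F a (m a)) m
    rwa [MvPolynomial.coe_basisMonomials] at this
  have h1 := Fintype.sum_pow (fun a : Fin k => (MvPolynomial.X a : MvPolynomial (Fin k) ℝ)) n
  rw [Finset.sum_pow_eq_sum_piAntidiag, Finset.piAntidiag_univ_fin_eq_antidiagonalTuple] at h1
  have h2 := congrArg L h1
  rw [map_sum, map_sum] at h2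
  have h3 : ∀ m : Fin k → ℕ, (∏ a, (MvPolynomial.X a : MvPolynomial (Fin k) ℝ) ^ m a) =
      MvPolynomial.monomial (Finsupp.equivFunOnFinite.symm m) 1 := by
    intro m
    rw [MvPolynomial.monomial_eq]
    simp [Finsupp.prod_fintype]
  have h4 : ∀ c : Fin n → Fin k, (∏ i, (MvPolynomial.X (c i) : MvPolynomial (Fin k) ℝ)) =
      ∏ a, (MvPolynomial.X a : MvPolynomial (Fin k) ℝ) ^ Fintype.card {i // c i = a} := by
    intro c
    rw [← Finset.prod_fiberwise Finset.univ c]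
    refine Finset.prod_congr rfl fun a _ => ?_
    rw [Fintype.card_subtype, Finset.prod_congr rfl (g := fun _ => MvPolynomial.X a),
      Finset.prod_const]
    intro i hi
    rw [(Finset.mem_filter.mp hi).2]
  simp only [h4, h3, hL] at h2
  simp only [Finsupp.coe_equivFunOnFinite_symm] at h2
  rw [← h2, Finset.mul_sum]
  refine Finset.sum_congr rfl fun m hm => ?_
  rw [← nsmul_eq_mul, map_nsmul, hL, nsmul_eq_mul]
  have h5 := Nat.multinomial_spec Finset.univ m
  rw [Finset.Nat.mem_antidiagonalTuple.mp hm] at h5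
  rw [← h5, Finset.prod_div_distrib]
  push_cast
  have : (∏ a, ((m a).factorial : ℝ)) ≠ 0 :=
    Finset.prod_ne_zero_iff.mpr fun a _ => by positivity
  simp only [Finsupp.coe_equivFunOnFinite_symm]
  field_simp

/-! ### Colouring the rows of a table -/

/-- The row `p` of a 4-table admits the colour `k`: for `k = 0` its entries are all equal, for
`k ≠ 0` they agree along the pairing of `Fin 4` that matches `0` with `k` and the other two indices
with each other. A row with all entries equal admits every colour. -/
def Compat {α : Type*} (k : Fin 4) (p : Fin 4 → α) : Prop :=
  (k = 0 → p 1 = p 0 ∧ p 2 = p 0 ∧ p 3 = p 0) ∧ (k = 1 → p 1 = p 0 ∧ p 2 = p 3) ∧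
    (k = 2 → p 2 = p 0 ∧ p 1 = p 3) ∧ (k = 3 → p 3 = p 0 ∧ p 1 = p 2)

open Classical in
/-- The weight of a row is the sum of the weights of the colours it admits. A constant row admits
all four colours, so colour `0` is given the weight `μ4 - 3` in order that the total be `μ4`;
a row with a value occurring exactly once has weight `0` and admits no colour. -/
theorem row_weight {α : Type*} [Fintype α] [DecidableEq α] (μ3 μ4 : ℝ) (p : Fin 4 → α) :
    ∏ l : α, colWeight μ3 μ4 (Finset.univ.filter fun j : Fin 4 => p j = l).card =
      ∑ k : Fin 4, if Compat k p then (if k = 0 then μ4 - 3 else 1) else 0 := by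
  have hc : ∀ l, (Finset.univ.filter fun j : Fin 4 => p j = l).card =
      (if p 0 = l then 1 else 0) + (if p 1 = l then 1 else 0) + (if p 2 = l then 1 else 0) +
        (if p 3 = l then 1 else 0) := by
    intro l
    rw [Finset.card_filter, Fin.sum_univ_four]
  simp only [hc, Fin.sum_univ_four, Compat]
  have two : ∀ a b : α, a ≠ b → ∀ u : α → ℕ, u a = 2 → u b = 2 →
      (∀ l, l ≠ a → l ≠ b → u l = 0) → ∏ l, colWeight μ3 μ4 (u l) = 1 := by
    intro a b _ u ha hb hu
    refine Finset.prod_eq_one fun l _ => ?_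
    by_cases h1 : l = a
    · rw [h1, ha]; rfl
    by_cases h2 : l = b
    · rw [h2, hb]; rfl
    rw [hu l h1 h2]; rfl
  have one : ∀ a : α, ∀ u : α → ℕ, u a = 1 → ∏ l, colWeight μ3 μ4 (u l) = 0 := by
    intro a u ha
    refine Finset.prod_eq_zero (Finset.mem_univ a) ?_
    rw [ha]; rfl
  have four : ∀ a : α, ∀ u : α → ℕ, u a = 4 → (∀ l, l ≠ a → u l = 0) →
      ∏ l, colWeight μ3 μ4 (u l) = μ4 := by
    intro a u ha hu
    rw [Finset.prod_eq_single a, ha]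
    · rfl
    · intro l _ hl
      rw [hu l hl]; rfl
    · simp
  generalize p 0 = a
  generalize p 1 = b
  generalize p 2 = c
  generalize p 3 = d
  by_cases hab : a = b
  · subst hab
    by_cases hcd : c = d
    · subst hcd
      by_cases hac : a = c
      · subst hac
        rw [four a _ (by simp) (fun l hl => by simp [hl.symm])]
        simp; ring
      · rw [two a c hac _ (by simp [Ne.symm hac]) (by simp [hac])
          (fun l h1 h2 => by simp [h1.symm, h2.symm])]
        simp [hac, Ne.symm hac]
    · by_cases hac : a = c
      · subst hac
        rw [one d _ (by simp [hcd])]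
        simp [hcd, Ne.symm hcd]
      · rw [one c _ (by simp [hac, Ne.symm hcd])]
        simp [hcd, hac, Ne.symm hac]
        
  · by_cases hac : a = c
    · subst hac
      by_cases hbd : b = d
      · subst hbd
        rw [two a b hab _ (by simp [Ne.symm hab]) (by simp [hab])
          (fun l h1 h2 => by simp [h1.symm, h2.symm])]
        simp [hab, Ne.symm hab]
      · rw [one b _ (by simp [hab, Ne.symm hbd])]
        simp [Ne.symm hab, hbd]
    · by_cases had : a = d
      · subst had
        by_cases hbc : b = c
        · subst hbc
          rw [two a b hab _ (by simp [Ne.symm hab]) (by simp [hab])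
            (fun l h1 h2 => by simp [h1.symm, h2.symm])]
          simp [Ne.symm hab]
        · rw [one b _ (by simp [hab, Ne.symm hbc])]
          simp [Ne.symm hab, hbc, Ne.symm hac]
      · rw [one a _ (by simp [Ne.symm hab, Ne.symm hac, Ne.symm had])]
        simp [Ne.symm hab, Ne.symm hac, Ne.symm had]

/-! ### Tables compatible with a colouring -/

/-- The permutation acting as `σ k` on the points of colour `k`, provided that each `σ k` maps the
points of colour `k` to points of colour `k`. -/
noncomputable def glue {α κ : Type*} [Finite α] (c : α → κ) (σ : κ → Equiv.Perm α)
    (h : ∀ i, c (σ (c i) i) = c i) : Equiv.Perm α :=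
  Equiv.ofBijective (fun i => σ (c i) i) <| Function.Injective.bijective_of_finite <| by
    intro i j hij
    have hc : c i = c j := by rw [← h i, ← h j]; exact congrArg c hij
    simp only [hc] at hij
    exact (σ (c j)).injective hij

@[simp]
theorem glue_apply {α κ : Type*} [Finite α] (c : α → κ) (σ : κ → Equiv.Perm α)
    (h : ∀ i, c (σ (c i) i) = c i) (i : α) : glue c σ h i = σ (c i) i := rfl

/-- The permutation `τ` preserves the colouring `c` and fixes every point of colour `0`. -/
def Adm {α : Type*} (c : α → Fin 4) (τ : Equiv.Perm α) : Prop :=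
  ∀ i, c (τ i) = c i ∧ (c i = 0 → τ i = i)

/-- Recolouring the points of colour `0` with pairwise distinct new colours turns the admissible
permutations into the full stabilizer of a colouring. -/
theorem card_adm {α : Type*} [Fintype α] [DecidableEq α] (c : α → Fin 4) :
    Nat.card {τ : Equiv.Perm α // Adm c τ} =
      ∏ k : Fin 4, if k = 0 then 1 else (Fintype.card {i // c i = k}).factorial := by
  classical
  let f : α → Fin 4 ⊕ α := fun i => if c i = 0 then Sum.inr i else Sum.inl (c i)
  have h1 : ∀ τ : Equiv.Perm α, Adm c τ ↔ f ∘ τ = f := by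
    intro τ
    rw [funext_iff]
    refine forall_congr' fun i => ?_
    simp only [f, Function.comp_apply]
    by_cases hi : c i = 0 <;> by_cases hj : c (τ i) = 0
    · simp [hi, hj]
    · simp [hi, hj]
    · simp [hi, hj, Ne.symm hi]
    · simp [hi, hj]
  have h2 := DomMulAct.stabilizer_card f
  rw [Nat.card_congr (Equiv.subtypeEquivRight h1), Nat.card_eq_fintype_card, h2,
    Fintype.prod_sum_type]
  have h3 : ∀ a : α, (Fintype.card {i // f i = Sum.inr a}).factorial = 1 := by
    intro a
    have : Subsingleton {i // f i = Sum.inr a} := by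
      refine ⟨fun x y => Subtype.ext ?_⟩
      have hh : ∀ z : {i // f i = Sum.inr a}, z.1 = a := by
        rintro ⟨z, hz⟩
        simp only [f] at hz
        split_ifs at hz
        exact Sum.inr.inj hz
      rw [hh x, hh y]
    exact Nat.factorial_eq_one.mpr (Fintype.card_le_one_iff_subsingleton.mpr this)
  rw [Finset.prod_congr rfl fun a _ => h3 a, Finset.prod_const_one, mul_one]
  refine Finset.prod_congr rfl fun k _ => ?_
  split_ifs with hk
  · subst hk
    rw [Fintype.card_eq_zero_iff.mpr, Nat.factorial_zero]
    refine ⟨fun ⟨z, hz⟩ => ?_⟩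
    simp only [f] at hz
    split_ifs at hz with h
    exact h (Sum.inl.inj hz)
  · congr 1
    refine Fintype.card_congr (Equiv.subtypeEquivRight fun i => ?_)
    simp only [f]
    split_ifs with h
    · simp [h, Ne.symm hk]
    · simp

/-- The permutation that fixes the points of colour `j` and agrees with `τ` elsewhere. -/
noncomputable def freeze {α : Type*} [Finite α] (c : α → Fin 4) (τ : Equiv.Perm α)
    (h : Adm c τ) (j : Fin 4) : Equiv.Perm α :=
  glue c (fun k => if k = j then 1 else τ) fun i => by
    split_ifs
    · rfl
    · exact (h i).1

theorem freeze_apply {α : Type*} [Finite α] (c : α → Fin 4) (τ : Equiv.Perm α)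
    (h : Adm c τ) (j : Fin 4) (i : α) : freeze c τ h j i = if c i = j then i else τ i := by
  simp only [freeze, glue_apply]
  split_ifs <;> rfl

/-- The product of the three frozen permutations is `τ * τ`: a point of nonzero colour is moved by
exactly two of the three factors. -/
theorem sign_freeze {α : Type*} [Fintype α] [DecidableEq α] (c : α → Fin 4) (τ : Equiv.Perm α)
    (h : Adm c τ) : Equiv.Perm.sign (freeze c τ h 1) * Equiv.Perm.sign (freeze c τ h 2) *
      Equiv.Perm.sign (freeze c τ h 3) = 1 := by
  have : freeze c τ h 1 * freeze c τ h 2 * freeze c τ h 3 = τ * τ := by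
    ext1 i
    obtain ⟨h1, h0⟩ := h i
    have h2 := (h (τ i)).1
    simp only [Equiv.Perm.mul_apply, freeze_apply]
    generalize hk : c i = k at *
    fin_cases k <;> simp_all
  rw [← map_mul, ← map_mul, this, map_mul, Int.units_mul_self]

/-- The 4-table attached to a permutation `ρ` and an admissible permutation `τ`: its first entry is
`ρ` and its `j`-th entry is `ρ` after `τ` frozen on the colour `j`. -/
noncomputable def table {α : Type*} [Finite α] (c : α → Fin 4)
    (q : Equiv.Perm α × {τ : Equiv.Perm α // Adm c τ}) : Fin 4 → Equiv.Perm α :=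
  ![q.1, q.1 * freeze c q.2.1 q.2.2 1, q.1 * freeze c q.2.1 q.2.2 2,
    q.1 * freeze c q.2.1 q.2.2 3]

theorem compat_table {α : Type*} [Finite α] (c : α → Fin 4)
    (q : Equiv.Perm α × {τ : Equiv.Perm α // Adm c τ}) (i : α) :
    Compat (c i) fun j => table c q j i := by
  obtain ⟨ρ, τ, h⟩ := q
  obtain ⟨h1, h0⟩ := h i
  simp only [Compat, table, Matrix.cons_val, Equiv.Perm.mul_apply, freeze_apply]
  generalize hk : c i = k at *
  fin_cases k <;> simp_all

theorem table_injective {α : Type*} [Finite α] (c : α → Fin 4) :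
    Function.Injective (table c) := by
  rintro ⟨ρ, τ, h⟩ ⟨ρ', τ', h'⟩ heq
  have e0 : ρ = ρ' := congrFun heq 0
  subst e0
  have e1 : freeze c τ h 1 = freeze c τ' h' 1 := mul_left_cancel (congrFun heq 1)
  have e2 : freeze c τ h 2 = freeze c τ' h' 2 := mul_left_cancel (congrFun heq 2)
  have : τ = τ' := by
    ext1 i
    have e1 := Equiv.congr_fun e1 i
    have e2 := Equiv.congr_fun e2 i
    rw [freeze_apply, freeze_apply] at e1 e2
    by_cases hi : c i = 1
    · simpa [hi] using e2
    · simpa [hi] using e1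
  subst this
  rfl

/-- Every table compatible with `c` comes from an admissible permutation. With `σ j = (π 0)⁻¹ * π j`,
the permutation sought is the common value of the two `σ j` with `j ≠ c i` at points of nonzero
colour. -/
theorem exists_table {α : Type*} [Finite α] (c : α → Fin 4) (π : Fin 4 → Equiv.Perm α)
    (hπ : ∀ i, Compat (c i) fun j => π j i) : ∃ q, table c q = π := by
  let σ : Fin 4 → Equiv.Perm α := fun j => (π 0)⁻¹ * π j
  have key : ∀ j k i, σ j i = σ k i ↔ π j i = π k i := by
    intro j k i
    simp [σ]
  have hid : ∀ j i, σ j i = i ↔ π j i = π 0 i := by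
    intro j i
    rw [← key]; simp [σ]
  have g0 : ∀ i, c i = 0 → σ 1 i = i ∧ σ 2 i = i ∧ σ 3 i = i := fun i hi => by
    simpa only [hid] using (hπ i).1 hi
  have g1 : ∀ i, c i = 1 → σ 1 i = i ∧ σ 2 i = σ 3 i := fun i hi => by
    simpa only [hid, key] using (hπ i).2.1 hi
  have g2 : ∀ i, c i = 2 → σ 2 i = i ∧ σ 1 i = σ 3 i := fun i hi => by
    simpa only [hid, key] using (hπ i).2.2.1 hi
  have g3 : ∀ i, c i = 3 → σ 3 i = i ∧ σ 1 i = σ 2 i := fun i hi => by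
    simpa only [hid, key] using (hπ i).2.2.2 hi
  have four : ∀ k : Fin 4, k = 0 ∨ k = 1 ∨ k = 2 ∨ k = 3 := by decide
  have inj : ∀ j i, σ j (σ j i) = σ j i → σ j i = i := fun j i h => (σ j).injective h
  let s : Fin 4 → Equiv.Perm α := ![1, σ 2, σ 1, σ 1]
  -- If the image `y` of `i` had another colour, one of the two `σ j` that send `i` to `y` would fix
  -- `y`, so that `y = i` by injectivity.
  have hs : ∀ i, c (s (c i) i) = c i := by
    intro i
    rcases four (c i) with hi | hi | hi | hi
    · simp [hi, s]
    · have := g1 i hi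
      simp only [hi, s, Matrix.cons_val]
      rcases four (c (σ 2 i)) with hj | hj | hj | hj
      · rw [inj 2 i (g0 _ hj).2.1, hi]
      · exact hj
      · rw [inj 2 i (g2 _ hj).1, hi]
      · have h3 := (g3 _ hj).1
        rw [this.2] at h3 ⊢
        rw [inj 3 i h3, hi]
    · have := g2 i hi
      simp only [hi, s, Matrix.cons_val]
      rcases four (c (σ 1 i)) with hj | hj | hj | hj
      · rw [inj 1 i (g0 _ hj).1, hi]
      · rw [inj 1 i (g1 _ hj).1, hi]
      · exact hj
      · have h3 := (g3 _ hj).1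
        rw [this.2] at h3 ⊢
        rw [inj 3 i h3, hi]
    · have := g3 i hi
      simp only [hi, s, Matrix.cons_val]
      rcases four (c (σ 1 i)) with hj | hj | hj | hj
      · rw [inj 1 i (g0 _ hj).1, hi]
      · rw [inj 1 i (g1 _ hj).1, hi]
      · have h3 := (g2 _ hj).1
        rw [this.2] at h3 ⊢
        rw [inj 2 i h3, hi]
      · exact hj
  have hadm : Adm c (glue c s hs) := fun i => ⟨hs i, fun hi => by simp [hi, s]⟩
  have hfr : ∀ j, j = 1 ∨ j = 2 ∨ j = 3 → freeze c (glue c s hs) hadm j = σ j := by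
    intro j hj
    ext1 i
    rw [freeze_apply, glue_apply]
    rcases four (c i) with hi | hi | hi | hi
    · have := g0 i hi
      rcases hj with rfl | rfl | rfl <;> simp [hi, s, this]
    · have := g1 i hi
      rcases hj with rfl | rfl | rfl <;> simp [hi, s, this]
    · have := g2 i hi
      rcases hj with rfl | rfl | rfl <;> simp [hi, s, this]
    · have := g3 i hi
      rcases hj with rfl | rfl | rfl <;> simp [hi, s, this]
  refine ⟨(π 0, ⟨glue c s hs, hadm⟩), ?_⟩
  funext j
  rcases four j with rfl | rfl | rfl | rfl
  · rfl
  all_goals simp [table, hfr, σ]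

theorem sign_table {α : Type*} [Fintype α] [DecidableEq α] (c : α → Fin 4)
    (q : Equiv.Perm α × {τ : Equiv.Perm α // Adm c τ}) :
    ∏ j, ((Equiv.Perm.sign (table c q j) : ℤ) : ℝ) = 1 := by
  obtain ⟨ρ, τ, h⟩ := q
  have h1 := sign_freeze c τ h
  have h2 : ∏ j, Equiv.Perm.sign (table c (ρ, ⟨τ, h⟩) j) = 1 := by
    simp only [Fin.prod_univ_four, table, Matrix.cons_val, map_mul]
    generalize Equiv.Perm.sign (freeze c τ h 1) = a at *
    generalize Equiv.Perm.sign (freeze c τ h 2) = b at *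
    generalize Equiv.Perm.sign (freeze c τ h 3) = d at *
    generalize Equiv.Perm.sign ρ = r
    calc r * (r * a) * (r * b) * (r * d) = (r * r) * (r * r) * (a * b * d) := by
          simp only [mul_left_comm, mul_comm]
      _ = 1 := by rw [h1, Int.units_mul_self]; rfl
  have h3 := congrArg (fun u : ℤˣ => ((u : ℤ) : ℝ)) h2
  simpa using h3

open Classical in
/-- All tables compatible with `c` have sign `1`, so the signed sum over them counts them. -/
theorem sum_compat {n : ℕ} (c : Fin n → Fin 4) :
    ∑ π : Fin 4 → Equiv.Perm (Fin n), (∏ j : Fin 4, ((Equiv.Perm.sign (π j) : ℤ) : ℝ)) *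
        (if ∀ i, Compat (c i) fun j => π j i then 1 else 0) =
      n.factorial * ∏ k : Fin 4,
        if k = 0 then 1 else ((Fintype.card {i // c i = k}).factorial : ℝ) := by
  simp only [mul_ite, mul_one, mul_zero]
  rw [← Finset.sum_filter]
  have h : (Finset.univ.filter fun π : Fin 4 → Equiv.Perm (Fin n) =>
      ∀ i, Compat (c i) fun j => π j i) = Finset.univ.image (table c) := by
    ext π
    simp only [Finset.mem_filter, Finset.mem_univ, true_and, Finset.mem_image]
    constructor
    · exact exists_table c π
    · rintro ⟨q, rfl⟩
      exact compat_table c q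
  rw [h, Finset.sum_image (table_injective c).injOn]
  simp only [sign_table, Finset.sum_const, Finset.card_univ, Fintype.card_prod,
    Fintype.card_perm, Fintype.card_fin, nsmul_eq_mul, mul_one]
  rw [← Nat.card_eq_fintype_card, card_adm]
  push_cast
  rfl

/-! ### The generating function -/

/-- The coefficient of `t ^ n` in `exp (t * (μ4 - 3)) * (1 - t)⁻¹ ^ 3`, times `n! ^ 2`: the
product over `k` is just `(μ4 - 3) ^ m 0 / (m 0)!`, written as a product over the four colours. -/
theorem S0_closed_form (μ3 μ4 : ℝ) (n : ℕ) :
    ∑ π : Fin 4 → Equiv.Perm (Fin n),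
        (∏ j : Fin 4, ((Equiv.Perm.sign (π j) : ℤ) : ℝ)) *
          ∏ i : Fin n, ∏ l : Fin n,
            colWeight μ3 μ4 (Finset.univ.filter (fun j : Fin 4 => (π j) i = l)).card =
      (n.factorial : ℝ) ^ 2 * ∑ m ∈ Finset.Nat.antidiagonalTuple 4 n,
        ∏ k : Fin 4, (if k = 0 then (μ4 - 3) ^ m k / ((m k).factorial : ℝ) else 1) := by
  classical
  have h1 : ∀ π : Fin 4 → Equiv.Perm (Fin n), ∏ i : Fin n, ∏ l : Fin n,
      colWeight μ3 μ4 (Finset.univ.filter (fun j : Fin 4 => (π j) i = l)).card =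
      ∑ c : Fin n → Fin 4, (∏ i, if c i = 0 then μ4 - 3 else 1) *
        (if ∀ i, Compat (c i) fun j => π j i then 1 else 0) := by
    intro π
    simp only [row_weight μ3 μ4 fun j => π j _]
    rw [Finset.prod_univ_sum, Fintype.piFinset_univ]
    refine Finset.sum_congr rfl fun c _ => ?_
    by_cases h : ∀ i, Compat (c i) fun j => π j i
    · simp [h]
    · obtain ⟨i, hi⟩ := not_forall.mp h
      rw [if_neg h, mul_zero]
      exact Finset.prod_eq_zero (Finset.mem_univ i) (if_neg hi)
  simp only [h1, Finset.mul_sum]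
  rw [Finset.sum_comm]
  have h2 : ∀ c : Fin n → Fin 4, (∏ i, if c i = 0 then μ4 - 3 else (1 : ℝ)) =
      ∏ k : Fin 4, if k = 0 then (μ4 - 3) ^ Fintype.card {i // c i = k} else 1 := by
    intro c
    rw [Fin.prod_univ_four, Finset.prod_ite]
    simp [Fintype.card_subtype]
  have h3 := sum_coloring n 4 fun k m =>
    if k = 0 then (μ4 - 3) ^ m else (m.factorial : ℝ)
  calc _ = ∑ c : Fin n → Fin 4, (n.factorial : ℝ) * ∏ k : Fin 4,
        (if k = 0 then (μ4 - 3) ^ Fintype.card {i // c i = k}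
          else ((Fintype.card {i // c i = k}).factorial : ℝ)) := by
        refine Finset.sum_congr rfl fun c _ => ?_
        simp only [mul_left_comm _ (∏ i, if c i = 0 then μ4 - 3 else (1 : ℝ))]
        rw [← Finset.mul_sum, sum_compat, h2, mul_left_comm, ← Finset.prod_mul_distrib]
        congr 1
        refine Finset.prod_congr rfl fun k _ => ?_
        split_ifs <;> simp
    _ = _ := by
        rw [← Finset.mul_sum, h3, ← mul_assoc, ← sq, Finset.mul_sum]
        refine Finset.sum_congr rfl fun m _ => ?_
        congr 1
        refine Finset.prod_congr rfl fun k _ => ?_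
        split_ifs
        · rfl
        · exact div_self (by positivity)

theorem S0_generating_function (μ3 μ4 : ℝ) (t : ℝ) (ht : |t| < 1) :
    HasSum (fun n : ℕ =>
      (∑ π : Fin 4 → Equiv.Perm (Fin n),
        (∏ j : Fin 4, ((Equiv.Perm.sign (π j) : ℤ) : ℝ)) *
          ∏ i : Fin n, ∏ l : Fin n,
            colWeight μ3 μ4 (Finset.univ.filter (fun j : Fin 4 => (π j) i = l)).card)
        * t ^ n / (Nat.factorial n : ℝ) ^ 2)
      (Real.exp (t * (μ4 - 3)) / (1 - t) ^ 3) := by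
  have hexp : HasSum (fun m : ℕ => (μ4 - 3) ^ m / (m.factorial : ℝ) * t ^ m)
      (Real.exp (t * (μ4 - 3))) := by
    have := NormedSpace.expSeries_div_hasSum_exp (t * (μ4 - 3))
    rw [← Real.exp_eq_exp_ℝ] at this
    refine this.congr_fun fun m => ?_
    rw [mul_pow]; ring
  have hexpn : Summable fun m : ℕ => ‖(μ4 - 3) ^ m / (m.factorial : ℝ) * t ^ m‖ := hexp.summable.norm
  have hgeo : HasSum (fun m : ℕ => 1 * t ^ m) (1 - t)⁻¹ := by
    simpa using hasSum_geometric_of_abs_lt_one ht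
  have hgeon : Summable fun m : ℕ => ‖1 * t ^ m‖ := hgeo.summable.norm
  have main := hasSum_antidiagonalTuple 4 (fun k m =>
    (if k = 0 then (μ4 - 3) ^ m / (m.factorial : ℝ) else 1) * t ^ m) fun k => by
      by_cases hk : k = 0
      · simpa only [hk, if_true] using hexpn
      · simpa only [hk, if_false] using hgeon
  have hval : ∏ k : Fin 4, ∑' m : ℕ,
      (if k = 0 then (μ4 - 3) ^ m / (m.factorial : ℝ) else 1) * t ^ m =
      Real.exp (t * (μ4 - 3)) / (1 - t) ^ 3 := by
    rw [Fin.prod_univ_four]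
    simp only [if_true, one_ne_zero, if_false, Fin.reduceEq, hexp.tsum_eq, hgeo.tsum_eq]
    rw [div_eq_mul_inv, ← inv_pow]
    ring
  rw [hval] at main
  refine main.congr_fun fun n => ?_
  rw [S0_closed_form, mul_right_comm, mul_assoc, mul_div_cancel_left₀ _ (by positivity),
    Finset.mul_sum]
  refine Finset.sum_congr rfl fun m hm => ?_
  rw [Finset.prod_mul_distrib, Finset.prod_pow_eq_pow_sum,
    Finset.Nat.mem_antidiagonalTuple.mp hm, mul_comm]
end

section
/- Let m₁, μ₃, μ₄ ∈ ℝ and for n ∈ ℕ define s²(n) = ∑ over all pairs (π, s) with π : Fin 4 → Equiv.Perm (Fin n) and s : Fin 4 → Option (Fin n) such that there exists a column i ∈ Fin n with #{ j | s j ≠ none } = 2 and (∀ j, s j = none ∨ s j = some i) (i.e., exactly two rows are marked and both marks lie in the same column), of ( ∏_{j} sgn(π j) ) · ∏_{i ∈ Fin n} ( m₁^{a(i)} · ∏_{l ∈ Fin n} c_{b(i,l)} ), where a(i) = #{ j | s j = some i }, b(i,l) = #{ j | s j ≠ some i ∧ (π j) i = l }, and c₀ = 1, c₁ = 0, c₂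 = 1, c₃ = μ₃, c₄ = μ₄. Then for every t ∈ ℝ with |t| < 1, the series ∑_{n=0}^∞ s²(n)·tⁿ/(n!)² converges (HasSum) with sum 6·m₁²·t·exp(t·(μ₄ − 3)) / (1 − t)⁴. -/
/-- The marked weight of a marked 4-table `(π, s)`. -/
noncomputable def markedWeight (m1 μ3 μ4 : ℝ) {n : ℕ}
    (π : Fin 4 → Equiv.Perm (Fin n)) (s : Fin 4 → Option (Fin n)) : ℝ :=
  (∏ j : Fin 4, ((Equiv.Perm.sign (π j) : ℤ) : ℝ)) *
    ∏ i : Fin n,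
      (m1 ^ (Finset.univ.filter (fun j : Fin 4 => s j = some i)).card *
        ∏ l : Fin n,
          colWeight μ3 μ4
            (Finset.univ.filter (fun j : Fin 4 => s j ≠ some i ∧ (π j) i = l)).card)

namespace FourTable

/-! ### Column weights and column types -/

/-- Compatibility of a column with a column type: type `0` asks that all four entries agree; type
`v ≠ 0` asks that they agree along the pairing of the rows in which row `0` is paired with row
`v`. -/
def Compat {α : Type*} : Fin 4 → (Fin 4 → α) → Prop
  | 0, x => x 1 = x 0 ∧ x 2 = x 0 ∧ x 3 = x 0
  | 1, x => x 1 = x 0 ∧ x 3 = x 2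
  | 2, x => x 2 = x 0 ∧ x 3 = x 1
  | 3, x => x 3 = x 0 ∧ x 2 = x 1

instance {α : Type*} [DecidableEq α] (v : Fin 4) (x : Fin 4 → α) : Decidable (Compat v x) := by
  unfold Compat; split <;> infer_instance

/-- For a set `D` of two rows, the type of the pairing of the rows with blocks `D` and `Dᶜ`
(a junk value for other `D`). -/
def typ (D : Finset (Fin 4)) : Fin 4 :=
  if D = {0, 1} ∨ D = {2, 3} then 1 else if D = {0, 2} ∨ D = {1, 3} then 2 else 3

lemma typ_count (v : Fin 4) :
    ((Finset.powersetCard 2 Finset.univ).filter fun D : Finset (Fin 4) => v = typ D).card =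
      if v = 0 then 0 else 2 := by
  revert v; decide

lemma typ_ne_zero (D : Finset (Fin 4)) : typ D ≠ 0 := by
  unfold typ; split_ifs <;> decide

lemma card_two_cases (D : Finset (Fin 4)) (hD : D.card = 2) :
    D = {0, 1} ∨ D = {2, 3} ∨ D = {0, 2} ∨ D = {1, 3} ∨ D = {0, 3} ∨ D = {1, 2} := by
  revert D; decide

section column
variable {α : Type*} [DecidableEq α]

lemma card_rows (x : Fin 4 → α) (l : α) :
    (Finset.univ.filter fun j : Fin 4 => x j = l).card =
      (if x 0 = l then 1 else 0) + (if x 1 = l then 1 else 0) + (if x 2 = l then 1 else 0)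
        + (if x 3 = l then 1 else 0) := by
  rw [Finset.card_filter, Fin.sum_univ_four]

/-- The weight of a full column, in terms of its four entries: it vanishes if some symbol occurs
exactly once, is `1` for two distinct pairs and `μ4` for four equal entries (in which case all four
summands on the right contribute). -/
lemma prod_four [Fintype α] (μ3 μ4 : ℝ) (a b c d : α) :
    ∏ l, colWeight μ3 μ4 ((if a = l then 1 else 0) + (if b = l then 1 else 0) +
        (if c = l then 1 else 0) + (if d = l then 1 else 0)) =
      (if b = a ∧ c = a ∧ d = a then μ4 - 3 else 0) + (if b = a ∧ d = c then 1 else 0) +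
        (if c = a ∧ d = b then 1 else 0) + (if d = a ∧ c = b then 1 else 0) := by
  have single : ∀ e : α, ((if a = e then 1 else 0) + (if b = e then 1 else 0) +
        (if c = e then 1 else 0) + (if d = e then 1 else 0)) = 1 →
      ∏ l, colWeight μ3 μ4 ((if a = l then 1 else 0) + (if b = l then 1 else 0) +
        (if c = l then 1 else 0) + (if d = l then 1 else 0)) = 0 := fun e he =>
    Finset.prod_eq_zero (Finset.mem_univ e) (by rw [he]; rfl)
  have double : (∀ e : α, ((if a = e then 1 else 0) + (if b = e then 1 else 0) +
        (if c = e then 1 else 0) + (if d = e then 1 else 0)) = 0 ∨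
        ((if a = e then 1 else 0) + (if b = e then 1 else 0) +
        (if c = e then 1 else 0) + (if d = e then 1 else 0)) = 2) →
      ∏ l, colWeight μ3 μ4 ((if a = l then 1 else 0) + (if b = l then 1 else 0) +
        (if c = l then 1 else 0) + (if d = l then 1 else 0)) = 1 := fun he =>
    Finset.prod_eq_one fun l _ => by rcases he l with h | h <;> rw [h] <;> rfl
  by_cases hab : b = a
  · subst hab
    by_cases hcd : d = c
    · subst hcd
      by_cases hac : d = b
      · subst hac
        rw [Finset.prod_eq_single d]
        · simp [colWeight]; ring
        · intro l _ hl
          simp [Ne.symm hl, colWeight]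
        · simp
      · rw [double (fun e => by grind)]; simp [hac]
    · by_cases hac : c = b
      · subst hac
        rw [single d (by grind)]; simp [hcd]
      · rw [single c (by grind)]; grind
  · by_cases hac : c = a
    · subst hac
      by_cases hbd : d = b
      · subst hbd
        rw [double (fun e => by grind)]; grind
      · rw [single b (by grind)]; grind
    · by_cases had : d = a
      · subst had
        by_cases hbc : c = b
        · subst hbc
          rw [double (fun e => by grind)]; grind
        · rw [single b (by grind)]; grind
      · rw [single a (by grind)]; grind

lemma prod_column [Fintype α] (μ3 μ4 : ℝ) (x : Fin 4 → α) :
    ∏ l, colWeight μ3 μ4 (Finset.univ.filter fun j : Fin 4 => x j = l).card =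
      ∑ v : Fin 4, if Compat v x then (if v = 0 then μ4 - 3 else 1) else 0 := by
  simp only [card_rows, Fin.sum_univ_four, prod_four]
  simp [Compat]

lemma prod_two [Fintype α] (μ3 μ4 : ℝ) (a b : α) :
    ∏ l, colWeight μ3 μ4 ((if a = l then 1 else 0) + (if b = l then 1 else 0)) =
      if b = a then 1 else 0 := by
  split_ifs with h
  · subst h
    refine Finset.prod_eq_one fun l _ => ?_
    split_ifs <;> simp [colWeight]
  · refine Finset.prod_eq_zero (Finset.mem_univ a) ?_
    simp [h, colWeight]

lemma even_of_compat {v : Fin 4} {x : Fin 4 → α} (h : Compat v x) (l : α) :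
    Even (Finset.univ.filter fun j : Fin 4 => x j = l).card := by
  rw [card_rows]
  fin_cases v <;> simp only [Compat] at h <;> grind

/-- The weight of the column whose rows in `D` are marked. The parity hypothesis concerns all four
entries, including those hidden by the marks, and forces these two to agree whenever the visible two
do. -/
lemma prod_marked_column [Fintype α] (μ3 μ4 : ℝ) (x : Fin 4 → α) (D : Finset (Fin 4))
    (hD : D.card = 2)
    (hx : ∀ l, Even (Finset.univ.filter fun j : Fin 4 => x j = l).card) :
    ∏ l, colWeight μ3 μ4 (Finset.univ.filter fun j : Fin 4 => j ∉ D ∧ x j = l).card =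
      if Compat (typ D) x then 1 else 0 := by
  simp only [card_rows] at hx
  have h0 := hx (x 0)
  have h1 := hx (x 1)
  have h2 := hx (x 2)
  have h3 := hx (x 3)
  have e : x 1 = x 0 ↔ x 3 = x 2 := by grind
  have e' : x 2 = x 0 ↔ x 3 = x 1 := by grind
  have e'' : x 3 = x 0 ↔ x 2 = x 1 := by grind
  simp only [Finset.card_filter, Fin.sum_univ_four]
  rcases card_two_cases D hD with rfl | rfl | rfl | rfl | rfl | rfl
  · have : typ {0, 1} = 1 := by decide
    simp [this, Compat, prod_two, e]
  · have : typ {2, 3} = 1 := by decide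
    simp [this, Compat, prod_two, e]
  · have : typ {0, 2} = 2 := by decide
    simp [this, Compat, prod_two, e']
  · have : typ {1, 3} = 2 := by decide
    simp [this, Compat, prod_two, e']
  · have : typ {0, 3} = 3 := by decide
    simp [this, Compat, prod_two, e'']
  · have : typ {1, 2} = 3 := by decide
    simp [this, Compat, prod_two, e'']

end column

/-! ### Tables compatible with a type assignment -/

section tables
variable {α : Type*}

/-- The permutation `a` with its action on the columns of type `j` removed; the identity when
`j = 0`. -/
def twist (τ : α → Fin 4) (a : Equiv.Perm α) (ha : ∀ x, τ (a x) = τ x) (j : Fin 4) :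
    Equiv.Perm α where
  toFun x := if j = 0 ∨ τ x = j then x else a x
  invFun x := if j = 0 ∨ τ x = j then x else a.symm x
  left_inv x := by
    by_cases h : j = 0 ∨ τ x = j <;> simp [h, ha]
  right_inv x := by
    have : τ (a.symm x) = τ x := by simpa using (ha (a.symm x)).symm
    by_cases h : j = 0 ∨ τ x = j <;> simp [h, this]

lemma twist_apply (τ : α → Fin 4) (a : Equiv.Perm α) (ha : ∀ x, τ (a x) = τ x) (j : Fin 4)
    (x : α) : twist τ a ha j x = if j = 0 ∨ τ x = j then x else a x := rfl

lemma fin4_cases (v : Fin 4) : v = 0 ∨ v = 1 ∨ v = 2 ∨ v = 3 := by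
  revert v; decide

lemma compat_twist (τ : α → Fin 4) (g a : Equiv.Perm α) (ha : ∀ x, τ (a x) = τ x)
    (h0 : ∀ x, τ x = 0 → a x = x) (x : α) :
    Compat (τ x) fun j => (g * twist τ a ha j) x := by
  have := h0 x
  rcases fin4_cases (τ x) with h | h | h | h <;>
    simp [Compat, twist_apply, Equiv.Perm.mul_apply, *]

/-- A table compatible with `τ` is determined by its row `0` and one permutation `a`. The point is
that `(π 0)⁻¹ * π j` cannot move a column to one of a different type: each target column of another
type is fixed by one of the rows that agree on the source column. -/
lemma exists_twist [Finite α] (τ : α → Fin 4) (π : Fin 4 → Equiv.Perm α)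
    (hπ : ∀ x, Compat (τ x) fun j => π j x) :
    ∃ (a : Equiv.Perm α) (ha : ∀ x, τ (a x) = τ x), (∀ x, τ x = 0 → a x = x) ∧
      ∀ j, π j = π 0 * twist τ a ha j := by
  set h : Fin 4 → Equiv.Perm α := fun j => (π 0)⁻¹ * π j with hh
  have hπh : ∀ j, π j = π 0 * h j := fun j => by simp [hh]
  have hc : ∀ x, Compat (τ x) fun j => h j x := by
    intro x
    have := hπ x
    rcases fin4_cases (τ x) with e | e | e | e <;> rw [e] at this ⊢ <;>
      simpa [Compat, hh, Equiv.symm_apply_eq] using this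
  have h00 : ∀ x, h 0 x = x := by simp [hh]
  have f0 : ∀ x, τ x = 0 → h 1 x = x ∧ h 2 x = x ∧ h 3 x = x := fun x e => by
    have := hc x; rw [e] at this; simpa [Compat, h00] using this
  have f1 : ∀ x, τ x = 1 → h 1 x = x ∧ h 3 x = h 2 x := fun x e => by
    have := hc x; rw [e] at this; simpa [Compat, h00] using this
  have f2 : ∀ x, τ x = 2 → h 2 x = x ∧ h 3 x = h 1 x := fun x e => by
    have := hc x; rw [e] at this; simpa [Compat, h00] using this
  have f3 : ∀ x, τ x = 3 → h 3 x = x ∧ h 2 x = h 1 x := fun x e => by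
    have := hc x; rw [e] at this; simpa [Compat, h00] using this
  have i1 := (h 1).injective
  have i2 := (h 2).injective
  have i3 := (h 3).injective
  -- Row `1` shows `a` on every column except those of type `1`, where row `2` does.
  set a : α → α := fun x => if τ x = 1 then h 2 x else h 1 x with ha
  have a0 : ∀ x, τ x = 0 → a x = x := fun x e => by simp [ha, e, f0 x e]
  have a1 : ∀ x, τ x = 1 → a x = h 2 x ∧ a x = h 3 x := fun x e => by simp [ha, e, f1 x e]
  have a2 : ∀ x, τ x = 2 → a x = h 1 x ∧ a x = h 3 x := fun x e => by simp [ha, e, f2 x e]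
  have a3 : ∀ x, τ x = 3 → a x = h 1 x ∧ a x = h 2 x := fun x e => by simp [ha, e, f3 x e]
  have key : ∀ x, τ (a x) = τ x := by
    intro x
    rcases fin4_cases (τ x) with e | e | e | e
    · rw [a0 x e]
    · by_contra hne
      obtain ⟨p, q⟩ := a1 x e
      have hx : a x = x := by
        rcases fin4_cases (τ (a x)) with e' | e' | e' | e'
        · exact i2 ((f0 _ e').2.1.trans p)
        · exact absurd (e'.trans e.symm) hne
        · exact i2 ((f2 _ e').1.trans p)
        · exact i3 ((f3 _ e').1.trans q)
      exact hne (congrArg τ hx)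
    · by_contra hne
      obtain ⟨p, q⟩ := a2 x e
      have hx : a x = x := by
        rcases fin4_cases (τ (a x)) with e' | e' | e' | e'
        · exact i1 ((f0 _ e').1.trans p)
        · exact i1 ((f1 _ e').1.trans p)
        · exact absurd (e'.trans e.symm) hne
        · exact i3 ((f3 _ e').1.trans q)
      exact hne (congrArg τ hx)
    · by_contra hne
      obtain ⟨p, q⟩ := a3 x e
      have hx : a x = x := by
        rcases fin4_cases (τ (a x)) with e' | e' | e' | e'
        · exact i1 ((f0 _ e').1.trans p)
        · exact i1 ((f1 _ e').1.trans p)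
        · exact i2 ((f2 _ e').1.trans q)
        · exact absurd (e'.trans e.symm) hne
      exact hne (congrArg τ hx)
  have ainj : Function.Injective a := by
    intro x y hxy
    have hτ : τ x = τ y := by rw [← key x, ← key y, hxy]
    by_cases e : τ x = 1
    · exact i2 (by rw [← (a1 x e).1, ← (a1 y (hτ ▸ e)).1, hxy])
    · simp only [ha, e, hτ ▸ e, if_false] at hxy
      exact i1 hxy
  obtain ⟨b, hb⟩ : ∃ b : Equiv.Perm α, ∀ x, b x = a x :=
    ⟨Equiv.ofBijective a (Finite.injective_iff_bijective.mp ainj), fun _ => rfl⟩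
  refine ⟨b, fun x => by rw [hb, key], fun x e => by rw [hb, a0 x e], fun j => ?_⟩
  rw [hπh j]
  congr 1
  ext x
  rw [twist_apply, hb]
  have := f0 x
  have := f1 x
  have := f2 x
  have := f3 x
  have := a0 x
  have := a1 x
  have := a2 x
  have := a3 x
  rcases fin4_cases j with rfl | rfl | rfl | rfl <;>
  rcases fin4_cases (τ x) with e | e | e | e <;> grind

lemma sign_eq_one [Fintype α] [DecidableEq α] (τ : α → Fin 4) (π : Fin 4 → Equiv.Perm α)
    (hπ : ∀ x, Compat (τ x) fun j => π j x) :
    ∏ j, Equiv.Perm.sign (π j) = 1 := by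
  obtain ⟨a, ha, h0, h⟩ := exists_twist τ π hπ
  have e : twist τ a ha 1 * twist τ a ha 2 * twist τ a ha 3 = a * a := by
    ext x
    have := h0 x
    simp only [Equiv.Perm.mul_apply, twist_apply]
    rcases fin4_cases (τ x) with e | e | e | e <;> simp [e, ha, this]
  have s := congrArg Equiv.Perm.sign e
  simp only [map_mul, Int.units_mul_self] at s
  rw [Fin.prod_univ_four, h 1, h 2, h 3]
  simp only [map_mul]
  calc _ = (Equiv.Perm.sign (π 0) * Equiv.Perm.sign (π 0)) *
        (Equiv.Perm.sign (π 0) * Equiv.Perm.sign (π 0)) * (Equiv.Perm.sign (twist τ a ha 1) *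
        Equiv.Perm.sign (twist τ a ha 2) * Equiv.Perm.sign (twist τ a ha 3)) := by
          ac_rfl
    _ = 1 := by rw [s]; simp only [Int.units_mul_self, mul_one]

/-- The permutations `a` in question are the stabilizer of the map that separates all columns of type
`0` from each other and equals `τ` elsewhere. -/
lemma card_twisting [Fintype α] [DecidableEq α] (τ : α → Fin 4) :
    Fintype.card {a : Equiv.Perm α // (∀ x, τ (a x) = τ x) ∧ ∀ x, τ x = 0 → a x = x} =
      ∏ v ∈ {1, 2, 3}, (Finset.univ.filter fun x => τ x = v).card.factorial := by
  let f : α → α ⊕ Fin 4 := fun x => if τ x = 0 then Sum.inl x else Sum.inr (τ x)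
  have hf : ∀ a : Equiv.Perm α, ((∀ x, τ (a x) = τ x) ∧ ∀ x, τ x = 0 → a x = x) ↔
      f ∘ a = f := by
    intro a
    rw [funext_iff, ← forall_and]
    refine forall_congr' fun x => ?_
    simp only [Function.comp, f]
    by_cases h : τ x = 0 <;> by_cases h' : τ (a x) = 0 <;> simp [h, h']
    exact fun e => h e.symm
  rw [Fintype.card_congr (Equiv.subtypeEquivRight hf), DomMulAct.stabilizer_card,
    Fintype.prod_sum_type]
  have hl : ∏ x : α, (Fintype.card {y // f y = Sum.inl x}).factorial = 1 := by
    refine Finset.prod_eq_one fun x _ => Nat.factorial_eq_one.mpr ?_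
    refine Fintype.card_le_one_iff_subsingleton.mpr ⟨?_⟩
    rintro ⟨y, hy⟩ ⟨z, hz⟩
    simp only [f] at hy hz
    split_ifs at hy hz
    simp_all
  rw [hl, one_mul, Fin.prod_univ_four]
  have h0 : Fintype.card {y // f y = Sum.inr 0} = 0 := by
    rw [Fintype.card_eq_zero_iff]
    refine ⟨?_⟩
    rintro ⟨y, hy⟩
    simp only [f] at hy
    split_ifs at hy with h
    exact h (Sum.inr_injective hy)
  have hv : ∀ v : Fin 4, v ≠ 0 → Fintype.card {y // f y = Sum.inr v} =
      (Finset.univ.filter fun x => τ x = v).card := by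
    intro v hv
    rw [Fintype.card_subtype]
    congr 1
    ext y
    simp only [f, Finset.mem_filter, Finset.mem_univ, true_and]
    split_ifs with h <;> simp [h, Ne.symm hv]
  rw [h0, hv 1 (by decide), hv 2 (by decide), hv 3 (by decide)]
  simp [Finset.prod_insert, mul_assoc]

lemma card_compat [Fintype α] [DecidableEq α] (τ : α → Fin 4)
    [DecidablePred fun π : Fin 4 → Equiv.Perm α => ∀ x, Compat (τ x) fun j => π j x] :
    (Finset.univ.filter fun π : Fin 4 → Equiv.Perm α =>
        ∀ x, Compat (τ x) fun j => π j x).card =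
      (Fintype.card α).factorial *
        ∏ v ∈ {1, 2, 3}, (Finset.univ.filter fun x => τ x = v).card.factorial := by
  rw [← card_twisting τ, ← Fintype.card_perm, ← Fintype.card_prod, ← Fintype.card_subtype]
  symm
  refine Fintype.card_of_bijective (f := fun p => ⟨fun j => p.1 * twist τ p.2.1 p.2.2.1 j,
    compat_twist τ p.1 p.2.1 p.2.2.1 p.2.2.2⟩) ⟨?_, ?_⟩
  · rintro ⟨g, a, ha, ha0⟩ ⟨g', a', ha', ha0'⟩ h
    have h' := congrFun (Subtype.mk.inj h)
    have t0 : ∀ b hb, twist τ b hb 0 = 1 := fun b hb => by ext x; simp [twist_apply]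
    have hg : g = g' := by simpa [t0] using h' 0
    subst hg
    have e : ∀ j x, twist τ a ha j x = twist τ a' ha' j x := fun j x => by
      rw [mul_left_cancel (h' j)]
    have : a = a' := by
      ext x
      have e1 := e 1 x
      have e2 := e 2 x
      simp only [twist_apply] at e1 e2
      by_cases h : τ x = 1 <;> simp_all
    subst this
    rfl
  · rintro ⟨π, hπ⟩
    obtain ⟨a, ha, h0, h⟩ := exists_twist τ π hπ
    exact ⟨⟨π 0, a, ha, h0⟩, Subtype.ext (funext fun j => (h j).symm)⟩

end tables

/-! ### Expansion of the marked sum over type assignments -/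

section expand
variable {n : ℕ}

/-- The weight of a column type: `κ` (the excess kurtosis) for *all entries agree*, and `1` for each
pairing. -/
def kapWeight (κ : ℝ) (v : Fin 4) : ℝ := if v = 0 then κ else 1

/-- The marking with marks in column `i` at the rows of `D`. -/
def marking (i : Fin n) (D : Finset (Fin 4)) : Fin 4 → Option (Fin n) :=
  fun j => if j ∈ D then some i else none

lemma markedWeight_marking (m1 μ3 μ4 : ℝ) (π : Fin 4 → Equiv.Perm (Fin n)) (i : Fin n)
    (D : Finset (Fin 4)) (hD : D.card = 2) :
    markedWeight m1 μ3 μ4 π (marking i D) =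
      (∏ j : Fin 4, ((Equiv.Perm.sign (π j) : ℤ) : ℝ)) * (m1 ^ 2 *
        ∑ τ : Fin n → Fin 4, if typ D = τ i ∧ ∀ k, Compat (τ k) fun j => π j k then
          ∏ k, kapWeight (μ4 - 3) (τ k) else 0) := by
  unfold markedWeight
  congr 1
  rw [Finset.prod_mul_distrib]
  congr 1
  · rw [Finset.prod_eq_single i]
    · simp [marking, hD]
    · intro k _ hk
      simp [marking, hk.symm]
    · simp
  have hR : ∀ τ : Fin n → Fin 4, (if typ D = τ i ∧ ∀ k, Compat (τ k) fun j => π j k then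
          ∏ k, kapWeight (μ4 - 3) (τ k) else 0) = ∏ k, if (k = i → typ D = τ k) ∧
            Compat (τ k) fun j => π j k then kapWeight (μ4 - 3) (τ k) else 0 := by
    intro τ
    rw [Fintype.prod_ite_zero]
    congr 1
    simp [forall_and]
  simp only [hR]
  have := Finset.prod_univ_sum (fun _ : Fin n => (Finset.univ : Finset (Fin 4)))
    (fun k v => if (k = i → typ D = v) ∧
            Compat v fun j => π j k then kapWeight (μ4 - 3) v else 0)
  rw [Fintype.piFinset_univ] at this
  rw [← this]
  have hcol : ∀ k, k ≠ i → ∏ l : Fin n, colWeight μ3 μ4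
      (Finset.univ.filter fun j : Fin 4 => marking i D j ≠ some k ∧ (π j) k = l).card =
      ∑ v, if (k = i → typ D = v) ∧
            Compat v fun j => π j k then kapWeight (μ4 - 3) v else 0 := by
    intro k hk
    have h := prod_column μ3 μ4 fun j => π j k
    simp only [hk, false_imp_iff, true_and, kapWeight]
    rw [← h]
    simp [marking, hk.symm]
  rw [← Finset.mul_prod_erase _ _ (Finset.mem_univ i),
    ← Finset.mul_prod_erase Finset.univ (fun k => ∑ v, _) (Finset.mem_univ i)]
  rw [Finset.prod_congr rfl fun k hk => hcol k (Finset.ne_of_mem_erase hk)]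
  -- Parity is available for the other columns only if none of them has weight zero.
  by_cases h0 : ∏ k ∈ Finset.univ.erase i, (∑ v, if (k = i → typ D = v) ∧
            Compat v fun j => π j k then kapWeight (μ4 - 3) v else 0) = 0
  · rw [h0, mul_zero, mul_zero]
  congr 1
  have hev : ∀ k, k ≠ i → ∀ l, Even (Finset.univ.filter fun j : Fin 4 => π j k = l).card := by
    intro k hk l
    have := Finset.prod_ne_zero_iff.mp h0 k (Finset.mem_erase.mpr ⟨hk, Finset.mem_univ k⟩)
    obtain ⟨v, -, hv⟩ := Finset.exists_ne_zero_of_sum_ne_zero this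
    exact even_of_compat (v := v) (x := fun j => π j k) (of_not_not fun hc => hv (by simp [hc])) l
  -- A symbol occurs four times in all, hence an even number of times in column `i`.
  have hevi : ∀ l, Even (Finset.univ.filter fun j : Fin 4 => π j i = l).card := by
    intro l
    have htot : ∑ k, (Finset.univ.filter fun j : Fin 4 => π j k = l).card = 4 := by
      simp only [Finset.card_filter]
      rw [Finset.sum_comm]
      have : ∀ j : Fin 4, ∑ k, (if π j k = l then 1 else 0) = 1 := by
        intro j
        simp [← Equiv.eq_symm_apply]
      simp [this]
    rw [← Finset.add_sum_erase _ _ (Finset.mem_univ i)] at htot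
    have hrest := Finset.even_sum (s := Finset.univ.erase i)
      (fun k => (Finset.univ.filter fun j : Fin 4 => π j k = l).card)
      fun k hk => hev k (Finset.ne_of_mem_erase hk) l
    have h4 : Even 4 := by decide
    rw [← htot, Nat.even_add] at h4
    exact h4.mpr hrest
  have hi := prod_marked_column μ3 μ4 (fun j => π j i) D hD hevi
  have hm : ∀ j, marking i D j ≠ some i ↔ j ∉ D := by
    intro j; simp [marking]
  simp only [hm, hi]
  rw [Finset.sum_eq_single (typ D)]
  · simp [kapWeight, typ_ne_zero]
  · intro v _ hv
    simp [hv.symm]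
  · simp

lemma sum_marked (m1 μ3 μ4 : ℝ) :
    (∑ p ∈ Finset.univ.filter
          (fun p : (Fin 4 → Equiv.Perm (Fin n)) × (Fin 4 → Option (Fin n)) =>
            ∃ i : Fin n,
              (Finset.univ.filter (fun j : Fin 4 => p.2 j ≠ none)).card = 2 ∧
                ∀ j : Fin 4, p.2 j = none ∨ p.2 j = some i),
        markedWeight m1 μ3 μ4 p.1 p.2) =
      ∑ π : Fin 4 → Equiv.Perm (Fin n), ∑ i, ∑ D ∈ Finset.powersetCard 2 Finset.univ,
        markedWeight m1 μ3 μ4 π (marking i D) := by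
  have hD : ∀ (i : Fin n) (D : Finset (Fin 4)),
      (Finset.univ.filter fun j => marking i D j ≠ none) = D := by
    intro i D; ext j; simp [marking]
  rw [← Fintype.sum_prod_type', ← Finset.sum_product']
  symm
  refine Finset.sum_nbij (fun q => (q.1.1, marking q.1.2 q.2)) ?_ ?_ ?_ ?_
  · rintro ⟨⟨π, i⟩, D⟩ h
    simp only [Finset.mem_product, Finset.mem_powersetCard] at h
    simp only [Finset.mem_filter, Finset.mem_univ, true_and]
    refine ⟨i, by rw [hD]; exact h.2.2, fun j => ?_⟩
    by_cases hj : j ∈ D <;> simp [marking, hj]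
  · rintro ⟨⟨π, i⟩, D⟩ h ⟨⟨π', i'⟩, D'⟩ h' e
    simp only [Prod.mk.injEq] at e
    obtain ⟨rfl, e⟩ := e
    have hDD : D = D' := by rw [← hD i D, e, hD]
    subst hDD
    simp only [Finset.coe_product, Set.mem_prod, Finset.mem_coe, Finset.mem_powersetCard] at h
    obtain ⟨j, hj⟩ : D.Nonempty := by rw [← Finset.card_pos, h.2.2]; decide
    have := congrFun e j
    simp only [marking, hj, if_true, Option.some.injEq] at this
    rw [this]
  · rintro ⟨π, s⟩ h
    simp only [Finset.coe_filter, Finset.mem_univ, true_and, Set.mem_ofPred_eq] at h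
    obtain ⟨i, hc, hs⟩ := h
    refine ⟨((π, i), Finset.univ.filter fun j => s j ≠ none), ?_, ?_⟩
    · simp [Finset.mem_powersetCard, hc]
    · simp only [Prod.mk.injEq, true_and]
      ext1 j
      rcases hs j with e | e <;> simp [marking, e]
  · intros; rfl

lemma sum_marked_eq (m1 μ3 μ4 : ℝ) :
    (∑ π : Fin 4 → Equiv.Perm (Fin n), ∑ i, ∑ D ∈ Finset.powersetCard 2 Finset.univ,
        markedWeight m1 μ3 μ4 π (marking i D)) =
      2 * m1 ^ 2 * n.factorial * ∑ τ : Fin n → Fin 4,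
        (Finset.univ.filter fun x => τ x ≠ 0).card *
        (μ4 - 3) ^ (Finset.univ.filter fun x => τ x = 0).card *
          ∏ v ∈ {1, 2, 3}, ((Finset.univ.filter fun x => τ x = v).card.factorial : ℝ) := by
  have step : ∀ π : Fin 4 → Equiv.Perm (Fin n), (∑ i, ∑ D ∈ Finset.powersetCard 2 Finset.univ,
      markedWeight m1 μ3 μ4 π (marking i D)) =
      m1 ^ 2 * ∑ τ : Fin n → Fin 4, (if ∀ k, Compat (τ k) fun j => π j k then
        2 * (Finset.univ.filter fun x => τ x ≠ 0).card *
        (μ4 - 3) ^ (Finset.univ.filter fun x => τ x = 0).card else 0) := by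
    intro π
    have h1 : ∀ i : Fin n, ∀ D ∈ Finset.powersetCard 2 (Finset.univ : Finset (Fin 4)),
        markedWeight m1 μ3 μ4 π (marking i D) = m1 ^ 2 * ∑ τ : Fin n → Fin 4,
          (if ∀ k, Compat (τ k) fun j => π j k then
            (if τ i = typ D then (1 : ℝ) else 0) * ∏ k, kapWeight (μ4 - 3) (τ k) else 0) := by
      intro i D hD
      rw [markedWeight_marking _ _ _ _ _ _ (Finset.mem_powersetCard.mp hD).2, mul_left_comm,
        Finset.mul_sum]
      congr 1
      refine Finset.sum_congr rfl fun τ _ => ?_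
      by_cases hc : ∀ k, Compat (τ k) fun j => π j k
      · have hs := sign_eq_one τ π hc
        have : (∏ j : Fin 4, ((Equiv.Perm.sign (π j) : ℤ) : ℝ)) = 1 := by
          have := congrArg (fun u : ℤˣ => ((u : ℤ) : ℝ)) hs
          simpa using this
        rw [this]
        simp [hc, eq_comm]
      · simp [hc]
    rw [Finset.sum_congr rfl fun i _ => Finset.sum_congr rfl (h1 i)]
    simp only [← Finset.mul_sum]
    congr 1
    rw [Finset.sum_congr rfl fun i _ => Finset.sum_comm, Finset.sum_comm]
    refine Finset.sum_congr rfl fun τ _ => ?_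
    split_ifs with hc
    · simp only [← Finset.sum_mul]
      congr 1
      · have : ∀ i, ∑ D ∈ Finset.powersetCard 2 (Finset.univ : Finset (Fin 4)),
            (if τ i = typ D then (1 : ℝ) else 0) = if τ i ≠ 0 then 2 else 0 := by
          intro i
          rw [Finset.sum_boole, typ_count]
          split_ifs <;> simp_all
        rw [Finset.sum_congr rfl fun i _ => this i, ← Finset.sum_filter, Finset.sum_const,
          nsmul_eq_mul, mul_comm]
      · simp only [kapWeight]
        rw [← Finset.prod_filter, Finset.prod_const]
    · simp
  rw [Finset.sum_congr rfl fun π _ => step π, ← Finset.mul_sum, Finset.sum_comm]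
  simp only [← Finset.sum_filter, Finset.sum_const, card_compat, Fintype.card_fin]
  rw [Finset.mul_sum, Finset.mul_sum]
  refine Finset.sum_congr rfl fun τ _ => ?_
  rw [nsmul_eq_mul]
  push_cast
  ring

end expand

/-! ### Counting type assignments -/

section counting

lemma prod_X_pow (c : Fin 4 → ℕ) :
    ∏ v, (MvPolynomial.X v : MvPolynomial (Fin 4) ℕ) ^ c v =
      MvPolynomial.monomial (Finsupp.equivFunOnFinite.symm c) 1 := by
  rw [MvPolynomial.monomial_eq, Finsupp.prod_fintype _ _ (by simp)]
  simp

/-- The number of maps `Fin n → Fin 4` with prescribed fibre sizes is a multinomial coefficient: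
compare coefficients in the two expansions of `(X 0 + X 1 + X 2 + X 3) ^ n`. -/
lemma card_types {n : ℕ} {c : Fin 4 → ℕ} (hc : c ∈ Finset.piAntidiag Finset.univ n) :
    (Finset.univ.filter fun τ : Fin n → Fin 4 =>
      (fun v => (Finset.univ.filter fun x => τ x = v).card) = c).card =
      Nat.multinomial Finset.univ c := by
  have h := (Fintype.sum_pow (fun v : Fin 4 => (MvPolynomial.X v : MvPolynomial (Fin 4) ℕ)) n).symm.trans
    (Finset.sum_pow_eq_sum_piAntidiag _ _ _)
  have h1 : ∀ τ : Fin n → Fin 4, ∏ i, (MvPolynomial.X (τ i) : MvPolynomial (Fin 4) ℕ) =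
      ∏ v, MvPolynomial.X v ^ (Finset.univ.filter fun x => τ x = v).card := by
    intro τ
    rw [← Finset.prod_fiberwise' Finset.univ τ]
    simp
  simp only [h1, prod_X_pow] at h
  have h2 := congrArg (MvPolynomial.coeff (Finsupp.equivFunOnFinite.symm c)) h
  simp only [MvPolynomial.coeff_sum, ← MvPolynomial.C_eq_coe_nat, MvPolynomial.coeff_C_mul,
    MvPolynomial.coeff_monomial, EmbeddingLike.apply_eq_iff_eq] at h2
  rw [Finset.card_filter]
  refine h2.trans ?_
  simp [Finset.sum_ite_eq', hc]

lemma sum_types (n : ℕ) (F : (Fin 4 → ℕ) → ℝ) :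
    ∑ τ : Fin n → Fin 4, F (fun v => (Finset.univ.filter fun x => τ x = v).card) =
      ∑ c ∈ Finset.piAntidiag Finset.univ n, Nat.multinomial Finset.univ c * F c := by
  rw [← Finset.sum_fiberwise_of_maps_to (t := Finset.piAntidiag Finset.univ n)
    (g := fun τ : Fin n → Fin 4 => fun v => (Finset.univ.filter fun x => τ x = v).card)]
  · refine Finset.sum_congr rfl fun c hc => ?_
    rw [← card_types hc, ← nsmul_eq_mul, ← Finset.sum_const]
    refine Finset.sum_congr rfl fun τ hτ => ?_
    rw [(Finset.mem_filter.mp hτ).2]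
  · intro τ _
    rw [Finset.mem_piAntidiag]
    refine ⟨?_, fun _ _ => Finset.mem_univ _⟩
    have := Finset.card_eq_sum_card_fiberwise (f := τ) (s := Finset.univ) (t := Finset.univ)
      (by simp)
    simpa using this.symm

lemma card_piAntidiag_three (m : ℕ) :
    (Finset.piAntidiag (Finset.univ : Finset (Fin 3)) m).card = (m + 2).choose 2 := by
  rw [← Finset.map_sym_eq_piAntidiag, Finset.card_map, Finset.sym_univ, Finset.card_univ,
    Sym.card_sym_eq_choose, Fintype.card_fin, ← Nat.choose_symm_add, add_comm]
  rfl

lemma card_piAntidiag_fiber {n k : ℕ} (hk : k ≤ n) :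
    ((Finset.piAntidiag (Finset.univ : Finset (Fin 4)) n).filter fun c => c 0 = k).card =
      (n - k + 2).choose 2 := by
  rw [← card_piAntidiag_three]
  refine Finset.card_nbij' (fun c => Fin.tail c) (fun c => Fin.cons k c) ?_ ?_ ?_ ?_
  · intro c hc
    simp only [Finset.coe_filter, Finset.mem_piAntidiag, Set.mem_ofPred_eq, Finset.mem_coe] at hc ⊢
    obtain ⟨⟨h, -⟩, h0⟩ := hc
    refine ⟨?_, fun _ _ => Finset.mem_univ _⟩
    rw [Fin.sum_univ_succ] at h
    change ∑ i : Fin 3, c i.succ = _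
    omega
  · intro c hc
    simp only [Finset.coe_filter, Finset.mem_piAntidiag, Set.mem_ofPred_eq, Finset.mem_coe] at hc ⊢
    refine ⟨⟨?_, fun _ _ => Finset.mem_univ _⟩, rfl⟩
    rw [Fin.sum_univ_succ]
    simp only [Fin.cons_zero, Fin.cons_succ]
    have : ∑ i, c i = n - k := hc.1
    omega
  · intro c hc
    simp only [Finset.coe_filter, Set.mem_ofPred_eq] at hc
    change Fin.cons k (Fin.tail c) = c
    rw [← hc.2, Fin.cons_self_tail]
  · intro c _
    simp

lemma sum_types_eq (n : ℕ) (κ : ℝ) :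
    (∑ τ : Fin n → Fin 4, (Finset.univ.filter fun x => τ x ≠ 0).card *
        κ ^ (Finset.univ.filter fun x => τ x = 0).card *
          ∏ v ∈ {1, 2, 3}, ((Finset.univ.filter fun x => τ x = v).card.factorial : ℝ)) =
      n.factorial * ∑ k ∈ Finset.range (n + 1),
        κ ^ k / k.factorial * (((n - k : ℕ) : ℝ) * ((n - k + 2).choose 2 : ℝ)) := by
  have h1 : ∀ τ : Fin n → Fin 4, (Finset.univ.filter fun x => τ x ≠ 0).card =
      n - (Finset.univ.filter fun x => τ x = 0).card := by
    intro τ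
    rw [← Finset.compl_filter, Finset.card_compl, Fintype.card_fin]
  simp only [h1]
  rw [sum_types n fun c => ((n - c 0 : ℕ) : ℝ) * κ ^ c 0 * ∏ v ∈ {1, 2, 3}, ((c v).factorial : ℝ)]
  have h2 : ∀ c ∈ Finset.piAntidiag (Finset.univ : Finset (Fin 4)) n,
      (Nat.multinomial Finset.univ c : ℝ) *
        (((n - c 0 : ℕ) : ℝ) * κ ^ c 0 * ∏ v ∈ {1, 2, 3}, ((c v).factorial : ℝ)) =
      n.factorial * (κ ^ c 0 / (c 0).factorial * ((n - c 0 : ℕ) : ℝ)) := by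
    intro c hc
    have hm := Nat.multinomial_spec Finset.univ c
    rw [(Finset.mem_piAntidiag.mp hc).1, Fin.prod_univ_four] at hm
    rw [← hm]
    have := Nat.factorial_ne_zero (c 0)
    simp only [Finset.prod_insert, Finset.mem_insert, Finset.mem_singleton, Finset.prod_singleton,
      show ¬((1 : Fin 4) = 2 ∨ (1 : Fin 4) = 3) by decide, show ¬((2 : Fin 4) = 3) by decide,
      not_false_eq_true]
    push_cast
    field_simp
  rw [Finset.sum_congr rfl h2, ← Finset.mul_sum]
  congr 1
  rw [← Finset.sum_fiberwise_of_maps_to (t := Finset.range (n + 1)) (g := fun c => c 0)]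
  · refine Finset.sum_congr rfl fun k hk => ?_
    have hk' : k ≤ n := Nat.lt_succ_iff.mp (Finset.mem_range.mp hk)
    rw [Finset.sum_congr rfl (g := fun _ => κ ^ k / k.factorial * ((n - k : ℕ) : ℝ))
      fun c hc => by rw [(Finset.mem_filter.mp hc).2], Finset.sum_const,
      card_piAntidiag_fiber hk', nsmul_eq_mul]
    ring
  · intro c hc
    rw [Finset.mem_range, Nat.lt_succ_iff, ← (Finset.mem_piAntidiag.mp hc).1]
    exact Finset.single_le_sum (fun _ _ => Nat.zero_le _) (Finset.mem_univ _)

end counting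

/-! ### The generating function -/

lemma hasSum_aux {t : ℝ} (ht : |t| < 1) :
    HasSum (fun m : ℕ => (m : ℝ) * ((m + 2).choose 2 : ℝ) * t ^ m) (3 * t / (1 - t) ^ 4) := by
  rw [← hasSum_nat_add_iff' 1]
  have h := (hasSum_choose_mul_geometric_of_norm_lt_one 3 (r := t) ht).mul_left (3 * t)
  have e : 3 * t / (1 - t) ^ 4 - ∑ i ∈ Finset.range 1, (i : ℝ) * ((i + 2).choose 2 : ℝ) * t ^ i =
      3 * t * (1 / (1 - t) ^ (3 + 1)) := by
    simp; ring
  rw [e]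
  refine Eq.mpr (congrArg (fun f => HasSum f _) (funext fun m => ?_)) h
  have := Nat.choose_succ_right_eq (m + 3) 2
  rw [show m + 3 - 2 = m + 1 by omega] at this
  have h' : (((m + 3).choose 3 : ℕ) : ℝ) * 3 = ((m + 3).choose 2 : ℕ) * (m + 1) := by
    exact_mod_cast this
  change ((m + 1 : ℕ) : ℝ) * ((m + 3).choose 2 : ℕ) * t ^ (m + 1) = _
  push_cast
  rw [pow_succ]
  linear_combination (-(t * t ^ m)) * h'

end FourTable

theorem S2_generating_function (m1 μ3 μ4 : ℝ) (t : ℝ) (ht : |t| < 1) :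
    HasSum (fun n : ℕ =>
      (∑ p ∈ Finset.univ.filter
          (fun p : (Fin 4 → Equiv.Perm (Fin n)) × (Fin 4 → Option (Fin n)) =>
            ∃ i : Fin n,
              (Finset.univ.filter (fun j : Fin 4 => p.2 j ≠ none)).card = 2 ∧
                ∀ j : Fin 4, p.2 j = none ∨ p.2 j = some i),
        markedWeight m1 μ3 μ4 p.1 p.2)
        * t ^ n / (Nat.factorial n : ℝ) ^ 2)
      (6 * m1 ^ 2 * t * Real.exp (t * (μ4 - 3)) / (1 - t) ^ 4) := by
  have hκ : HasSum (fun k : ℕ => (t * (μ4 - 3)) ^ k / (k.factorial : ℝ))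
      (Real.exp (t * (μ4 - 3))) := by
    rw [Real.exp_eq_exp_ℝ]
    exact NormedSpace.expSeries_div_hasSum_exp _
  have hg := FourTable.hasSum_aux ht
  have h := (hasSum_sum_range_mul_of_summable_norm hκ.summable.norm hg.summable.norm).mul_left
    (2 * m1 ^ 2)
  rw [hκ.tsum_eq, hg.tsum_eq] at h
  have e : 6 * m1 ^ 2 * t * Real.exp (t * (μ4 - 3)) / (1 - t) ^ 4 =
      2 * m1 ^ 2 * (Real.exp (t * (μ4 - 3)) * (3 * t / (1 - t) ^ 4)) := by
    ring
  rw [e]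
  refine Eq.mpr (congrArg (fun f => HasSum f _) (funext fun n => ?_)) h
  rw [FourTable.sum_marked, FourTable.sum_marked_eq, FourTable.sum_types_eq]
  have hn : (n.factorial : ℝ) ≠ 0 := by exact_mod_cast n.factorial_ne_zero
  rw [div_eq_iff (pow_ne_zero 2 hn)]
  have : ∑ k ∈ Finset.range (n + 1), (t * (μ4 - 3)) ^ k / (k.factorial : ℝ) *
      (((n - k : ℕ) : ℝ) * ((n - k + 2).choose 2 : ℝ) * t ^ (n - k)) =
      (∑ k ∈ Finset.range (n + 1), (μ4 - 3) ^ k / k.factorial *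
        (((n - k : ℕ) : ℝ) * ((n - k + 2).choose 2 : ℝ))) * t ^ n := by
    rw [Finset.sum_mul]
    refine Finset.sum_congr rfl fun k hk => ?_
    have hk' : k ≤ n := Nat.lt_succ_iff.mp (Finset.mem_range.mp hk)
    rw [mul_pow, ← pow_sub_mul_pow t hk']
    ring
  rw [this]
  ring
end
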